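/- arXiv:2306.09655 — 2 statements merged into one kernel-verified Lean document; each statement's English description precedes it below -/
import Mathlib

section
/- Let D be a 2-strong digraph of order n ≥ 3 such that n−1 of its vertices have degree at least n+k and the remaining vertex z has degree at least n−k−4, where k ≥ 0 is an integer. If D contains a directed cycle of length at least n−k−2 passing through z, then D is Hamiltonian. -/
/-! A digraph on a vertex type `V` is given by its arc relation `A : V → V → Prop`
(this automatically forbids multiple arcs); looplessness is expressed by the
hypothesis `Irreflexive A`. -/

/-- The degree of `x`: its out-degree plus its in-degree. -/
noncomputable def degree {V : Type*} (A : V → V → Prop) (x : V) : ℕ :=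
  {y | A x y}.ncard + {y | A y x}.ncard

/-- `degreeIn A x S` is the number of arcs between `x` and vertices of `S`,
in both directions. -/
noncomputable def degreeIn {V : Type*} (A : V → V → Prop) (x : V) (S : Set V) : ℕ :=
  {y ∈ S | A x y}.ncard + {y ∈ S | A y x}.ncard

/-- `c : Fin m → V` is a directed cycle of length `m` (indices taken mod `m`). -/
def IsCycle {V : Type*} (A : V → V → Prop) {m : ℕ} (c : Fin m → V) : Prop :=
  2 ≤ m ∧ Function.Injective c ∧
    ∀ i : Fin m, A (c i) (c ⟨(i.val + 1) % m, Nat.mod_lt _ i.pos⟩)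

/-- `p : Fin m → V` is a directed path on `m` vertices (of length `m - 1`). -/
def IsPath {V : Type*} (A : V → V → Prop) {m : ℕ} (p : Fin m → V) : Prop :=
  Function.Injective p ∧ ∀ (i : Fin m) (h : i.val + 1 < m), A (p i) (p ⟨i.val + 1, h⟩)

/-- A digraph is Hamiltonian if it has a directed cycle through all of its vertices. -/
def IsHamiltonian {V : Type*} [Fintype V] (A : V → V → Prop) : Prop :=
  ∃ c : Fin (Fintype.card V) → V, IsCycle A c ∧ Function.Surjective c

/-- Reachability by a directed path staying inside the set `S`. -/
def ReachIn {V : Type*} (A : V → V → Prop) (S : Set V) : V → V → Prop :=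
  Relation.ReflTransGen (fun u v => u ∈ S ∧ v ∈ S ∧ A u v)

/-- A digraph is strong if every vertex is reachable from every other by a directed path. -/
def IsStrong {V : Type*} (A : V → V → Prop) : Prop :=
  ∀ x y : V, Relation.ReflTransGen A x y

/-- A digraph is `k`-strong if it has at least `k + 1` vertices and the deletion of
any set of at most `k - 1` vertices leaves a strong digraph. -/
def IsKStrong {V : Type*} [Fintype V] (A : V → V → Prop) (k : ℕ) : Prop :=
  k + 1 ≤ Fintype.card V ∧
    ∀ S : Set V, S.ncard ≤ k - 1 → ∀ x ∈ Sᶜ, ∀ y ∈ Sᶜ, ReachIn A Sᶜ x y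

/-- The indicator of a proposition, as a natural number. -/
noncomputable def ind (P : Prop) : ℕ := open Classical in if P then 1 else 0

lemma ind_of_not {P : Prop} (h : ¬P) : ind P = 0 := if_neg h

lemma ind_le_one (P : Prop) : ind P ≤ 1 := by
  unfold ind; split_ifs <;> omega

lemma ind_add_ind_le_one {P Q : Prop} (h : ¬(P ∧ Q)) : ind P + ind Q ≤ 1 := by
  unfold ind; split_ifs <;> first | omega | exact absurd ⟨‹P›, ‹Q›⟩ h

lemma of_one_le_ind {P : Prop} (h : 1 ≤ ind P) : P := by
  by_contra hP
  rw [ind_of_not hP] at h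
  omega

/-- The number of arcs, in both directions, between `u` and the interval `[p, q]`. -/
noncomputable def arcCount (R : ℕ → ℕ → Prop) (u p q : ℕ) : ℕ :=
  ∑ t ∈ Finset.Ico p (q + 1), (ind (R u t) + ind (R t u))

section ArcCount

variable {R : ℕ → ℕ → Prop} {u p q : ℕ}

lemma arcCount_self (R : ℕ → ℕ → Prop) (u p : ℕ) :
    arcCount R u p p = ind (R u p) + ind (R p u) := by
  simp [arcCount]

lemma arcCount_succ (h : p ≤ q + 1) :
    arcCount R u p (q + 1) = arcCount R u p q + (ind (R u (q + 1)) + ind (R (q + 1) u)) := by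
  unfold arcCount
  rw [Finset.sum_Ico_succ_top h]

lemma arcCount_add {s : ℕ} (R : ℕ → ℕ → Prop) (u : ℕ) (hp : p ≤ s + 1) (hq : s ≤ q) :
    arcCount R u p q = arcCount R u p s + arcCount R u (s + 1) q := by
  unfold arcCount
  rw [Finset.sum_Ico_consecutive _ hp (by omega)]

lemma arcCount_bound (hpq : p ≤ q) (h : ∀ t, p ≤ t → t < q → ¬(R t u ∧ R u (t + 1))) :
    arcCount R u p q ≤ q - p + ind (R u p) + ind (R q u) ∧
      (q - p + ind (R u p) + ind (R q u) ≤ arcCount R u p q →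
        ∀ t, p ≤ t → t < q → R t u ∨ R u (t + 1)) := by
  induction q, hpq using Nat.le_induction with
  | base => rw [arcCount_self]; exact ⟨by omega, fun _ t h1 h2 => by omega⟩
  | succ q hq ih =>
    obtain ⟨ih1, ih2⟩ := ih fun t h1 h2 => h t h1 (by omega)
    have hj := ind_add_ind_le_one (h q hq (by omega))
    rw [arcCount_succ (by omega)]
    refine ⟨by omega, fun hle t h1 h2 => ?_⟩
    rcases Nat.lt_or_ge t q with htq | htq
    · exact ih2 (by omega) t h1 htq
    · obtain rfl : t = q := by omega
      by_contra hn
      rw [not_or] at hn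
      rw [ind_of_not hn.1] at *
      rw [ind_of_not hn.2] at *
      omega

lemma arcCount_le (hpq : p ≤ q) (h : ∀ t, p ≤ t → t < q → ¬(R t u ∧ R u (t + 1))) :
    arcCount R u p q ≤ q - p + ind (R u p) + ind (R q u) := (arcCount_bound hpq h).1

lemma arcCount_le_of_not_from (h : ∀ t, p ≤ t → t ≤ q → ¬R t u) :
    arcCount R u p q ≤ q + 1 - p := by
  have : arcCount R u p q ≤ ∑ t ∈ Finset.Ico p (q + 1), 1 := by
    refine Finset.sum_le_sum fun t ht => ?_
    rw [Finset.mem_Ico] at ht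
    rw [ind_of_not (h t ht.1 (by omega))]
    exact ind_le_one _
  simpa using this

lemma arcCount_eq_zero (h : ∀ t, p ≤ t → t ≤ q → ¬R u t ∧ ¬R t u) : arcCount R u p q = 0 := by
  refine Finset.sum_eq_zero fun t ht => ?_
  rw [Finset.mem_Ico] at ht
  obtain ⟨h1, h2⟩ := h t ht.1 (by omega)
  simp [ind_of_not h1, ind_of_not h2]

lemma arcCount_bound_of_mem (hp : p ≤ u) (hq : u ≤ q) (hirr : ¬R u u) :
    arcCount R u p q ≤ 2 * (q - p) ∧
      (2 * (q - p) ≤ arcCount R u p q →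
        ∀ t, p ≤ t → t ≤ q → t ≠ u → R u t ∧ R t u) := by
  have hmem : u ∈ Finset.Ico p (q + 1) := by simp; omega
  have hsplit : arcCount R u p q =
      ∑ t ∈ (Finset.Ico p (q + 1)).erase u, (ind (R u t) + ind (R t u)) := by
    unfold arcCount
    rw [← Finset.add_sum_erase _ _ hmem, ind_of_not hirr]
    simp
  have hcard : ∑ t ∈ (Finset.Ico p (q + 1)).erase u, 2 = 2 * (q - p) := by
    rw [Finset.sum_const, Finset.card_erase_of_mem hmem, Nat.card_Ico, smul_eq_mul, mul_comm]
    omega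
  have hle : ∀ t ∈ (Finset.Ico p (q + 1)).erase u, ind (R u t) + ind (R t u) ≤ 2 := fun t _ => by
    have := ind_le_one (R u t)
    have := ind_le_one (R t u)
    omega
  rw [hsplit, ← hcard]
  refine ⟨Finset.sum_le_sum hle, fun h t h1 h2 h3 => ?_⟩
  have heq := (Finset.sum_eq_sum_iff_of_le hle).1 (le_antisymm (Finset.sum_le_sum hle) h) t
    (by simp; omega)
  have := ind_le_one (R u t)
  have := ind_le_one (R t u)
  exact ⟨of_one_le_ind (by omega), of_one_le_ind (by omega)⟩

lemma arcCount_le_of_mem {v : ℕ} (hu : p ≤ u ∧ u ≤ q) (hv : p ≤ v ∧ v ≤ q) (huv : u ≠ v)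
    (hirr : ¬R u u) :
    arcCount R u p q + 2 ≤ 2 * (q - p) + (ind (R u v) + ind (R v u)) := by
  have hmu : u ∈ (Finset.Ico p (q + 1)).erase v := by simp; omega
  have hmv : v ∈ Finset.Ico p (q + 1) := by simp; omega
  unfold arcCount
  rw [← Finset.add_sum_erase _ _ hmv, ← Finset.add_sum_erase _ _ hmu, ind_of_not hirr]
  have hle : ∑ t ∈ ((Finset.Ico p (q + 1)).erase v).erase u, (ind (R u t) + ind (R t u)) ≤
      ∑ t ∈ ((Finset.Ico p (q + 1)).erase v).erase u, 2 :=
    Finset.sum_le_sum fun t _ => by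
      have := ind_le_one (R u t)
      have := ind_le_one (R t u)
      omega
  rw [Finset.sum_const, Finset.card_erase_of_mem hmu, Finset.card_erase_of_mem hmv,
    Nat.card_Ico, smul_eq_mul] at hle
  omega

end ArcCount

/-- Every cycle through the vertex `0` with all other vertices in `[1, n)` has at most `N`
vertices besides `0`. -/
def CycleBound (R : ℕ → ℕ → Prop) (n N : ℕ) : Prop :=
  ∀ l : List ℕ, l.Nodup → (∀ t ∈ l, 1 ≤ t ∧ t < n) →
    List.IsChain R (0 :: (l ++ [0])) → l.length ≤ N

/-- The list of the vertices of the interval `[a.1, a.2]`. -/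
def interval (a : ℕ × ℕ) : List ℕ := List.range' a.1 (a.2 + 1 - a.1)

/-- The intervals in the list `Is`, traversed in order starting from and returning to `0`, form
a cycle with all its vertices in `[0, n)`. -/
structure IsIntervalCycle (R : ℕ → ℕ → Prop) (n : ℕ) (Is : List (ℕ × ℕ)) : Prop where
  valid : ∀ a ∈ Is, 1 ≤ a.1 ∧ a.1 ≤ a.2 ∧ a.2 < n
  path : ∀ a ∈ Is, ∀ t, a.1 ≤ t → t < a.2 → R t (t + 1)
  disj : Is.Pairwise fun a b => a.2 < b.1 ∨ b.2 < a.1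
  junction : List.IsChain (fun a b => R a.2 b.1) ((0, 0) :: (Is ++ [(0, 0)]))

lemma mem_interval {a : ℕ × ℕ} {t : ℕ} : t ∈ interval a ↔ a.1 ≤ t ∧ t ≤ a.2 := by
  simp only [interval, List.mem_range'_1]
  omega

lemma isChain_interval {S : ℕ → ℕ → Prop} {a : ℕ × ℕ} :
    List.IsChain S (interval a) ↔ ∀ t, a.1 ≤ t → t < a.2 → S t (t + 1) := by
  rw [List.isChain_iff_getElem]
  simp only [interval, List.length_range', List.getElem_range']
  constructor
  · intro h t h1 h2
    have := h (t - a.1) (by omega)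
    simpa [show a.1 + (t - a.1) = t by omega, show a.1 + (t - a.1 + 1) = t + 1 by omega] using this
  · intro h i hi
    simpa [add_assoc] using h (a.1 + i) (by omega) (by omega)

lemma isChain_flatMap_interval {S : ℕ → ℕ → Prop} {Is : List (ℕ × ℕ)}
    (h : ∀ a ∈ Is, a.1 ≤ a.2) :
    List.IsChain S (0 :: (Is.flatMap interval ++ [0])) ↔
      (∀ a ∈ Is, ∀ t, a.1 ≤ t → t < a.2 → S t (t + 1)) ∧
      List.IsChain (fun a b => S a.2 b.1) ((0, 0) :: (Is ++ [(0, 0)])) := by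
  have hflat : 0 :: (Is.flatMap interval ++ [0]) =
      (((0, 0) :: (Is ++ [(0, 0)])).map interval).flatten := by
    simp [List.flatMap, interval]
  have hne : ∀ a ∈ ((0, 0) :: (Is ++ [(0, 0)]) : List (ℕ × ℕ)), a.1 ≤ a.2 := by
    intro a ha
    simp only [List.mem_cons, List.mem_append, List.not_mem_nil, or_false] at ha
    rcases ha with rfl | ha | rfl
    exacts [le_rfl, h a ha, le_rfl]
  rw [hflat, List.isChain_flatten (by
    simp only [List.mem_map, not_exists, not_and]
    intro a ha he
    have := hne a ha
    have hm := (mem_interval (a := a) (t := a.1)).2 ⟨le_rfl, this⟩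
    simp [he] at hm), List.isChain_map]
  refine and_congr ⟨fun H a ha => isChain_interval.1 (H _ ?_), fun H l hl => ?_⟩
    (List.IsChain.iff_of_mem_imp fun a b ha hb => ?_)
  · simpa using Or.inr (Or.inl ⟨a.1, a.2, ha, rfl⟩)
  · simp only [List.map_cons, List.map_append, List.mem_cons, List.mem_append, List.mem_map,
      List.map_nil, List.not_mem_nil, or_false] at hl
    rcases hl with rfl | ⟨a, ha, rfl⟩ | rfl
    · simp [interval]
    · exact isChain_interval.2 (H a ha)
    · simp [interval]
  · have ha := hne a ha
    have hb := hne b hb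
    simp only [interval, List.getLast?_range', List.head?_range']
    rw [if_neg (by omega), if_neg (by omega)]
    simp only [Option.mem_def, Option.some.injEq, forall_eq']
    rw [show a.1 + (a.2 + 1 - a.1) - 1 = a.2 by omega]

lemma IsIntervalCycle.nodup {R : ℕ → ℕ → Prop} {n : ℕ} {Is : List (ℕ × ℕ)}
    (h : IsIntervalCycle R n Is) : (Is.flatMap interval).Nodup := by
  rw [List.nodup_flatMap]
  refine ⟨fun a _ => List.nodup_range', h.disj.imp fun {a b} hab => ?_⟩
  intro t hta htb
  rw [mem_interval] at hta htb
  omega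

lemma IsIntervalCycle.mem_bounds {R : ℕ → ℕ → Prop} {n : ℕ} {Is : List (ℕ × ℕ)}
    (h : IsIntervalCycle R n Is) : ∀ t ∈ Is.flatMap interval, 1 ≤ t ∧ t < n := by
  intro t ht
  obtain ⟨a, ha, hta⟩ := List.mem_flatMap.1 ht
  have := h.valid a ha
  rw [mem_interval] at hta
  omega

lemma length_flatMap_interval (Is : List (ℕ × ℕ)) :
    (Is.flatMap interval).length = (Is.map fun a => a.2 + 1 - a.1).sum := by
  simp [List.length_flatMap, interval]

lemma CycleBound.sum_le {R : ℕ → ℕ → Prop} {n N : ℕ} (H : CycleBound R n N)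
    {Is : List (ℕ × ℕ)} (h : IsIntervalCycle R n Is) :
    (Is.map fun a => a.2 + 1 - a.1).sum ≤ N := by
  rw [← length_flatMap_interval]
  exact H _ h.nodup h.mem_bounds ((isChain_flatMap_interval fun a ha => (h.valid a ha).2.1).2
    ⟨h.path, h.junction⟩)

lemma CycleBound.not_insertable_list {R : ℕ → ℕ → Prop} {n N : ℕ} (H : CycleBound R n N)
    {l : List ℕ} {u : ℕ} (hnd : l.Nodup) (hl : ∀ t ∈ l, 1 ≤ t ∧ t < n)
    (hc : List.IsChain R (0 :: (l ++ [0]))) (hlen : N ≤ l.length) (hu : 1 ≤ u ∧ u < n)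
    (hul : u ∉ l) :
    List.IsChain (fun s t => ¬(R s u ∧ R u t)) (0 :: (l ++ [0])) := by
  rw [List.isChain_iff_forall_rel_of_append_cons_cons]
  intro a b l₁ l₂ hab ⟨hau, hub⟩
  have hchain : List.IsChain R (l₁ ++ a :: u :: b :: l₂) := by
    rw [hab, List.isChain_append_cons_cons] at hc
    rw [List.isChain_append_cons_cons, List.isChain_cons_cons]
    exact ⟨hc.1, hau, hub, hc.2.2⟩
  obtain ⟨m₁, m₂, rfl, hm⟩ : ∃ m₁ m₂, l = m₁ ++ m₂ ∧
      l₁ ++ a :: u :: b :: l₂ = 0 :: ((m₁ ++ u :: m₂) ++ [0]) := by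
    rcases l₁ with _ | ⟨x, l₁⟩
    · simp only [List.nil_append, List.cons.injEq] at hab
      exact ⟨[], l, rfl, by simp [hab.2, ← hab.1]⟩
    · simp only [List.cons_append, List.cons.injEq] at hab
      rcases List.eq_nil_or_concat l₂ with rfl | ⟨l₂, y, rfl⟩
      · have h : l ++ [0] = (l₁ ++ [a]) ++ [b] := by simp [hab.2]
        obtain ⟨h1, h2⟩ := List.append_inj' h rfl
        refine ⟨l, [], by simp, ?_⟩
        simp only [List.cons.injEq, and_true] at h2
        simp [h1, ← h2, ← hab.1]
      · have h : l ++ [0] = (l₁ ++ a :: b :: l₂) ++ [y] := by simp [hab.2]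
        obtain ⟨h1, h2⟩ := List.append_inj' h rfl
        refine ⟨l₁ ++ [a], b :: l₂, by simp [h1], ?_⟩
        simp only [List.cons.injEq, and_true] at h2
        simp [← h2, ← hab.1]
  have hperm : (m₁ ++ u :: m₂).Perm (u :: (m₁ ++ m₂)) := List.perm_middle
  rw [hm] at hchain
  have := H _ (hperm.nodup_iff.2 (List.nodup_cons.2 ⟨hul, hnd⟩)) (fun t ht => ?_) hchain
  · rw [hperm.length_eq, List.length_cons] at this
    omega
  · rcases List.mem_cons.1 (hperm.mem_iff.1 ht) with rfl | h
    exacts [hu, hl t h]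

lemma CycleBound.not_insertable {R : ℕ → ℕ → Prop} {n N : ℕ} (H : CycleBound R n N)
    {Is : List (ℕ × ℕ)} (h : IsIntervalCycle R n Is)
    (hlen : N ≤ (Is.map fun a => a.2 + 1 - a.1).sum) {u : ℕ} (hu : 1 ≤ u ∧ u < n)
    (hul : ∀ a ∈ Is, u < a.1 ∨ a.2 < u) :
    (∀ a ∈ Is, ∀ t, a.1 ≤ t → t < a.2 → ¬(R t u ∧ R u (t + 1))) ∧
      List.IsChain (fun a b => ¬(R a.2 u ∧ R u b.1)) ((0, 0) :: (Is ++ [(0, 0)])) := by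
  have hle : ∀ a ∈ Is, a.1 ≤ a.2 := fun a ha => (h.valid a ha).2.1
  rw [← length_flatMap_interval] at hlen
  refine (isChain_flatMap_interval (S := fun s t => ¬(R s u ∧ R u t)) hle).1
    (H.not_insertable_list h.nodup h.mem_bounds
      ((isChain_flatMap_interval hle).2 ⟨h.path, h.junction⟩) hlen hu ?_)
  intro hmem
  obtain ⟨a, ha, hta⟩ := List.mem_flatMap.1 hmem
  have := hul a ha
  rw [mem_interval] at hta
  omega

/-- The relation `S` holds at all junctions of the closed walk that starts at `u`, traverses the
intervals of the list in order and ends at `0`. -/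
def Junctions (S : ℕ → ℕ → Prop) : ℕ → List (ℕ × ℕ) → Prop
  | u, [] => S u 0
  | u, a :: Is => S u a.1 ∧ Junctions S a.2 Is

lemma isChain_iff_junctions {S : ℕ → ℕ → Prop} {a : ℕ × ℕ} {Is : List (ℕ × ℕ)} :
    List.IsChain (fun a b => S a.2 b.1) (a :: (Is ++ [(0, 0)])) ↔ Junctions S a.2 Is := by
  induction Is generalizing a with
  | nil => simp [Junctions]
  | cons b Is ih => rw [List.cons_append, List.isChain_cons_cons, ih]; rfl

/-- A digraph on `[0, N + k + 3)` in which `0, 1, …, N` is a cycle that is longest among the cycles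
through `0`, and the remaining vertices form a complete digraph which is dominated by `[a, N]`,
dominates `[1, a]`, and has no further arcs to or from the cycle. -/
structure CycleConfig (R : ℕ → ℕ → Prop) (k N a : ℕ) : Prop where
  degree_ge : ∀ u, 1 ≤ u → u < N + k + 3 → N + 2 * k + 3 ≤ arcCount R u 0 (N + k + 2)
  degree_zero_ge : N - 1 ≤ arcCount R 0 0 (N + k + 2)
  irrefl : ∀ u, ¬R u u
  path : ∀ t, 1 ≤ t → t < N → R t (t + 1)
  zero_to : R 0 1
  to_zero : R N 0
  strong : ∀ e, e < N + k + 3 → ∀ S : Set ℕ, (∃ u ∈ S, u < N + k + 3 ∧ u ≠ e) →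
    (∃ v ∉ S, v < N + k + 3 ∧ v ≠ e) →
    ∃ u ∈ S, ∃ v ∉ S, u < N + k + 3 ∧ v < N + k + 3 ∧ u ≠ e ∧ v ≠ e ∧ R u v
  bound : CycleBound R (N + k + 3) N
  two_le : 2 ≤ a
  lt_N : a < N
  to_block : ∀ b t, N < b → b < N + k + 3 → 1 ≤ t → t ≤ N → (R t b ↔ a ≤ t)
  from_block : ∀ b t, N < b → b < N + k + 3 → 1 ≤ t → t ≤ N → (R b t ↔ t ≤ a)
  not_block_zero : ∀ b, N < b → b < N + k + 3 → ¬R b 0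
  not_zero_block : ∀ b, N < b → b < N + k + 3 → ¬R 0 b
  block : ∀ b c, N < b → b < N + k + 3 → N < c → c < N + k + 3 → b ≠ c → R b c

namespace CycleConfig

variable {R : ℕ → ℕ → Prop} {k N a : ℕ}

lemma to_first (h : CycleConfig R k N a) {t : ℕ} (h1 : a ≤ t) (h2 : t ≤ N) : R t (N + 1) :=
  (h.to_block _ t (by omega) (by omega) (by have := h.two_le; omega) h2).2 h1

lemma from_last (h : CycleConfig R k N a) {t : ℕ} (h1 : 1 ≤ t) (h2 : t ≤ a) : R (N + k + 2) t :=
  (h.from_block _ t (by omega) (by omega) h1 (by have := h.lt_N; omega)).2 h2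

lemma isIntervalCycle (h : CycleConfig R k N a) (Is : List (ℕ × ℕ))
    (hv : ∀ x ∈ Is, 1 ≤ x.1 ∧ x.1 ≤ x.2 ∧ (x.2 ≤ N ∨ N < x.1 ∧ x.2 < N + k + 3))
    (hd : Is.Pairwise fun x y => x.2 < y.1 ∨ y.2 < x.1) (hj : Junctions R 0 Is) :
    IsIntervalCycle R (N + k + 3) Is where
  valid x hx := by have := hv x hx; omega
  path x hx t h1 h2 := by
    rcases hv x hx with ⟨h3, h4, h5 | h5⟩
    · exact h.path t (by omega) (by omega)
    · exact h.block _ _ (by omega) (by omega) (by omega) (by omega) (by omega)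
  disj := hd
  junction := isChain_iff_junctions.2 hj

lemma false_of_cycle (h : CycleConfig R k N a) (Is : List (ℕ × ℕ))
    (hlen : N < (Is.map fun x => x.2 + 1 - x.1).sum)
    (hv : ∀ x ∈ Is, 1 ≤ x.1 ∧ x.1 ≤ x.2 ∧ (x.2 ≤ N ∨ N < x.1 ∧ x.2 < N + k + 3))
    (hd : Is.Pairwise fun x y => x.2 < y.1 ∨ y.2 < x.1) (hj : Junctions R 0 Is) : False :=
  absurd (h.bound.sum_le (h.isIntervalCycle Is hv hd hj)) (by omega)

lemma not_insertable (h : CycleConfig R k N a) (Is : List (ℕ × ℕ)) {u : ℕ}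
    (hlen : N ≤ (Is.map fun x => x.2 + 1 - x.1).sum) (hu : 1 ≤ u ∧ u < N + k + 3)
    (hul : ∀ x ∈ Is, u < x.1 ∨ x.2 < u)
    (hv : ∀ x ∈ Is, 1 ≤ x.1 ∧ x.1 ≤ x.2 ∧ (x.2 ≤ N ∨ N < x.1 ∧ x.2 < N + k + 3))
    (hd : Is.Pairwise fun x y => x.2 < y.1 ∨ y.2 < x.1) (hj : Junctions R 0 Is) :
    (∀ x ∈ Is, ∀ t, x.1 ≤ t → t < x.2 → ¬(R t u ∧ R u (t + 1))) ∧
      Junctions (fun s t => ¬(R s u ∧ R u t)) 0 Is := by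
  have := h.bound.not_insertable (h.isIntervalCycle Is hv hd hj) hlen hu hul
  rwa [isChain_iff_junctions (S := fun s t => ¬(R s u ∧ R u t))] at this

lemma not_zero_insertable (h : CycleConfig R k N a) {t : ℕ} (h1 : 1 ≤ t) (h2 : t < N) :
    ¬(R t 0 ∧ R 0 (t + 1)) := fun ⟨h3, h4⟩ =>
  h.false_of_cycle [(t + 1, N), (N + 1, N + k + 2), (1, t)] (by simp; omega) (by simp; omega)
    (by simp; omega) ⟨h4, h.to_first h.lt_N.le le_rfl, h.from_last le_rfl (by have := h.two_le; omega), h3⟩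

lemma arcCount_zero (h : CycleConfig R k N a) : N - 1 ≤ arcCount R 0 1 N := by
  have h0 := h.degree_zero_ge
  rw [arcCount_add (s := 0) _ _ (by omega) (by omega), arcCount_self,
    arcCount_add (s := N) R 0 (p := 0 + 1) (by omega) (by omega), ind_of_not (h.irrefl 0),
    arcCount_eq_zero (p := N + 1) fun t h1 h2 =>
      ⟨h.not_zero_block t (by omega) (by omega), h.not_block_zero t (by omega) (by omega)⟩] at h0
  simp only [zero_add] at h0
  omega

/-- A position `t` of the path `1, …, N` at which neither `t → 0` nor `0 → t + 1` is an arc. -/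
def Gap (R : ℕ → ℕ → Prop) (t : ℕ) : Prop := ¬R t 0 ∧ ¬R 0 (t + 1)

lemma not_three_gaps (h : CycleConfig R k N a) {t₁ t₂ t₃ : ℕ} (h₀ : 1 ≤ t₁) (h₁ : t₁ < t₂)
    (h₂ : t₂ < t₃) (h₃ : t₃ < N) (g₁ : Gap R t₁) (g₂ : Gap R t₂) (g₃ : Gap R t₃) : False := by
  have hc := h.arcCount_zero
  have hb : ∀ p q, 1 ≤ p → p ≤ q → q ≤ N →
      arcCount R 0 p q ≤ q - p + ind (R 0 p) + ind (R q 0) := fun p q hp hpq hq =>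
    arcCount_le hpq fun t ht1 ht2 => h.not_zero_insertable (by omega) (by omega)
  rw [arcCount_add (s := t₁) _ _ (by omega) (by omega),
    arcCount_add (p := t₁ + 1) (s := t₂) _ _ (by omega) (by omega),
    arcCount_add (p := t₂ + 1) (s := t₃) _ _ (by omega) (by omega)] at hc
  have b₁ := hb 1 t₁ (by omega) (by omega) (by omega)
  have b₂ := hb (t₁ + 1) t₂ (by omega) (by omega) (by omega)
  have b₃ := hb (t₂ + 1) t₃ (by omega) (by omega) (by omega)
  have b₄ := hb (t₃ + 1) N (by omega) (by omega) (by omega)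
  rw [ind_of_not g₁.1] at b₁
  rw [ind_of_not g₁.2, ind_of_not g₂.1] at b₂
  rw [ind_of_not g₂.2, ind_of_not g₃.1] at b₃
  rw [ind_of_not g₃.2] at b₄
  have := ind_le_one (R 0 1)
  have := ind_le_one (R N 0)
  omega

section Jump

variable {l r : ℕ}

lemma jump_not_pred (h : CycleConfig R k N a) (hl : 1 ≤ l) (hla : l < a) (hlr : l + 2 ≤ r)
    (hr : r ≤ N) (hjump : R l r) : ¬R (r - 1) 0 := fun h0 =>
  h.false_of_cycle [(1, l), (r, N), (N + 1, N + k + 2), (l + 1, r - 1)] (by simp; omega)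
    (by simp; omega) (by simp; omega)
    ⟨h.zero_to, hjump, h.to_first h.lt_N.le le_rfl, h.from_last (by omega) (by omega), h0⟩

lemma jump_not_pred_pred (h : CycleConfig R k N a) (hl : 1 ≤ l) (hla : l < a) (hlr : l + 3 ≤ r)
    (hr : r ≤ N) (hjump : R l r) : ¬R (r - 2) 0 := fun h0 =>
  h.false_of_cycle [(1, l), (r, N), (N + 1, N + k + 2), (l + 1, r - 2)] (by simp; omega)
    (by simp; omega) (by simp; omega)
    ⟨h.zero_to, hjump, h.to_first h.lt_N.le le_rfl, h.from_last (by omega) (by omega), h0⟩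

lemma jump_not_succ (h : CycleConfig R k N a) (hl : 1 ≤ l) (hla : l < a) (har : a < r)
    (hr : r ≤ N) (hjump : R l r) : ¬R 0 (l + 1) := fun h0 =>
  h.false_of_cycle [(l + 1, r - 1), (N + 1, N + k + 2), (1, l), (r, N)] (by simp; omega)
    (by simp; omega) (by simp; omega)
    ⟨h0, h.to_first (by omega) (by omega), h.from_last (by omega) (by omega), hjump, h.to_zero⟩

lemma not_to_block (h : CycleConfig R k N a) {t v : ℕ} (ht : 1 ≤ t) (hta : t < a)
    (hv : v < N + k + 3) (hR : R t v) : v ≤ N := by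
  by_contra hn
  have := h.lt_N
  have := (h.to_block v t (by omega) hv ht (by omega)).1 hR
  omega

lemma exists_jump (h : CycleConfig R k N a) :
    ∃ l r, 1 ≤ l ∧ l < a ∧ a < r ∧ r ≤ N ∧ (R l r ∨ R l 0 ∧ R 0 r) := by
  have h2 := h.two_le
  have hN := h.lt_N
  by_contra! hn
  have key : ∀ l r, 1 ≤ l → l < a → a < r → r ≤ N → ¬R l r := fun l r h1 h2 h3 h4 =>
    (hn l r h1 h2 h3 h4).1
  obtain ⟨u, ⟨hu1, hu2⟩, v, hv, -, hvn, -, hva, huv⟩ := h.strong a (by omega)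
    {t | 1 ≤ t ∧ t < a} ⟨1, ⟨le_rfl, h2⟩, by omega, by omega⟩ ⟨N, by simp; omega, by omega, by omega⟩
  have hvN := h.not_to_block hu1 hu2 hvn huv
  obtain rfl : v = 0 := by
    by_contra h0
    simp only [Set.mem_ofPred_eq, not_and, not_lt] at hv
    exact key u v hu1 hu2 (by omega) hvN huv
  obtain ⟨w, hw, x, hx, -, hxn, -, hxa, hwx⟩ := h.strong a (by omega)
    {t | t < a} ⟨1, h2, by omega, by omega⟩ ⟨N, by simp; omega, by omega, by omega⟩
  simp only [Set.mem_ofPred_eq, not_lt] at hw hx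
  rcases Nat.eq_zero_or_pos w with rfl | hw0
  · have hxN : x ≤ N := by
      by_contra hn
      exact h.not_zero_block x (by omega) hxn hwx
    exact (hn u x hu1 hu2 (by omega) hxN).2 huv hwx
  · exact key w x hw0 hw (by omega) (h.not_to_block hw0 hw hxn hwx) hwx

end Jump

section Monotone

/-- If no path from the in-neighbours of `0` forward to its out-neighbours exists and an
in-neighbour of `0` occurs up to `a`, we reach a contradiction. -/
lemma false_of_to_zero_le (h : CycleConfig R k N a)
    (hmono : ∀ i j, 1 ≤ i → i < j → j ≤ N → ¬(R i 0 ∧ R 0 j))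
    {e : ℕ} (he1 : 1 ≤ e) (hea : e ≤ a) (he : R e 0) : False := by
  classical
  have h2 := h.two_le
  have hN := h.lt_N
  have hex : ∃ e, 1 ≤ e ∧ R e 0 := ⟨e, he1, he⟩
  obtain ⟨e, hea, he1, he, hmin⟩ : ∃ e, e ≤ a ∧ 1 ≤ e ∧ R e 0 ∧ ∀ t, 1 ≤ t → t < e → ¬R t 0 :=
    ⟨Nat.find hex, (Nat.find_min' hex ⟨he1, he⟩).trans hea, (Nat.find_spec hex).1,
      (Nat.find_spec hex).2, fun t h1 h2 h3 => Nat.find_min hex h2 ⟨h1, h3⟩⟩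
  have he2 : 2 ≤ e := by
    by_contra hlt
    obtain rfl : e = 1 := by omega
    obtain ⟨u, rfl, v, hv, -, hvn, -, hv1, h0v⟩ := h.strong 1 (by omega) {0}
      ⟨0, rfl, by omega, by omega⟩ ⟨N, by simp; omega, by omega, by omega⟩
    rcases Nat.lt_or_ge N v with hNv | hNv
    · exact h.not_zero_block v hNv hvn h0v
    · exact hmono 1 v le_rfl (by simp at hv; omega) hNv ⟨he, h0v⟩
  obtain ⟨t, ⟨ht1, hte⟩, p, hp, -, hpn, -, hpe, htp⟩ := h.strong e (by omega)
    {t | 1 ≤ t ∧ t < e} ⟨1, ⟨le_rfl, he2⟩, by omega, by omega⟩ ⟨0, by simp, by omega, by omega⟩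
  have hpN := h.not_to_block ht1 (by omega) hpn htp
  have hp0 : p ≠ 0 := fun h0 => hmin t ht1 hte (h0 ▸ htp)
  simp only [Set.mem_ofPred_eq, not_and, not_lt] at hp
  have hlt : e < p := by omega
  have q1 := h.jump_not_pred ht1 (by omega) (by omega) hpN htp
  have h1e : p - 1 ≠ e := fun h1 => q1 (h1 ▸ he)
  have q2 := h.jump_not_pred_pred ht1 (by omega) (by omega) hpN htp
  have h2e : p - 2 ≠ e := fun h1 => q2 (h1 ▸ he)
  have hout : ∀ j, e < j → j ≤ N → ¬R 0 j := fun j h1 h2 h3 => hmono e j he1 h1 h2 ⟨he, h3⟩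
  have g1 : Gap R (p - 2) := ⟨q2, hout _ (by omega) (by omega)⟩
  have g2 : Gap R (p - 1) := ⟨q1, hout _ (by omega) (by omega)⟩
  have hpa : p ≤ a := by
    by_contra hlt'
    exact h.not_three_gaps ht1 (by omega) (by omega) (by omega)
      ⟨hmin t ht1 hte, h.jump_not_succ ht1 (by omega) (by omega) hpN htp⟩ g1 g2
  obtain ⟨l, r, hl, hla, har, hr, hj | hj⟩ := h.exists_jump
  · exact h.not_three_gaps (by omega) (by omega) (by omega : p - 1 < r - 1) (by omega) g1 g2
      ⟨h.jump_not_pred hl hla (by omega) hr hj, hout _ (by omega) (by omega)⟩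
  · exact hmono l r hl (by omega) hr hj

lemma false_of_separated (h : CycleConfig R k N a) (hto : ∀ t, 1 ≤ t → t ≤ a → ¬R t 0)
    (hfrom : ∀ t, a ≤ t → t ≤ N → ¬R 0 t) : False := by
  have h2 := h.two_le
  have hN := h.lt_N
  have g1 : Gap R (a - 1) := ⟨hto _ (by omega) (by omega), hfrom _ (by omega) (by omega)⟩
  have g2 : Gap R a := ⟨hto _ (by omega) (by omega), hfrom _ (by omega) (by omega)⟩
  have key : ∀ l r, 1 ≤ l → l < a → a < r → r ≤ N → R l r → l = a - 1 := fun l r h1 h2 h3 h4 h5 => by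
    by_contra hne
    exact h.not_three_gaps h1 (by omega) (by omega) (by omega)
      ⟨hto _ h1 h2.le, h.jump_not_succ h1 h2 h3 h4 h5⟩ g1 g2
  obtain ⟨l, r, hl, hla, har, hr, hj | hj⟩ := h.exists_jump
  swap
  · exact hto l hl hla.le hj.1
  obtain rfl := key l r hl hla har hr hj
  have hra : r = a + 1 := by
    by_contra hne
    exact h.not_three_gaps hl (by omega) (by omega : a < r - 1) (by omega) g1 g2
      ⟨h.jump_not_pred hl hla (by omega) hr hj, hfrom _ (by omega) (by omega)⟩
  subst hra
  have ha3 : 3 ≤ a := by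
    obtain ⟨u, rfl, v, hv, -, hvn, -, hv1, h0v⟩ := h.strong 1 (by omega) {0}
      ⟨0, rfl, by omega, by omega⟩ ⟨N, by simp; omega, by omega, by omega⟩
    by_contra hlt
    rcases Nat.lt_or_ge N v with hNv | hNv
    · exact h.not_zero_block v hNv hvn h0v
    · exact hfrom v (by simp at hv; omega) hNv h0v
  obtain ⟨t, ⟨ht1, hta⟩, p, hp, -, hpn, -, hpa, htp⟩ := h.strong (a - 1) (by omega)
    {t | 1 ≤ t ∧ t < a - 1} ⟨1, ⟨le_rfl, by omega⟩, by omega, by omega⟩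
    ⟨0, by simp, by omega, by omega⟩
  have hpN := h.not_to_block ht1 (by omega) hpn htp
  have hp0 : p ≠ 0 := fun h0 => hto t ht1 (by omega) (h0 ▸ htp)
  simp only [Set.mem_ofPred_eq, not_and, not_lt] at hp
  rcases (show p = a ∨ a < p by omega) with rfl | hap
  · exact h.false_of_cycle [(1, t), (p, p), (N + 1, N + k + 2), (t + 1, p - 1), (p + 1, N)]
      (by simp; omega) (by simp; omega) (by simp; omega)
      ⟨h.zero_to, htp, h.to_first le_rfl (by omega), h.from_last (by omega) (by omega), hj,
        h.to_zero⟩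
  · have := key t p ht1 (by omega) hap hpN htp
    omega

end Monotone

section Reverse

/-- The involution of the vertices reversing the path `1, …, N`. -/
def flip (N t : ℕ) : ℕ := if 1 ≤ t ∧ t ≤ N then N + 1 - t else t

lemma flip_flip (N t : ℕ) : flip N (flip N t) = t := by
  unfold flip; split_ifs <;> omega

lemma flip_of_mem {N t : ℕ} (h1 : 1 ≤ t) (h2 : t ≤ N) : flip N t = N + 1 - t := if_pos ⟨h1, h2⟩

lemma flip_of_gt {N t : ℕ} (h : N < t) : flip N t = t := if_neg (by omega)

lemma flip_zero (N : ℕ) : flip N 0 = 0 := if_neg (by omega)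

lemma flip_lt {N t m : ℕ} : flip N t < N + m + 3 ↔ t < N + m + 3 := by
  unfold flip; split_ifs <;> omega

lemma one_le_flip {N t : ℕ} : 1 ≤ flip N t ↔ 1 ≤ t := by
  unfold flip; split_ifs <;> omega

lemma flip_injective (N : ℕ) : Function.Injective (flip N) :=
  Function.LeftInverse.injective (flip_flip N)

lemma arcCount_flip (R : ℕ → ℕ → Prop) (k N u : ℕ) :
    arcCount (fun s t => R (flip N t) (flip N s)) u 0 (N + k + 2) =
      arcCount R (flip N u) 0 (N + k + 2) := by
  unfold arcCount
  refine Finset.sum_nbij' (flip N) (flip N) ?_ ?_ ?_ ?_ ?_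
  · intro t ht
    simp only [Finset.mem_Ico, zero_le, true_and] at ht ⊢
    have := (flip_lt (N := N) (m := k) (t := t)).2 (by omega)
    omega
  · intro t ht
    simp only [Finset.mem_Ico, zero_le, true_and] at ht ⊢
    have := (flip_lt (N := N) (m := k) (t := t)).2 (by omega)
    omega
  · intro t _; exact flip_flip N t
  · intro t _; exact flip_flip N t
  · intro t _; exact add_comm _ _

lemma reverse (h : CycleConfig R k N a) :
    CycleConfig (fun s t => R (flip N t) (flip N s)) k N (N + 1 - a) where
  degree_ge u h1 h2 := by
    rw [arcCount_flip]
    exact h.degree_ge _ (one_le_flip.2 h1) (flip_lt.2 h2)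
  degree_zero_ge := by
    rw [arcCount_flip, flip_zero]
    exact h.degree_zero_ge
  irrefl u := h.irrefl _
  path t h1 h2 := by
    rw [flip_of_mem (by omega) (by omega), flip_of_mem (by omega) (by omega),
      show N + 1 - t = N + 1 - (t + 1) + 1 by omega]
    exact h.path _ (by omega) (by omega)
  zero_to := by
    have := h.lt_N
    rw [flip_zero, flip_of_mem (by omega) (by omega)]
    exact h.to_zero
  to_zero := by
    have := h.lt_N
    rw [flip_zero, flip_of_mem (by omega) (by omega), show N + 1 - N = 1 by omega]
    exact h.zero_to
  strong e he S := by
    rintro ⟨u, huS, hu, hue⟩ ⟨v, hvS, hv, hve⟩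
    obtain ⟨x, hx, y, hy, hxn, hyn, hxe, hye, hxy⟩ := h.strong (flip N e) (flip_lt.2 he)
      {t | flip N t ∉ S} ⟨flip N v, by simpa [flip_flip] using hvS, flip_lt.2 hv,
        (flip_injective N).ne hve⟩
      ⟨flip N u, by simpa [flip_flip] using huS, flip_lt.2 hu, (flip_injective N).ne hue⟩
    refine ⟨flip N y, by simpa using hy, flip N x, hx, flip_lt.2 hyn, flip_lt.2 hxn, ?_, ?_, ?_⟩
    · rintro rfl; exact hye (flip_flip N y).symm
    · rintro rfl; exact hxe (flip_flip N x).symm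
    · simpa [flip_flip] using hxy
  bound l hnd hl hc := by
    have := h.bound (l.map (flip N)).reverse
      (List.nodup_reverse.2 (hnd.map (flip_injective N))) ?_ ?_
    · simpa using this
    · intro t ht
      obtain ⟨s, hs, rfl⟩ := List.mem_map.1 (List.mem_reverse.1 ht)
      exact ⟨one_le_flip.2 (hl s hs).1, flip_lt.2 (hl s hs).2⟩
    · have h1 := List.isChain_map (R := fun s t => R t s) (flip N) |>.2 hc
      rw [← List.isChain_reverse] at h1
      simpa [flip_zero] using h1
  two_le := by have := h.lt_N; omega
  lt_N := by have := h.two_le; have := h.lt_N; omega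
  to_block b t h1 h2 h3 h4 := by
    rw [flip_of_gt h1, flip_of_mem h3 h4, h.from_block b _ h1 h2 (by omega) (by omega)]
    have := h.lt_N
    omega
  from_block b t h1 h2 h3 h4 := by
    rw [flip_of_gt h1, flip_of_mem h3 h4, h.to_block b _ h1 h2 (by omega) (by omega)]
    have := h.lt_N
    omega
  not_block_zero b h1 h2 := by
    rw [flip_of_gt h1, flip_zero]; exact h.not_zero_block b h1 h2
  not_zero_block b h1 h2 := by
    rw [flip_of_gt h1, flip_zero]; exact h.not_block_zero b h1 h2
  block b c h1 h2 h3 h4 h5 := by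
    rw [flip_of_gt h1, flip_of_gt h3]; exact h.block c b h3 h4 h1 h2 h5.symm

end Reverse

/-- The in-neighbours of `0` on the path do not all come after its out-neighbours. -/
lemma exists_detour (h : CycleConfig R k N a) :
    ∃ i j, 1 ≤ i ∧ i < j ∧ j ≤ N ∧ R i 0 ∧ R 0 j := by
  by_contra! hn
  have hN := h.lt_N
  have hmono : ∀ i j, 1 ≤ i → i < j → j ≤ N → ¬(R i 0 ∧ R 0 j) := fun i j h1 h2 h3 h4 =>
    hn i j h1 h2 h3 h4.1 h4.2
  refine h.false_of_separated (fun t h1 h2 h3 => h.false_of_to_zero_le hmono h1 h2 h3)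
    fun t h1 h2 h3 => ?_
  have ht : 1 ≤ t := by have := h.two_le; omega
  refine h.reverse.false_of_to_zero_le (e := N + 1 - t) ?_ (by omega) (by omega) ?_
  · rintro i j h1 h2 h3 ⟨h4, h5⟩
    rw [flip_zero, flip_of_mem (by omega) (by omega)] at h4 h5
    exact hmono _ _ (by omega) (by omega) (by omega) ⟨h5, h4⟩
  · rw [flip_zero, flip_of_mem (by omega) (by omega), show N + 1 - (N + 1 - t) = t by omega]
    exact h3

/-- An in-neighbour `i` of `0` followed on the path by an out-neighbour `j` of `0`, with no
neighbours of `0` between them. -/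
structure Detour (R : ℕ → ℕ → Prop) (N i j : ℕ) : Prop where
  one_le : 1 ≤ i
  add_two_le : i + 2 ≤ j
  le_N : j ≤ N
  to_zero : R i 0
  zero_to : R 0 j
  not_to_zero : ∀ t, i < t → t < j → ¬R t 0
  not_zero_to : ∀ t, i < t → t < j → ¬R 0 t

lemma exists_minimal_detour (h : CycleConfig R k N a) : ∃ i j, Detour R N i j := by
  obtain ⟨i, j, h1, h2, h3, h4, h5⟩ := h.exists_detour
  induction hd : j - i using Nat.strong_induction_on generalizing i j with
  | _ d ih =>
    by_cases hex : ∃ t, i < t ∧ t < j ∧ (R t 0 ∨ R 0 t)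
    · obtain ⟨t, hit, htj, ht | ht⟩ := hex
      · exact ih (j - t) (by omega) t j (by omega) htj h3 ht h5 rfl
      · exact ih (t - i) (by omega) i t h1 hit (by omega) h4 ht rfl
    · push Not at hex
      refine ⟨i, j, h1, ?_, h3, h4, h5, fun t h6 h7 => (hex t h6 h7).1,
        fun t h6 h7 => (hex t h6 h7).2⟩
      by_contra hlt
      obtain rfl : j = i + 1 := by omega
      exact h.not_zero_insertable h1 (by omega) ⟨h4, h5⟩

namespace Detour

variable {i j : ℕ}

lemma gap (d : Detour R N i j) {t : ℕ} (h1 : i < t) (h2 : t + 1 < j) : Gap R t :=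
  ⟨d.not_to_zero t h1 (by omega), d.not_zero_to _ (by omega) h2⟩

lemma add_le (d : Detour R N i j) (h : CycleConfig R k N a) : i + k + 3 ≤ j := by
  have := d.one_le
  have := d.add_two_le
  have := d.le_N
  by_contra hlt
  exact h.false_of_cycle [(j, N), (N + 1, N + k + 2), (1, i)] (by simp; omega) (by simp; omega)
    (by simp; omega) ⟨d.zero_to, h.to_first h.lt_N.le le_rfl,
      h.from_last le_rfl (by have := h.two_le; omega), d.to_zero⟩

lemma le_add (d : Detour R N i j) (h : CycleConfig R k N a) : j ≤ i + 4 := by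
  have := d.le_N
  by_contra hlt
  exact h.not_three_gaps (by omega) (by omega) (by omega) (by omega)
    (d.gap (t := i + 1) (by omega) (by omega)) (d.gap (t := i + 2) (by omega) (by omega))
    (d.gap (t := i + 3) (by omega) (by omega))

lemma le_or_le (d : Detour R N i j) (h : CycleConfig R k N a) : a ≤ i ∨ j ≤ a := by
  have := d.one_le
  have := d.add_two_le
  have := d.le_N
  by_contra! hlt
  exact h.false_of_cycle
    [(j, N), (N + 1, N + 1), (i + 1, j - 1), (N + 2, N + k + 2), (1, i)]
    (by simp; omega) (by simp; omega) (by simp; omega)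
    ⟨d.zero_to, h.to_first h.lt_N.le le_rfl,
      (h.from_block _ _ (by omega) (by omega) (by omega) (by omega)).2 (by omega),
      (h.to_block _ _ (by omega) (by omega) (by omega) (by omega)).2 (by omega),
      h.from_last le_rfl (by have := h.two_le; omega), d.to_zero⟩

lemma mid_to_first (d : Detour R N i j) (h : CycleConfig R k N a) (hai : a ≤ i)
    {v : ℕ} (hiv : i < v) (hvj : v < j) : R v (N + 1) :=
  h.to_first (by omega) (by have := d.le_N; omega)

/-- The arcs between a vertex `v` inside the detour and the vertices outside `[1, N]`. -/
lemma degree_le (d : Detour R N i j) (h : CycleConfig R k N a) (hai : a ≤ i)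
    {v : ℕ} (hiv : i < v) (hvj : v < j) :
    N + k + 1 ≤ arcCount R v 1 i + arcCount R v (i + 1) (j - 1) + arcCount R v j N := by
  have := d.le_N
  have h1 := h.degree_ge v (by omega) (by omega)
  rw [arcCount_add (s := 0) _ _ (by omega) (by omega),
    arcCount_add (p := 0 + 1) (s := i) _ _ (by omega) (by omega),
    arcCount_add (p := i + 1) (s := j - 1) _ _ (by omega) (by omega),
    arcCount_add (p := j - 1 + 1) (s := N) _ _ (by omega) (by omega),
    arcCount_eq_zero (q := 0) fun t h3 h4 => by
      obtain rfl : t = 0 := by omega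
      exact ⟨d.not_to_zero v hiv hvj, d.not_zero_to v hiv hvj⟩] at h1
  have h2 : arcCount R v (N + 1) (N + k + 2) ≤ N + k + 2 + 1 - (N + 1) :=
    arcCount_le_of_not_from fun t h3 h4 h5 => by
      have := (h.from_block t v (by omega) (by omega) (by omega) (by omega)).1 h5
      omega
  simp only [show j - 1 + 1 = j by omega, zero_add] at h1
  omega

lemma exists_to_zero (d : Detour R N i j) (h : CycleConfig R k N a) (hai : a ≤ i)
    (hj : j = i + 4) : ∃ l, 1 ≤ l ∧ l < a ∧ R l 0 := by
  have := d.le_N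
  obtain ⟨l, r, h1, h2, h3, h4, h5 | h5⟩ := h.exists_jump
  · refine ⟨l, h1, h2, ?_⟩
    by_contra h6
    exact h.not_three_gaps h1 (by omega) (by omega) (by omega)
      ⟨h6, h.jump_not_succ h1 h2 h3 h4 h5⟩
      (d.gap (t := i + 1) (by omega) (by omega)) (d.gap (t := i + 2) (by omega) (by omega))
  · exact ⟨l, h1, h2, h5.1⟩

lemma not_to_one (d : Detour R N i j) (h : CycleConfig R k N a) (hai : a ≤ i)
    (hj : j = i + 4) {v : ℕ} (hiv : i < v) (hvj : v < j) : ¬R v 1 := by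
  have hN := d.le_N
  have hk := d.add_le h
  obtain ⟨l, hl, hla, hl0⟩ := d.exists_to_zero h hai hj
  have hblk : ∀ t, 1 ≤ t → t ≤ a → R (N + k + 2) t := fun t h1 h2 => h.from_last h1 h2
  have hNb := h.to_first h.lt_N.le le_rfl
  have hj0 := d.zero_to
  have h23 : ∀ v, i + 1 < v → v < j → ¬R v 1 := fun v h1 h2 h3 =>
    h.false_of_cycle [(j, N), (N + 1, N + k + 2), (l + 1, v), (1, l)] (by simp; omega)
      (by simp; omega) (by simp; omega)
      ⟨hj0, hNb, hblk _ (by omega) (by omega), h3, hl0⟩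
  rcases Nat.lt_or_ge (i + 1) v with h1 | h1
  · exact h23 v h1 hvj
  obtain rfl : v = i + 1 := by omega
  intro hv1
  obtain ⟨hin, -, hjN, -, hjl, hj1⟩ := h.not_insertable (u := i + 2)
    [(j, N), (N + 1, N + k + 2), (l + 1, i + 1), (1, l)] (by simp; omega) (by omega)
    (by simp; omega) (by simp; omega) (by simp; omega)
    ⟨hj0, hNb, hblk _ (by omega) (by omega), hv1, hl0⟩
  have hu := d.mid_to_first h hai (v := i + 2) (by omega) (by omega)
  have hdeg := d.degree_le h hai (v := i + 2) (by omega) (by omega)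
  have e1 := arcCount_le (R := R) (u := i + 2) (p := 1) (q := l) hl
    fun t h2 h3 => hin (1, l) (by simp) t h2 h3
  have e2 := arcCount_le (R := R) (u := i + 2) (p := l + 1) (q := i + 1) (by omega)
    fun t h2 h3 => hin (l + 1, i + 1) (by simp) t h2 h3
  have e3 := arcCount_le (R := R) (u := i + 2) (p := j) (q := N) hN
    fun t h2 h3 => hin (j, N) (by simp) t h2 h3
  rw [arcCount_add (p := i + 1) (s := i + 1) _ _ (by omega) (by omega),
    arcCount_add (p := i + 1 + 1) (s := i + 2) _ _ (by omega) (by omega),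
    arcCount_self (p := i + 2), ind_of_not (h.irrefl _),
    show j - 1 = i + 3 by omega, arcCount_self (p := i + 3),
    arcCount_add (p := 1) (s := l) (q := i) _ _ (by omega) (by omega)] at hdeg
  rw [arcCount_add (s := i) (p := l + 1) _ _ (by omega) (by omega)] at e2
  rw [ind_of_not (h23 (i + 2) (by omega) (by omega))] at e1
  rw [ind_of_not fun h4 => hjN ⟨h4, hu⟩] at e3
  have := ind_le_one (R (i + 2) (l + 1))
  have := ind_le_one (R (i + 1) (i + 2))
  have := ind_le_one (R (i + 2) (i + 3))
  have := ind_le_one (R (i + 3) (i + 2))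
  have := ind_le_one (R (i + 2) j)
  have hl2 : R l (i + 2) := of_one_le_ind (by omega)
  exact h.false_of_cycle [(1, l), (i + 2, N), (N + 1, N + k + 2), (l + 1, i)] (by simp; omega)
    (by simp; omega) (by simp; omega)
    ⟨h.zero_to, hl2, hNb, hblk _ (by omega) (by omega), d.to_zero⟩

/-- No vertex inside the detour can be inserted into the paths `1, …, i` and `j, …, N + 1`. -/
lemma mid_not_insertable (d : Detour R N i j) (h : CycleConfig R k N a) (hai : a ≤ i)
    {v : ℕ} (hiv : i < v) (hvj : v < j) :
    (∀ t, 1 ≤ t → t < i → ¬(R t v ∧ R v (t + 1))) ∧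
      (∀ t, j ≤ t → t < N → ¬(R t v ∧ R v (t + 1))) ∧ ¬R N v := by
  have hi := d.one_le
  have hN := d.le_N
  have hk := d.add_le h
  have hj4 := d.le_add h
  have hB1 := h.from_last (t := 1) le_rfl (by have := h.two_le; omega)
  have hNb := h.to_first h.lt_N.le le_rfl
  have hv := d.mid_to_first h hai hiv hvj
  rcases (show j = i + k + 3 ∨ j = i + 4 ∧ k = 0 by omega) with hj | ⟨hj, hk0⟩
  · obtain ⟨hin, -, hjN, -⟩ := h.not_insertable (u := v)
      [(j, N), (N + 1, N + k + 2), (1, i)] (by simp; omega) (by omega)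
      (by simp; omega) (by simp; omega) (by simp; omega) ⟨d.zero_to, hNb, hB1, d.to_zero⟩
    exact ⟨fun t h1 h2 => hin (1, i) (by simp) t h1 h2, fun t h1 h2 => hin (j, N) (by simp) t h1 h2,
      fun h1 => hjN ⟨h1, hv⟩⟩
  obtain ⟨u, hiu, huj, huv⟩ : ∃ u, i < u ∧ u < j ∧ u ≠ v := by
    by_cases h1 : v = i + 1
    exacts [⟨i + 2, by omega⟩, ⟨i + 1, by omega⟩]
  have hu := d.mid_to_first h hai hiu huj
  have hu1 := d.not_to_one h hai hj hiu huj
  have hdeg := d.degree_le h hai hiu huj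
  have hM := arcCount_le_of_mem (R := R) (p := i + 1) (q := j - 1) (u := u) (v := v)
    (by omega) (by omega) huv (h.irrefl u)
  have hbi := ind_le_one (R i u)
  have hbj := ind_le_one (R u j)
  refine ⟨fun t h1 h2 ⟨h3, h4⟩ => ?_, fun t h1 h2 ⟨h3, h4⟩ => ?_, fun h3 => ?_⟩
  · obtain ⟨hin, -, hjN, -, i1, i2, -⟩ := h.not_insertable (u := u)
      [(j, N), (N + 1, N + k + 2), (1, t), (v, v), (t + 1, i)] (by simp; omega) (by omega)
      (by simp; omega) (by simp; omega) (by simp; omega)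
      ⟨d.zero_to, hNb, hB1, h3, h4, d.to_zero⟩
    have e1 := arcCount_le (R := R) (u := u) (p := 1) (q := t) h1
      fun t h5 h6 => hin (1, _) (by simp) t h5 h6
    have e2 := arcCount_le (R := R) (u := u) (p := t + 1) (q := i) (by omega)
      fun t h5 h6 => hin (_, i) (by simp) t h5 h6
    have e3 := arcCount_le (R := R) (u := u) (p := j) (q := N) hN
      fun t h5 h6 => hin (j, N) (by simp) t h5 h6
    rw [ind_of_not hu1] at e1
    rw [ind_of_not fun h5 => hjN ⟨h5, hu⟩] at e3
    rw [arcCount_add (p := 1) (s := t) _ _ (by omega) (by omega)] at hdeg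
    have : ind (R t u) + ind (R u v) ≤ 1 := ind_add_ind_le_one i1
    have : ind (R v u) + ind (R u (t + 1)) ≤ 1 := ind_add_ind_le_one i2
    omega
  · obtain ⟨hin, -, i1, i2, hjN, -⟩ := h.not_insertable (u := u)
      [(j, t), (v, v), (t + 1, N), (N + 1, N + k + 2), (1, i)] (by simp; omega) (by omega)
      (by simp; omega) (by simp; omega) (by simp; omega)
      ⟨d.zero_to, h3, h4, hNb, hB1, d.to_zero⟩
    have e1 := arcCount_le (R := R) (u := u) (p := 1) (q := i) hi
      fun t h5 h6 => hin (1, i) (by simp) t h5 h6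
    have e2 := arcCount_le (R := R) (u := u) (p := j) (q := t) h1
      fun t h5 h6 => hin (j, _) (by simp) t h5 h6
    have e3 := arcCount_le (R := R) (u := u) (p := t + 1) (q := N) (by omega)
      fun t h5 h6 => hin (_, N) (by simp) t h5 h6
    rw [ind_of_not hu1] at e1
    rw [ind_of_not fun h5 => hjN ⟨h5, hu⟩] at e3
    rw [arcCount_add (p := j) (s := t) _ _ (by omega) (by omega)] at hdeg
    have : ind (R t u) + ind (R u v) ≤ 1 := ind_add_ind_le_one i1
    have : ind (R v u) + ind (R u (t + 1)) ≤ 1 := ind_add_ind_le_one i2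
    omega
  · obtain ⟨hin, -, i1, i2, -⟩ := h.not_insertable (u := u)
      [(j, N), (v, v), (N + 1, N + k + 2), (1, i)] (by simp; omega) (by omega)
      (by simp; omega) (by simp; omega) (by simp; omega)
      ⟨d.zero_to, h3, hv, hB1, d.to_zero⟩
    have e1 := arcCount_le (R := R) (u := u) (p := 1) (q := i) hi
      fun t h5 h6 => hin (1, i) (by simp) t h5 h6
    have e2 := arcCount_le (R := R) (u := u) (p := j) (q := N) hN
      fun t h5 h6 => hin (j, N) (by simp) t h5 h6
    rw [ind_of_not hu1] at e1
    have : ind (R N u) + ind (R u v) ≤ 1 := ind_add_ind_le_one i1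
    rw [ind_of_not fun h5 : R v u => i2 ⟨h5, hu⟩] at hM
    omega

/-- The adjacencies of the vertices inside a detour. -/
structure Attached (R : ℕ → ℕ → Prop) (N i j v : ℕ) : Prop where
  complete : ∀ t, i < t → t < j → t ≠ v → R t v
  from_left : R i v
  to_right : R v j
  left : ∀ t, 1 ≤ t → t < i → (R t v ↔ ¬R v (t + 1))
  right : ∀ t, j ≤ t → t < N → (R t v ↔ ¬R v (t + 1))
  not_last : ¬R N v
  to_one : j < i + 4 → R v 1

lemma attached (d : Detour R N i j) (h : CycleConfig R k N a) (hai : a ≤ i) {v : ℕ}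
    (hiv : i < v) (hvj : v < j) : Attached R N i j v := by
  have hi := d.one_le
  have hN := d.le_N
  have hk := d.add_le h
  have hj4 := d.le_add h
  obtain ⟨n1, n2, n3⟩ := d.mid_not_insertable h hai hiv hvj
  have hdeg := d.degree_le h hai hiv hvj
  obtain ⟨m1, m2⟩ := arcCount_bound_of_mem (R := R) (p := i + 1) (q := j - 1) (u := v) (by omega)
    (by omega) (h.irrefl v)
  obtain ⟨l1, l2⟩ := arcCount_bound hi n1
  obtain ⟨r1, r2⟩ := arcCount_bound hN n2
  rw [ind_of_not n3] at r1 r2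
  have b1 := ind_le_one (R v 1)
  have b2 := ind_le_one (R i v)
  have b3 := ind_le_one (R v j)
  have h1 : i + j + ind (R v 1) ≤ 2 * i + k + 4 := by
    rcases (show j = i + 4 ∨ j ≤ i + 3 by omega) with hj | hj
    · rw [ind_of_not (d.not_to_one h hai hj hiv hvj)]
      omega
    · omega
  refine ⟨fun t h2 h3 h4 => (m2 (by omega) t (by omega) (by omega) h4).2, of_one_le_ind (by omega),
    of_one_le_ind (by omega), fun t h2 h3 => ⟨fun h4 h5 => n1 t h2 h3 ⟨h4, h5⟩,
      (l2 (by omega) t h2 h3).resolve_right⟩,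
    fun t h2 h3 => ⟨fun h4 h5 => n2 t h2 h3 ⟨h4, h5⟩, (r2 (by omega) t h2 h3).resolve_right⟩,
    n3, fun h2 => of_one_le_ind (by omega)⟩

lemma left_uniform (d : Detour R N i j) (h : CycleConfig R k N a) (hai : a ≤ i)
    {t v w : ℕ} (h1 : 1 ≤ t) (h2 : t ≤ i) (hiv : i < v) (hvj : v < j) (hiw : i < w)
    (hwj : w < j) (hR : R t v) : R t w := by
  have := d.le_N
  have := d.le_add h
  have av := d.attached h hai hiv hvj
  have aw := d.attached h hai hiw hwj
  rcases eq_or_ne v w with rfl | hvw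
  · exact hR
  rcases h2.eq_or_lt with rfl | h2
  · exact aw.from_left
  rw [aw.left t h1 h2]
  intro h3
  exact h.false_of_cycle [(j, N), (N + 1, N + k + 2), (1, t), (v, v), (w, w), (t + 1, i)]
    (by simp; omega) (by simp; omega) (by simp; omega)
    ⟨d.zero_to, h.to_first h.lt_N.le le_rfl, h.from_last le_rfl (by have := h.two_le; omega),
      hR, aw.complete v hiv hvj hvw, h3, d.to_zero⟩

lemma right_uniform (d : Detour R N i j) (h : CycleConfig R k N a) (hai : a ≤ i)
    {t v w : ℕ} (h1 : j ≤ t) (h2 : t ≤ N) (hiv : i < v) (hvj : v < j) (hiw : i < w)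
    (hwj : w < j) (hR : R t v) : R t w := by
  have := d.one_le
  have := d.le_add h
  have av := d.attached h hai hiv hvj
  have aw := d.attached h hai hiw hwj
  rcases eq_or_ne v w with rfl | hvw
  · exact hR
  rcases h2.eq_or_lt with rfl | h2
  · exact absurd hR av.not_last
  rw [aw.right t h1 h2]
  intro h3
  exact h.false_of_cycle [(j, t), (v, v), (w, w), (t + 1, N), (N + 1, N + k + 2), (1, i)]
    (by simp; omega) (by simp; omega) (by simp; omega)
    ⟨d.zero_to, hR, aw.complete v hiv hvj hvw, h3, h.to_first h.lt_N.le le_rfl,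
      h.from_last le_rfl (by have := h.two_le; omega), d.to_zero⟩

lemma not_right (d : Detour R N i j) (h : CycleConfig R k N a) (hai : a ≤ i)
    {t v : ℕ} (h1 : j ≤ t) (h2 : t ≤ N) (hiv : i < v) (hvj : v < j) : ¬R t v := by
  have := d.one_le
  have := d.le_add h
  have hB1 := h.from_last (t := 1) le_rfl (by have := h.two_le; omega)
  have al := d.attached h hai (v := j - 1) (by omega) (by omega)
  induction hs : N - t generalizing t with
  | zero =>
    obtain rfl : t = N := by omega
    exact (d.attached h hai hiv hvj).not_last
  | succ s ih =>
    intro h3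
    have h4 : R t (i + 1) := d.right_uniform h hai h1 h2 hiv hvj (by omega) (by omega) h3
    rcases (show t + 1 = N ∨ t + 1 < N by omega) with h5 | h5
    · exact h.false_of_cycle [(j, t), (i + 1, j - 1), (N + 1, N + k + 2), (1, i)]
        (by simp; omega) (by simp; omega) (by simp; omega)
        ⟨d.zero_to, h4, d.mid_to_first h hai (by omega) (by omega), hB1, d.to_zero⟩
    · refine ih (t := t + 1) (by omega) h5.le (by omega)
        (d.right_uniform h hai (by omega) h5.le (v := j - 1) (by omega) (by omega) hiv hvj ?_)
      rw [al.right _ (by omega) h5]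
      intro h6
      exact h.false_of_cycle [(j, t), (i + 1, j - 1), (t + 1 + 1, N), (N + 1, N + k + 2), (1, i)]
        (by simp; omega) (by simp; omega) (by simp; omega)
        ⟨d.zero_to, h4, h6, h.to_first h.lt_N.le le_rfl, hB1, d.to_zero⟩

lemma left_succ (d : Detour R N i j) (h : CycleConfig R k N a) (hai : a ≤ i)
    {t : ℕ} (h1 : 1 ≤ t) (h2 : t < i) (hR : R t (i + 1)) : R (t + 1) (i + 1) := by
  have := d.le_N
  have := d.add_le h
  have := d.le_add h
  have al := d.attached h hai (v := j - 1) (by omega) (by omega)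
  refine d.left_uniform h hai (by omega) h2 (v := j - 1) (by omega) (by omega) (by omega)
    (by omega) ?_
  rcases (show t + 1 = i ∨ t + 1 < i by omega) with h3 | h3
  · rw [h3]; exact al.from_left
  rw [al.left _ (by omega) h3]
  intro h4
  exact h.false_of_cycle [(j, N), (N + 1, N + k + 2), (1, t), (i + 1, j - 1), (t + 1 + 1, i)]
    (by simp; omega) (by simp; omega) (by simp; omega)
    ⟨d.zero_to, h.to_first h.lt_N.le le_rfl, h.from_last le_rfl (by have := h.two_le; omega),
      hR, h4, d.to_zero⟩

lemma false_of_le (d : Detour R N i j) (h : CycleConfig R k N a) (hai : a ≤ i)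
    : False := by
  classical
  have h2 := h.two_le
  have hi := d.one_le
  have hN := d.le_N
  have hk := d.add_le h
  have hj4 := d.le_add h
  have hB1 := h.from_last (t := 1) le_rfl (by omega)
  have hNb := h.to_first h.lt_N.le le_rfl
  have af := d.attached h hai (v := i + 1) (by omega) (by omega)
  have al := d.attached h hai (v := j - 1) (by omega) (by omega)
  have hex : ∃ t, 1 ≤ t ∧ R t (i + 1) := ⟨i, hi, af.from_left⟩
  obtain ⟨c, hc1, hci, hc, hmin⟩ : ∃ c, 1 ≤ c ∧ c ≤ i ∧ R c (i + 1) ∧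
      ∀ t, 1 ≤ t → t < c → ¬R t (i + 1) :=
    ⟨Nat.find hex, (Nat.find_spec hex).1, Nat.find_min' hex ⟨hi, af.from_left⟩,
      (Nat.find_spec hex).2, fun t h1 h2 h3 => Nat.find_min hex h2 ⟨h1, h3⟩⟩
  have hafter : ∀ t, c ≤ t → t ≤ i → R t (i + 1) := by
    intro t hct
    induction t, hct using Nat.le_induction with
    | base => exact fun _ => hc
    | succ t hct ih => exact fun hti => d.left_succ h hai (by omega) (by omega) (ih (by omega))
  have hbefore : ∀ t, 2 ≤ t → t ≤ c → R (j - 1) t := by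
    intro t ht htc
    have h3 : ¬R (t - 1) (j - 1) := fun h3 => hmin (t - 1) (by omega) (by omega)
      (d.left_uniform h hai (by omega) (by omega) (v := j - 1) (by omega) (by omega) (by omega)
        (by omega) h3)
    rw [al.left _ (by omega) (by omega), not_not, show t - 1 + 1 = t by omega] at h3
    exact h3
  have hac : a ≤ c := by
    by_contra hlt
    exact h.false_of_cycle [(1, c), (i + 1, N), (N + 1, N + k + 2), (c + 1, i)]
      (by simp; omega) (by simp; omega) (by simp; omega)
      ⟨h.zero_to, hc, hNb, h.from_last (by omega) (by omega), d.to_zero⟩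
  obtain ⟨u, hu, p, hp, hun, -, huc, -, hup⟩ := h.strong c (by omega) {t | ¬(c < t ∧ t < j)}
    ⟨0, by simp, by omega, by omega⟩ ⟨i + 1, by simp; omega, by omega, by omega⟩
  rw [Set.mem_ofPred_eq, not_not] at hp
  simp only [Set.mem_ofPred_eq, not_and, not_lt] at hu
  have hpi : p ≤ i := by
    by_contra hip
    rcases (show u = 0 ∨ (1 ≤ u ∧ u < c) ∨ (j ≤ u ∧ u ≤ N) ∨ N < u by omega) with
      rfl | ⟨h3, h4⟩ | ⟨h3, h4⟩ | h3
    · exact d.not_zero_to p (by omega) hp.2 hup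
    · exact hmin u h3 h4 (d.left_uniform h hai h3 (by omega) (v := p) (by omega) hp.2 (by omega)
        (by omega) hup)
    · exact d.not_right h hai h3 h4 (by omega) hp.2 hup
    · have := (h.from_block u p h3 hun (by omega) (by omega)).1 hup
      omega
  have h0p : ¬R 0 p := fun h0 =>
    h.false_of_cycle [(p, i), (N + 1, N + k + 2), (1, p - 1), (i + 1, N)]
      (by simp; omega) (by simp; omega) (by simp; omega)
      ⟨h0, h.to_first hai (by omega), hB1, hafter _ (by omega) (by omega), h.to_zero⟩
  have hp0 : ¬R (p - 1) 0 := fun h0 => by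
    rcases (show u = 0 ∨ (1 ≤ u ∧ u < c) ∨ (j ≤ u ∧ u < N) ∨ u = N ∨ N < u by omega) with
      rfl | ⟨h3, h4⟩ | ⟨h3, h4⟩ | rfl | h3
    · exact h0p hup
    · exact h.false_of_cycle [(j, N), (N + 1, N + k + 2), (1, u), (p, j - 1), (u + 1, p - 1)]
        (by simp; omega) (by simp; omega) (by simp; omega)
        ⟨d.zero_to, hNb, hB1, hup, hbefore _ (by omega) (by omega), h0⟩
    · have h5 := d.not_right h hai h3 h4.le (v := j - 1) (by omega) (by omega)
      rw [al.right _ h3 h4, not_not] at h5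
      exact h.false_of_cycle [(j, u), (p, j - 1), (u + 1, N), (N + 1, N + k + 2), (1, p - 1)]
        (by simp; omega) (by simp; omega) (by simp; omega)
        ⟨d.zero_to, hup, h5, hNb, hB1, h0⟩
    · exact h.false_of_cycle [(j, u), (p, j - 1), (u + 1, u + k + 2), (1, p - 1)]
        (by simp; omega) (by simp; omega) (by simp; omega)
        ⟨d.zero_to, hup, d.mid_to_first h hai (by omega) (by omega), hB1, h0⟩
    · have := (h.from_block u p h3 hun (by omega) (by omega)).1 hup
      omega
  have gp : Gap R (p - 1) := ⟨hp0, by rwa [show p - 1 + 1 = p by omega]⟩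
  have gi := d.gap (t := i + 1) (by omega) (by omega)
  rcases (show j = i + 4 ∨ j < i + 4 by omega) with hj | hj
  · exact h.not_three_gaps (by omega) (by omega) (by omega) (by omega) gp gi
      (d.gap (t := i + 2) (by omega) (by omega))
  have hl0 : ∀ l, 1 ≤ l → l < a → ¬R l 0 := fun l h3 h4 h5 =>
    h.false_of_cycle [(j, N), (N + 1, N + k + 2), (l + 1, j - 1), (1, l)]
      (by simp; omega) (by simp; omega) (by simp; omega)
      ⟨d.zero_to, hNb, h.from_last (by omega) (by omega), al.to_one hj, h5⟩
  obtain ⟨l, r, h3, h4, h5, h6, h7 | h7⟩ := h.exists_jump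
  · exact h.not_three_gaps h3 (by omega) (by omega) (by omega)
      ⟨hl0 l h3 h4, h.jump_not_succ h3 h4 h5 h6 h7⟩ gp gi
  · exact hl0 l h3 h4 h7.1

lemma reverse (d : Detour R N i j) :
    Detour (fun s t => R (flip N t) (flip N s)) N (N + 1 - j) (N + 1 - i) := by
  have h1 := d.one_le
  have h2 := d.add_two_le
  have h3 := d.le_N
  refine ⟨by omega, by omega, by omega, ?_, ?_, fun t h4 h5 => ?_, fun t h4 h5 => ?_⟩
  · rw [flip_zero, flip_of_mem (by omega) (by omega), show N + 1 - (N + 1 - j) = j by omega]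
    exact d.zero_to
  · rw [flip_zero, flip_of_mem (by omega) (by omega), show N + 1 - (N + 1 - i) = i by omega]
    exact d.to_zero
  · rw [flip_zero, flip_of_mem (by omega) (by omega)]
    exact d.not_zero_to _ (by omega) (by omega)
  · rw [flip_zero, flip_of_mem (by omega) (by omega)]
    exact d.not_to_zero _ (by omega) (by omega)

end Detour

theorem elim (h : CycleConfig R k N a) : False := by
  obtain ⟨i, j, d⟩ := h.exists_minimal_detour
  have := d.le_N
  rcases d.le_or_le h with h1 | h1
  · exact d.false_of_le h h1
  · exact d.reverse.false_of_le h.reverse (by omega)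

end CycleConfig

/-- A digraph on `[0, n)` in which `0, 1, …, N` is a non-Hamiltonian cycle that is longest among
the cycles through `0`, satisfying the conditions on connectivity, degrees and cycle length. -/
structure LongestCycle (R : ℕ → ℕ → Prop) (k n N : ℕ) : Prop where
  degree_ge : ∀ u, 1 ≤ u → u < n → n + k ≤ arcCount R u 0 (n - 1)
  degree_zero_ge : n - k - 4 ≤ arcCount R 0 0 (n - 1)
  irrefl : ∀ u, ¬R u u
  path : ∀ t, t < N → R t (t + 1)
  to_zero : R N 0
  strong : ∀ e, e < n → ∀ S : Set ℕ, (∃ u ∈ S, u < n ∧ u ≠ e) → (∃ v ∉ S, v < n ∧ v ≠ e) →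
    ∃ u ∈ S, ∃ v ∉ S, u < n ∧ v < n ∧ u ≠ e ∧ v ≠ e ∧ R u v
  bound : CycleBound R n N
  one_le : 1 ≤ N
  lt : N + 1 < n
  le_add : n - k - 2 ≤ N + 1

namespace LongestCycle

variable {R : ℕ → ℕ → Prop} {k n N : ℕ}

lemma false_of_cycle (h : LongestCycle R k n N) (Is : List (ℕ × ℕ))
    (hlen : N < (Is.map fun x => x.2 + 1 - x.1).sum)
    (hv : ∀ x ∈ Is, 1 ≤ x.1 ∧ x.1 ≤ x.2 ∧ x.2 < n)
    (hp : ∀ x ∈ Is, x.2 ≤ N ∨ ∀ t, x.1 ≤ t → t < x.2 → R t (t + 1))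
    (hd : Is.Pairwise fun x y => x.2 < y.1 ∨ y.2 < x.1) (hj : Junctions R 0 Is) : False := by
  refine absurd (h.bound.sum_le (Is := Is) ⟨hv, fun x hx t h1 h2 => ?_, hd,
    isChain_iff_junctions.2 hj⟩) (by omega)
  rcases hp x hx with h3 | h3
  exacts [h.path t (by omega), h3 t h1 h2]

lemma not_insertable (h : LongestCycle R k n N) {u : ℕ} (hNu : N < u) (hun : u < n) :
    (∀ t, t < N → ¬(R t u ∧ R u (t + 1))) ∧ ¬(R N u ∧ R u 0) := by
  have hN := h.one_le
  obtain ⟨h1, h2⟩ := h.bound.not_insertable (Is := [(1, N)]) (u := u)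
    ⟨by simp; omega, fun x hx t h1 h2 => h.path t (by simp at hx; subst hx; exact h2), by simp,
      isChain_iff_junctions.2 ⟨h.path 0 (by omega), h.to_zero⟩⟩ (by simp) (by omega) (by simp; omega)
  rw [isChain_iff_junctions (S := fun s t => ¬(R s u ∧ R u t))] at h2
  refine ⟨fun t ht => ?_, h2.2⟩
  rcases Nat.eq_zero_or_pos t with rfl | ht0
  exacts [h2.1, h1 (1, N) (by simp) t ht0 ht]

lemma card_eq_and_attached (h : LongestCycle R k n N) :
    n = N + k + 3 ∧ ∀ u, N < u → u < n → (∀ t, N < t → t < n → t ≠ u → R u t) ∧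
      (∀ t, t < N → R t u ∨ R u (t + 1)) ∧ (R N u ∨ R u 0) := by
  have hlt := h.lt
  have hle := h.le_add
  have key : ∀ u, N < u → u < n → n = N + k + 3 ∧ (∀ t, N < t → t < n → t ≠ u → R u t) ∧
      (∀ t, t < N → R t u ∨ R u (t + 1)) ∧ (R N u ∨ R u 0) := by
    intro u hNu hun
    have hdeg := h.degree_ge u (by omega) hun
    rw [arcCount_add (s := N) _ _ (by omega) (by omega)] at hdeg
    obtain ⟨n1, n2⟩ := h.not_insertable hNu hun
    obtain ⟨c1, c2⟩ := arcCount_bound (R := R) (u := u) (p := 0) (q := N) (by omega)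
      fun t _ h2 => n1 t h2
    obtain ⟨m1, m2⟩ := arcCount_bound_of_mem (R := R) (u := u) (p := N + 1) (q := n - 1)
      (by omega) (by omega) (h.irrefl u)
    have b := ind_add_ind_le_one n2
    refine ⟨by omega, fun t h1 h2 h3 => (m2 (by omega) t (by omega) (by omega) h3).1,
      fun t h1 => c2 (by omega) t (by omega) h1, ?_⟩
    by_contra hn
    rw [not_or] at hn
    rw [ind_of_not hn.1, ind_of_not hn.2] at c1
    omega
  exact ⟨(key (n - 1) (by omega) (by omega)).1, fun u h1 h2 => (key u h1 h2).2⟩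

lemma not_insertable_pair (h : LongestCycle R k n N) {u w : ℕ} (hNu : N < u) (hun : u < n)
    (hNw : N < w) (hwn : w < n) :
    (∀ t, t < N → ¬(R t u ∧ R w (t + 1))) ∧ ¬(R N u ∧ R w 0) := by
  have hN := h.one_le
  have h01 := h.path 0 (by omega)
  rcases eq_or_ne u w with rfl | huw
  · exact h.not_insertable hNu hun
  have huw' := (h.card_eq_and_attached.2 u hNu hun).1 w hNw hwn huw.symm
  have hself : ∀ s, ∀ t, s ≤ t → t < s → R t (t + 1) := fun s t h1 h2 => by omega
  refine ⟨fun t ht ⟨h1, h2⟩ => ?_, fun ⟨h1, h2⟩ => ?_⟩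
  · rcases Nat.eq_zero_or_pos t with rfl | ht0
    · exact h.false_of_cycle [(u, u), (w, w), (1, N)] (by simp; omega) (by simp; omega)
        (by simpa using ⟨Or.inr (hself u), Or.inr (hself w)⟩) (by simp; omega)
        ⟨h1, huw', h2, h.to_zero⟩
    · exact h.false_of_cycle [(1, t), (u, u), (w, w), (t + 1, N)] (by simp; omega) (by simp; omega)
        (by simpa using ⟨Or.inl ht.le, Or.inr (hself u), Or.inr (hself w)⟩) (by simp; omega)
        ⟨h01, h1, huw', h2, h.to_zero⟩
  · exact h.false_of_cycle [(1, N), (u, u), (w, w)] (by simp) (by simp; omega)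
      (by simpa using ⟨Or.inr (hself u), Or.inr (hself w)⟩) (by simp; omega)
      ⟨h01, h1, huw', h2⟩

lemma to_block_iff (h : LongestCycle R k n N) {b t : ℕ} (hNb : N < b) (hbn : b < n) (ht : t ≤ N) :
    R t b ↔ R t (N + 1) := by
  have hlt := h.lt
  have key : ∀ u w, N < u → u < n → N < w → w < n → R t u → R t w := by
    intro u w h1 h2 h3 h4 h5
    obtain ⟨n1, n2⟩ := h.not_insertable_pair h1 h2 h3 h4
    obtain ⟨-, c1, c2⟩ := h.card_eq_and_attached.2 w h3 h4
    rcases ht.eq_or_lt with rfl | ht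
    exacts [c2.resolve_right fun h6 => n2 ⟨h5, h6⟩,
      (c1 t ht).resolve_right fun h6 => n1 t ht ⟨h5, h6⟩]
  exact ⟨key b (N + 1) hNb hbn (by omega) hlt, key (N + 1) b (by omega) hlt hNb hbn⟩

lemma from_block_succ_iff (h : LongestCycle R k n N) {b t : ℕ} (hNb : N < b) (hbn : b < n)
    (ht : t < N) : R b (t + 1) ↔ ¬R t (N + 1) := by
  rw [← h.to_block_iff hNb hbn ht.le]
  exact ⟨fun h1 h2 => (h.not_insertable hNb hbn).1 t ht ⟨h2, h1⟩,
    ((h.card_eq_and_attached.2 b hNb hbn).2.1 t ht).resolve_left⟩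

lemma from_block_zero_iff (h : LongestCycle R k n N) {b : ℕ} (hNb : N < b) (hbn : b < n) :
    R b 0 ↔ ¬R N (N + 1) := by
  rw [← h.to_block_iff hNb hbn le_rfl]
  exact ⟨fun h1 h2 => (h.not_insertable hNb hbn).2 ⟨h2, h1⟩,
    (h.card_eq_and_attached.2 b hNb hbn).2.2.resolve_left⟩

lemma to_block_succ (h : LongestCycle R k n N) {t : ℕ} (ht : t < N) (hR : R t (N + 1)) :
    R (t + 1) (N + 1) := by
  have hlt := h.lt
  have hcard := h.card_eq_and_attached.1
  have h01 := h.path 0 (by omega)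
  have hB : ∀ s, N + 1 ≤ s → s < n - 1 → R s (s + 1) := fun s h1 h2 =>
    (h.card_eq_and_attached.2 s (by omega) (by omega)).1 _ (by omega) (by omega) (by omega)
  by_contra hn
  rcases (show t + 1 = N ∨ t + 1 < N by omega) with h1 | h1
  · rw [h1, ← h.from_block_zero_iff (b := n - 1) (by omega) (by omega)] at hn
    rcases Nat.eq_zero_or_pos t with rfl | ht0
    · exact h.false_of_cycle [(N + 1, n - 1)] (by simp; omega) (by simp; omega)
        (by simpa using Or.inr hB) (by simp) ⟨hR, hn⟩
    · exact h.false_of_cycle [(1, t), (N + 1, n - 1)] (by simp; omega) (by simp; omega)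
        (by simpa using ⟨Or.inl ht.le, Or.inr hB⟩) (by simp; omega) ⟨h01, hR, hn⟩
  · rw [← h.from_block_succ_iff (b := n - 1) (by omega) (by omega) h1] at hn
    rcases Nat.eq_zero_or_pos t with rfl | ht0
    · exact h.false_of_cycle [(N + 1, n - 1), (0 + 1 + 1, N)] (by simp; omega) (by simp; omega)
        (by simpa using Or.inr hB) (by simp) ⟨hR, hn, h.to_zero⟩
    · exact h.false_of_cycle [(1, t), (N + 1, n - 1), (t + 1 + 1, N)] (by simp; omega)
        (by simp; omega) (by simpa using ⟨Or.inl ht.le, Or.inr hB⟩) (by simp; omega)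
        ⟨h01, hR, hn, h.to_zero⟩

lemma to_block_mono (h : LongestCycle R k n N) {s t : ℕ} (hst : s ≤ t) (ht : t ≤ N)
    (hR : R s (N + 1)) : R t (N + 1) := by
  induction t, hst using Nat.le_induction with
  | base => exact hR
  | succ t _ ih => exact h.to_block_succ (by omega) (ih (by omega))

theorem elim (h : LongestCycle R k n N) : False := by
  classical
  have hN := h.one_le
  have hlt := h.lt
  obtain ⟨hcard, hatt⟩ := h.card_eq_and_attached
  have h0 : ¬R 0 (N + 1) := by
    intro h0
    obtain ⟨u, hu, v, hv, hun, hvn, -, -, huv⟩ := h.strong 1 (by omega) {t | N < t}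
      ⟨N + 1, by simp, by omega, by omega⟩ ⟨0, by simp, by omega, by omega⟩
    simp only [Set.mem_ofPred_eq, not_lt] at hu hv
    rcases v with _ | v
    · exact (h.from_block_zero_iff hu hun).1 huv (h.to_block_mono (by omega) le_rfl h0)
    · exact (h.from_block_succ_iff hu hun hv).1 huv (h.to_block_mono (by omega) (by omega) h0)
  have hNR : R N (N + 1) := by
    by_contra hn
    obtain ⟨u, hu, v, hv, hun, hvn, -, -, huv⟩ := h.strong 1 (by omega) {t | t ≤ N}
      ⟨0, by simp, by omega, by omega⟩ ⟨N + 1, by simp, by omega, by omega⟩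
    simp only [Set.mem_ofPred_eq, not_le] at hu hv
    exact hn (h.to_block_mono hu le_rfl ((h.to_block_iff hv hvn hu).1 huv))
  have hex : ∃ t, R t (N + 1) := ⟨N, hNR⟩
  obtain ⟨a, haN, ha, hmin⟩ : ∃ a, a ≤ N ∧ R a (N + 1) ∧ ∀ t, t < a → ¬R t (N + 1) :=
    ⟨Nat.find hex, Nat.find_min' hex hNR, Nat.find_spec hex, fun t => Nat.find_min hex⟩
  have hto : ∀ t, t ≤ N → (R t (N + 1) ↔ a ≤ t) := fun t ht =>
    ⟨fun h1 => not_lt.1 fun h2 => hmin t h2 h1, fun h1 => h.to_block_mono h1 ht ha⟩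
  have hfrom : ∀ b t, N < b → b < n → 1 ≤ t → t ≤ N → (R b t ↔ t ≤ a) := by
    intro b t h1 h2 h3 h4
    obtain ⟨t, rfl⟩ := Nat.exists_eq_add_of_le' h3
    rw [h.from_block_succ_iff h1 h2 h4, hto t (by omega)]
    omega
  have ha1 : a ≠ 0 := fun h1 => h0 (h1 ▸ ha)
  have ha2 : a ≠ 1 := by
    rintro rfl
    obtain ⟨u, hu, v, hv, hun, hvn, -, hv1, huv⟩ := h.strong 1 (by omega) {t | N < t}
      ⟨N + 1, by simp, by omega, by omega⟩ ⟨0, by simp, by omega, by omega⟩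
    simp only [Set.mem_ofPred_eq, not_lt] at hu hv
    rcases Nat.eq_zero_or_pos v with rfl | hv0
    · exact (h.from_block_zero_iff hu hun).1 huv hNR
    · have := (hfrom u v hu hun hv0 hv).1 huv
      omega
  have haN' : a ≠ N := by
    rintro rfl
    obtain ⟨u, hu, v, hv, hun, hvn, hua, -, huv⟩ := h.strong a (by omega) {t | t ≤ a}
      ⟨0, by simp, by omega, by omega⟩ ⟨a + 1, by simp, by omega, by omega⟩
    simp only [Set.mem_ofPred_eq, not_le] at hu hv
    have := (hto u hu).1 ((h.to_block_iff hv hvn hu).1 huv)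
    omega
  subst hcard
  refine CycleConfig.elim (R := R) (k := k) (N := N) (a := a) ⟨fun u h1 h2 => ?_, ?_, h.irrefl,
    fun t _ h2 => h.path t h2, h.path 0 (by omega), h.to_zero, h.strong, h.bound, by omega,
    by omega, fun b t h1 h2 _ h4 => (h.to_block_iff h1 h2 h4).trans (hto t h4), hfrom,
    fun b h1 h2 h3 => (h.from_block_zero_iff h1 h2).1 h3 hNR,
    fun b h1 h2 h3 => h0 ((h.to_block_iff h1 h2 (by omega)).1 h3),
    fun b c h1 h2 h3 h4 h5 => (hatt b h1 h2).1 c h3 h4 h5.symm⟩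
  · have := h.degree_ge u h1 h2
    rw [show N + k + 3 - 1 = N + k + 2 by omega] at this
    omega
  · have := h.degree_zero_ge
    rw [show N + k + 3 - 1 = N + k + 2 by omega] at this
    omega

end LongestCycle

section Enumeration

variable {V : Type*}

/-- An enumeration of the vertices along a cycle through `z` with `N` further vertices. -/
structure CycleEnum (A : V → V → Prop) (n N : ℕ) (y : ℕ → V) : Prop where
  injOn : ∀ s t, s < n → t < n → y s = y t → s = t
  surj : ∀ v, ∃ t < n, y t = v
  path : ∀ t < N, A (y t) (y (t + 1))
  closed : A (y N) (y 0)

/-- `L` lists the further vertices of a cycle through `z`. -/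
def IsCycleAt (A : V → V → Prop) (z : V) (L : List V) : Prop :=
  (z :: L).Nodup ∧ List.IsChain A (z :: (L ++ [z]))

lemma IsCycleAt.exists_enum [Fintype V] {A : V → V → Prop} {z : V} {L : List V}
    (h : IsCycleAt A z L) : ∃ y, CycleEnum A (Fintype.card V) L.length y ∧ y 0 = z := by
  classical
  obtain ⟨hnd, hc⟩ := h
  let F := (z :: L) ++ (Finset.univ \ (z :: L).toFinset).toList
  have hF : F.Nodup := hnd.append (Finset.nodup_toList _) fun v h1 h2 => by
    rw [Finset.mem_toList, Finset.mem_sdiff, List.mem_toFinset] at h2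
    exact h2.2 h1
  have hmem : ∀ v, v ∈ F := fun v => by
    by_cases hv : v ∈ z :: L
    · exact List.mem_append_left _ hv
    · exact List.mem_append_right _ (by
        rw [Finset.mem_toList, Finset.mem_sdiff, List.mem_toFinset]
        exact ⟨Finset.mem_univ v, hv⟩)
  have hlen : F.length = Fintype.card V := by
    rw [← List.toFinset_card_of_nodup hF, ← Finset.card_univ]
    congr 1
    ext v
    simp [hmem v]
  have hget : ∀ t, t ≤ L.length → F.getD t z = ((z :: L) ++ [z]).getD t z := fun t ht => by
    rw [List.getD_append _ _ _ _ (by simp; omega), List.getD_append _ _ _ _ (by simp; omega)]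
  have hchain : ∀ t, t ≤ L.length →
      A (((z :: L) ++ [z]).getD t z) (((z :: L) ++ [z]).getD (t + 1) z) := fun t ht => by
    rw [List.getD_eq_getElem _ _ (by simp; omega), List.getD_eq_getElem _ _ (by simp; omega)]
    exact List.isChain_iff_getElem.1 hc t (by simp; omega)
  refine ⟨fun t => F.getD t z, ⟨fun s t hs ht hst => ?_, fun v => ?_, fun t ht => ?_, ?_⟩, rfl⟩
  · rw [← hlen] at hs ht
    rw [List.getD_eq_getElem _ _ hs, List.getD_eq_getElem _ _ ht] at hst
    exact (hF.getElem_inj_iff).1 hst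
  · obtain ⟨t, ht, rfl⟩ := List.mem_iff_getElem.1 (hmem v)
    exact ⟨t, hlen ▸ ht, List.getD_eq_getElem _ _ ht⟩
  · rw [hget t ht.le, hget (t + 1) ht]
    exact hchain t ht.le
  · rw [hget _ le_rfl]
    have := hchain _ le_rfl
    rwa [List.getD_append_right (n := L.length + 1) _ _ _ (by simp), List.length_cons, Nat.sub_self] at this

lemma IsCycle.exists_isCycleAt {A : V → V → Prop} {m : ℕ} {c : Fin m → V} (h : IsCycle A c)
    (i : Fin m) : ∃ L, IsCycleAt A (c i) L ∧ L.length + 1 = m := by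
  obtain ⟨hm, hinj, hA⟩ := h
  let f : ℕ → V := fun j => c ⟨(i + j) % m, Nat.mod_lt _ i.pos⟩
  have hf0 : f 0 = c i := congrArg c (Fin.ext (Nat.mod_eq_of_lt i.isLt))
  have hfm : f m = c i := congrArg c (Fin.ext (by simp [Nat.mod_eq_of_lt i.isLt]))
  have hstep : ∀ j, A (f j) (f (j + 1)) := fun j => by
    have := hA ⟨(i + j) % m, Nat.mod_lt _ i.pos⟩
    simpa only [Nat.mod_add_mod, add_assoc] using this
  have hinj' : ∀ s t, s < m → t < m → f s = f t → s = t := fun s t hs ht hst => by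
    have h1 : (i + s) % m = (i + t) % m := Fin.mk.inj (hinj hst)
    exact Nat.ModEq.eq_of_lt_of_lt (Nat.ModEq.add_left_cancel' (i : ℕ) h1) hs ht
  obtain ⟨m, rfl⟩ := Nat.exists_eq_add_of_le' i.pos
  have e1 : c i :: (List.range' 1 m).map f = (List.range' 0 (m + 1)).map f := by
    rw [List.range'_succ, List.map_cons, hf0]
  have e2 : c i :: ((List.range' 1 m).map f ++ [c i]) = (List.range' 0 (m + 1 + 1)).map f := by
    rw [← List.cons_append, e1, List.range'_concat (n := m + 1), List.map_append]
    simp [hfm]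
  refine ⟨(List.range' 1 m).map f, ⟨?_, ?_⟩, by simp⟩
  · rw [e1]
    refine List.Nodup.map_on (fun s hs t ht => ?_) List.nodup_range'
    rw [List.mem_range'_1] at hs ht
    exact hinj' s t (by omega) (by omega)
  · rw [e2, List.isChain_map, List.isChain_iff_getElem]
    intro j hj
    simpa using hstep j

lemma CycleEnum.isHamiltonian [Fintype V] {A : V → V → Prop} {N : ℕ} {y : ℕ → V}
    (h : CycleEnum A (Fintype.card V) N y) (hN : N + 1 = Fintype.card V) (hN1 : 1 ≤ N) :
    IsHamiltonian A := by
  refine ⟨fun i => y i, ⟨by omega, fun s t hst => Fin.ext (h.injOn s t s.isLt t.isLt hst),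
    fun i => ?_⟩, fun v => ?_⟩
  · rcases (show i.val < N ∨ i.val = N by omega) with hi | hi
    · simpa [Nat.mod_eq_of_lt (show i.val + 1 < Fintype.card V by omega)] using h.path i hi
    · simpa [hi, hN] using h.closed
  · obtain ⟨t, ht, rfl⟩ := h.surj v
    exact ⟨⟨t, ht⟩, rfl⟩

lemma CycleEnum.ncard_eq [Fintype V] {A : V → V → Prop} {n N : ℕ} {y : ℕ → V}
    (h : CycleEnum A n N y) (hn : 0 < n) (P : V → Prop) :
    {v | P v}.ncard = ∑ t ∈ Finset.Ico 0 (n - 1 + 1), ind (P (y t)) := by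
  classical
  rw [Set.ncard_eq_toFinset_card', Set.toFinset_ofPred, Finset.card_filter]
  symm
  refine Finset.sum_bij (fun t _ => y t) (fun _ _ => Finset.mem_univ _) (fun s hs t ht => ?_)
    (fun v _ => ?_) fun t _ => ?_
  · rw [Finset.mem_Ico] at hs ht
    exact h.injOn s t (by omega) (by omega)
  · obtain ⟨t, ht, rfl⟩ := h.surj v
    exact ⟨t, by simp; omega, rfl⟩
  · unfold ind
    congr

lemma CycleEnum.degree_eq [Fintype V] {A : V → V → Prop} {n N : ℕ} {y : ℕ → V}
    (h : CycleEnum A n N y) (hn : 0 < n) (u : ℕ) :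
    degree A (y u) = arcCount (fun s t => A (y s) (y t)) u 0 (n - 1) := by
  rw [degree, h.ncard_eq hn (A (y u)), h.ncard_eq hn (A · (y u)), ← Finset.sum_add_distrib]
  rfl

lemma Relation.ReflTransGen.exists_step {r : V → V → Prop} {P : V → Prop} {x y : V}
    (h : Relation.ReflTransGen r x y) (hx : P x) (hy : ¬P y) : ∃ u v, P u ∧ ¬P v ∧ r u v := by
  induction h with
  | refl => exact absurd hx hy
  | @tail b c _ hbc ih =>
    by_cases hb : P b
    exacts [⟨b, c, hb, hy, hbc⟩, ih hb]

lemma CycleEnum.strong [Fintype V] {A : V → V → Prop} {n N : ℕ} {y : ℕ → V}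
    (h : CycleEnum A n N y) (hA : IsKStrong A 2) {e : ℕ} (he : e < n) {S : Set ℕ}
    (hS : ∃ u ∈ S, u < n ∧ u ≠ e) (hS' : ∃ v ∉ S, v < n ∧ v ≠ e) :
    ∃ u ∈ S, ∃ v ∉ S, u < n ∧ v < n ∧ u ≠ e ∧ v ≠ e ∧ A (y u) (y v) := by
  obtain ⟨u, huS, hun, hue⟩ := hS
  obtain ⟨v, hvS, hvn, hve⟩ := hS'
  have hreach := hA.2 {y e} (by simp) (y u) (fun h1 => hue (h.injOn u e hun he h1)) (y v)
    (fun h1 => hve (h.injOn v e hvn he h1))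
  obtain ⟨a, b, ⟨s, hsS, hsn, rfl⟩, hb, ha, hb', hab⟩ := hreach.exists_step
    (P := fun w => ∃ s ∈ S, s < n ∧ y s = w) ⟨u, huS, hun, rfl⟩ fun ⟨s, hsS, hsn, hs⟩ =>
      hvS (h.injOn s v hsn hvn hs ▸ hsS)
  obtain ⟨t, htn, rfl⟩ := h.surj b
  refine ⟨s, hsS, t, fun htS => hb ⟨t, htS, htn, rfl⟩, hsn, htn, ?_, ?_, hab⟩
  · rintro rfl; exact ha rfl
  · rintro rfl; exact hb' rfl

end Enumeration

/-- Let `D` be a 2-strong digraph of order `n ≥ 3` such that `n - 1` of its vertices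
have degree at least `n + k` and the remaining vertex `z` has degree at least
`n - k - 4`, where `k ≥ 0` is an integer.  If `D` contains a directed cycle of length
at least `n - k - 2` passing through `z`, then `D` is Hamiltonian. -/
theorem statement0 {V : Type*} [Fintype V] [DecidableEq V] (A : V → V → Prop)
    (hirr : Irreflexive A)
    (k n : ℕ) (hn3 : 3 ≤ n) (hcard : Fintype.card V = n)
    (h2strong : IsKStrong A 2)
    (z : V)
    (hdeg : ∀ v : V, v ≠ z → n + k ≤ degree A v)
    (hdegz : n - k - 4 ≤ degree A z)
    (hcyc : ∃ (m : ℕ) (c : Fin m → V), n - k - 2 ≤ m ∧ IsCycle A c ∧ z ∈ Set.range c) :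
    IsHamiltonian A := by
  classical
  obtain ⟨m, c, hm, hc, i, rfl⟩ := hcyc
  obtain ⟨L₀, hL₀, rfl⟩ := hc.exists_isCycleAt i
  let P : ℕ → Prop := fun l => ∃ L, IsCycleAt A (c i) L ∧ L.length = l
  have hP : ∀ L, IsCycleAt A (c i) L → L.length ≤ n := fun L hL => by
    have := hL.1.length_le_card
    simp only [List.length_cons] at this
    omega
  obtain ⟨L, hL, hLN⟩ := Nat.findGreatest_spec (P := P) (hP L₀ hL₀) ⟨L₀, hL₀, rfl⟩
  have hmax : ∀ L', IsCycleAt A (c i) L' → L'.length ≤ L.length := fun L' hL' =>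
    hLN ▸ Nat.le_findGreatest (P := P) (hP L' hL') ⟨L', hL', rfl⟩
  have hL1 := hc.1
  have hL2 := hmax L₀ hL₀
  have hL3 := hL.1.length_le_card
  rw [List.length_cons] at hL3
  obtain ⟨y, hy, hy0⟩ := hL.exists_enum
  by_contra hham
  have hne : L.length + 1 ≠ Fintype.card V := fun h1 =>
    hham (hy.isHamiltonian h1 (by omega))
  rw [hcard] at hy hL3 hne
  refine LongestCycle.elim (R := fun s t => A (y s) (y t)) (k := k) (n := n) (N := L.length)
    ⟨fun u h1 h2 => ?_, ?_, fun u => hirr (y u), fun t h1 => hy.path t h1, hy.closed,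
      fun e he S => hy.strong h2strong he, fun l h1 h2 h3 => ?_, by omega, by omega, by omega⟩
  · rw [← hy.degree_eq (by omega)]
    refine hdeg _ fun h3 => ?_
    have := hy.injOn u 0 h2 (by omega) (h3.trans hy0.symm)
    omega
  · rw [← hy.degree_eq (by omega), hy0]
    exact hdegz
  · have h4 : IsCycleAt A (c i) (l.map y) := by
      constructor
      · rw [← hy0, ← List.map_cons]
        refine List.Nodup.map_on (fun s hs t ht => ?_)
          (List.nodup_cons.2 ⟨fun h4 => by have := (h2 0 h4).1; omega, h1⟩)
        have hlt : ∀ t ∈ 0 :: l, t < n := fun t ht => by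
          rcases List.mem_cons.1 ht with rfl | ht
          exacts [by omega, (h2 t ht).2]
        exact hy.injOn s t (hlt s hs) (hlt t ht)
      · have := (List.isChain_map (R := A) y).2 h3
        simpa [hy0] using this
    simpa using hmax _ h4
end

section
/- Let D be a non-Hamiltonian 2-strong digraph of order n such that n−1 of its vertices have degree at least n+1 and the remaining vertex z has degree at most n−2. Suppose that C = x_1 x_2 … x_m z x_1, with 2 ≤ m ≤ n−3, is a longest directed cycle through z in D, and that the set Y = V(D) \ V(C) contains two distinct vertices y_1 and y_2 that are mutually reachable in the induced subdigraph D⟨Y⟩ and satisfy d(y_i, {x_1, x_2, …, x_m}) = m+1 for each i ∈ {1,2}. Then n ≥ 7 and d(z) ≤ m−2. -/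
/-- `Walk R u v l`: the list `l` is the vertex sequence of an `R`-walk from `u` to `v`. -/
inductive Walk {α : Type*} (R : α → α → Prop) : α → α → List α → Prop
  | single (u : α) : Walk R u u [u]
  | cons {u w v : α} {l : List α} : R u w → Walk R w v l → Walk R u v (u :: l)

namespace Walk

variable {α β : Type*} {R : α → α → Prop} {u v u' v' : α} {l l' : List α}

theorem append (h : Walk R u v l) (e : R v u') (h' : Walk R u' v' l') :
    Walk R u v' (l ++ l') := by
  induction h with
  | single u => exact cons e h'
  | cons r _ ih => exact cons r (ih e)

theorem reverse (h : Walk R u v l) : Walk (fun a b => R b a) v u l.reverse := by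
  induction h with
  | single u => exact single u
  | cons r _ ih =>
    rw [List.reverse_cons]
    exact ih.append r (single _)

theorem map {g : β → α} {i j : β} {t : List β} (h : Walk (fun a b => R (g a) (g b)) i j t) :
    Walk R (g i) (g j) (t.map g) := by
  induction h with
  | single u => exact single _
  | cons r _ ih => exact cons r ih

theorem exists_eq_cons (h : Walk R u v l) : ∃ t, l = u :: t := by
  cases h <;> exact ⟨_, rfl⟩

theorem length_pos (h : Walk R u v l) : 0 < l.length := by
  cases h <;> simp

theorem getElem_zero (h : Walk R u v l) : l[0]'h.length_pos = u := by
  cases h <;> rfl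

theorem getElem_last (h : Walk R u v l) :
    l[l.length - 1]'(Nat.sub_lt h.length_pos one_pos) = v := by
  induction h with
  | single u => rfl
  | cons r h ih =>
    have := h.length_pos
    refine Eq.trans ?_ ih
    simp [List.getElem_cons, this.ne']

theorem getElem_succ (h : Walk R u v l) :
    ∀ (i : ℕ) (hi : i + 1 < l.length), R l[i] l[i + 1] := by
  induction h with
  | single u => intro i hi; simp at hi
  | cons r h ih =>
    intro i hi
    cases i with
    | zero => simpa [h.getElem_zero] using r
    | succ i => simpa using ih i (by simpa using hi)

theorem exists_suffix (h : Walk R u v l) {w : α} (hw : w ∈ l) :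
    ∃ t, Walk R w v t ∧ t <:+ l := by
  induction h with
  | single u =>
    obtain rfl : w = u := by simpa using hw
    exact ⟨_, single _, List.suffix_rfl⟩
  | @cons u x v l r h ih =>
    rcases List.mem_cons.1 hw with rfl | hw
    · exact ⟨_, cons r h, List.suffix_rfl⟩
    · obtain ⟨t, ht, hs⟩ := ih hw
      exact ⟨t, ht, hs.trans (List.suffix_cons _ _)⟩

/-- Either a vertex can be inserted in a walk, or the number of arcs between it and the walk
is bounded by the length of the walk, up to a correction at both ends. -/
theorem insert_or_count [DecidableRel R] (h : Walk R u v l) (c : α) :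
    (∃ l', Walk R u v l' ∧ l'.Perm (c :: l)) ∨
      l.countP (fun a => R a c) + l.countP (fun a => R c a) + 1 ≤
        l.length + (if R c u then 1 else 0) + (if R v c then 1 else 0) := by
  induction h with
  | single u =>
    right
    simp only [List.countP_cons, List.countP_nil, List.length_cons, List.length_nil]
    by_cases h1 : R u c <;> by_cases h2 : R c u <;> simp [h1, h2]
  | @cons u x v l r h ih =>
    rcases ih with ⟨l', h', hp⟩ | ih
    · left
      exact ⟨u :: l', cons r h', (hp.cons u).trans (List.Perm.swap _ _ _)⟩
    · by_cases hin : R u c ∧ R c x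
      · left
        exact ⟨u :: c :: l, cons hin.1 (cons hin.2 h), List.Perm.swap _ _ _⟩
      · right
        simp only [List.countP_cons, List.length_cons]
        by_cases h1 : R u c <;> by_cases h2 : R c u <;> by_cases h3 : R c x <;>
          simp_all <;> omega

theorem of_succ {R : ℕ → ℕ → Prop} {i : ℕ} (d : ℕ)
    (h : ∀ t, i ≤ t → t < i + d → R t (t + 1)) :
    Walk R i (i + d) (List.range' i (d + 1)) := by
  induction d generalizing i with
  | zero => exact single i
  | succ d ih =>
    rw [List.range'_succ]
    refine cons (h i le_rfl (by omega)) ?_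
    have := ih (i := i + 1) (fun t h1 h2 => h t (by omega) (by omega))
    rwa [show i + 1 + d = i + (d + 1) by omega] at this

end Walk

theorem ReachIn.exists_walk {V : Type*} {A : V → V → Prop} {S : Set V} {u v : V}
    (h : ReachIn A S u v) (hv : v ∈ S) :
    ∃ l, Walk A u v l ∧ l.Nodup ∧ ∀ w ∈ l, w ∈ S := by
  induction h using Relation.ReflTransGen.head_induction_on with
  | refl => exact ⟨[v], .single v, by simp, by simpa using hv⟩
  | @head a c hac _ ih =>
    obtain ⟨l, hl, hn, hm⟩ := ih
    by_cases ha : a ∈ l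
    · obtain ⟨t, ht, hs⟩ := hl.exists_suffix ha
      exact ⟨t, ht, hn.sublist hs.sublist, fun w hw => hm w (hs.subset hw)⟩
    · refine ⟨a :: l, .cons hac.2.2 hl, List.nodup_cons.2 ⟨ha, hn⟩, ?_⟩
      intro w hw
      rcases List.mem_cons.1 hw with rfl | hw
      · exact hac.1
      · exact hm w hw

theorem ReachIn.eq_or_mem {V : Type*} {A : V → V → Prop} {S : Set V} {u v : V}
    (h : ReachIn A S u v) (hu : u ∈ S) : v ∈ S := by
  induction h with
  | refl => exact hu
  | tail _ h _ => exact h.2.1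


/-- The number of arcs, in both directions, between `v` and the vertices in `T`. -/
noncomputable def arcs {V : Type*} (A : V → V → Prop) (v : V) (T : Finset V) : ℕ :=
  open Classical in (T.filter (A v ·)).card + (T.filter (A · v)).card

section arcs

variable {V : Type*} {A : V → V → Prop} {v : V} {S T : Finset V}

theorem degree_eq_arcs [Fintype V] (A : V → V → Prop) (v : V) :
    degree A v = arcs A v Finset.univ := by
  classical
  simp only [degree, arcs, Set.ncard_eq_toFinset_card', Set.toFinset_ofPred]

theorem arcs_le_add [DecidableEq V] {U : Finset V}
    (h : ∀ u ∈ U, A v u ∨ A u v → u ∈ S ∨ u ∈ T) :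
    arcs A v U ≤ arcs A v S + arcs A v T := by
  classical
  have h1 : (U.filter (A v ·)).card ≤ (S.filter (A v ·)).card + (T.filter (A v ·)).card := by
    rw [← Finset.card_union_add_card_inter]
    refine (Finset.card_le_card ?_).trans (Nat.le_add_right _ _)
    intro u hu
    have := h u
    simp_all
  have h2 : (U.filter (A · v)).card ≤ (S.filter (A · v)).card + (T.filter (A · v)).card := by
    rw [← Finset.card_union_add_card_inter]
    refine (Finset.card_le_card ?_).trans (Nat.le_add_right _ _)
    intro u hu
    have := h u
    simp_all
  unfold arcs
  have := add_le_add h1 h2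
  convert this.trans_eq (add_add_add_comm _ _ _ _) using 1

theorem arcs_le : arcs A v T ≤ 2 * T.card := by
  classical
  have h1 := Finset.card_filter_le T (A v ·)
  have h2 := Finset.card_filter_le T (A · v)
  unfold arcs
  omega

theorem arcs_le_card_of_out (h : ∀ u ∈ T, ¬ A v u) : arcs A v T ≤ T.card := by
  classical
  have h1 : T.filter (A v ·) = ∅ := Finset.filter_eq_empty_iff.2 (fun u hu => h u hu)
  have h2 := Finset.card_filter_le T (A · v)
  unfold arcs
  rw [h1]
  simpa using h2

theorem arcs_eq_zero (h : ∀ u ∈ T, ¬ A v u ∧ ¬ A u v) : arcs A v T = 0 := by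
  classical
  have h1 : T.filter (A v ·) = ∅ := Finset.filter_eq_empty_iff.2 (fun u hu => (h u hu).1)
  have h2 : T.filter (A · v) = ∅ := Finset.filter_eq_empty_iff.2 (fun u hu => (h u hu).2)
  unfold arcs
  rw [h1, h2]
  rfl

theorem card_filter_add_card_filter_le {p q : V → Prop} [DecidablePred p] [DecidablePred q]
    (h : ∀ u ∈ T, ¬ (p u ∧ q u)) : (T.filter p).card + (T.filter q).card ≤ T.card := by
  classical
  rw [← Finset.card_union_of_disjoint]
  · exact Finset.card_le_card (Finset.union_subset (Finset.filter_subset _ _)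
      (Finset.filter_subset _ _))
  · rw [Finset.disjoint_left]
    intro u hu hu'
    rw [Finset.mem_filter] at hu hu'
    exact h u hu.1 ⟨hu.2, hu'.2⟩

theorem arcs_add_arcs_le {w : V} (h1 : ∀ u ∈ T, ¬ (A v u ∧ A u w))
    (h2 : ∀ u ∈ T, ¬ (A w u ∧ A u v)) : arcs A v T + arcs A w T ≤ 2 * T.card := by
  classical
  have e1 := card_filter_add_card_filter_le (p := (A v ·)) (q := (A · w)) h1
  have e2 := card_filter_add_card_filter_le (p := (A w ·)) (q := (A · v)) h2
  unfold arcs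
  omega

theorem arcs_toFinset [DecidableEq V] [DecidableRel A] {l : List V} (hl : l.Nodup) :
    arcs A v l.toFinset = l.countP (fun a => A a v) + l.countP (fun a => A v a) := by
  have key : ∀ (p : V → Prop) [DecidablePred p],
      (l.toFinset.filter p).card = l.countP (fun a => p a) := by
    intro p _
    rw [List.countP_eq_length_filter, ← List.toFinset_card_of_nodup (hl.filter _)]
    congr 1
    ext u
    simp
  unfold arcs
  rw [add_comm]
  congr 1
  · convert key (A · v)
  · convert key (A v ·)

theorem Walk.insert_or_arcs_le [DecidableEq V] [DecidableRel A] {a b : V} {l : List V}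
    (h : Walk A a b l) (hl : l.Nodup) (c : V) :
    (∃ l', Walk A a b l' ∧ l'.Perm (c :: l)) ∨
      arcs A c l.toFinset + 1 ≤
        l.length + (if A c a then 1 else 0) + (if A b c then 1 else 0) := by
  rw [arcs_toFinset hl]
  exact h.insert_or_count c

end arcs

/-- The cycle `x 0, x 1, …, x m` is a longest one through `x 0`, in a digraph in which all other
vertices have large degree, and in which every set of vertices can be left by an arc avoiding any
given vertex outside it. -/
structure LongCycle {V : Type*} [Fintype V] (A : V → V → Prop) (m : ℕ) (x : ℕ → V) : Prop where
  irrefl : ∀ v, ¬ A v v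
  deg : ∀ v, v ≠ x 0 → Fintype.card V + 1 ≤ degree A v
  leave : ∀ (v : V) (S : Set V), v ∉ S → S.Nonempty → (∃ u, u ∉ S ∧ u ≠ v) →
    ∃ a ∈ S, ∃ b, b ∉ S ∧ b ≠ v ∧ A a b
  two_le : 2 ≤ m
  inj : ∀ i j, i ≤ m → j ≤ m → x i = x j → i = j
  arc : ∀ i < m, A (x i) (x (i + 1))
  arc_last : A (x m) (x 0)
  long : ∀ (l : List V) (u v : V), Walk A u v l → A v u → l.Nodup → x 0 ∈ l → l.length ≤ m + 1

/-- The vertices off the cycle `x 0, …, x m`. -/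
def offCycle {V : Type*} (m : ℕ) (x : ℕ → V) : Set V := {v | ∀ i ≤ m, x i ≠ v}

/-- The numbering of a cycle traversed backwards. -/
def reflect {V : Type*} (m : ℕ) (x : ℕ → V) (i : ℕ) : V := if i = 0 then x 0 else x (m + 1 - i)

theorem reflect_zero {V : Type*} (m : ℕ) (x : ℕ → V) : reflect m x 0 = x 0 := rfl

theorem reflect_of_pos {V : Type*} (m : ℕ) (x : ℕ → V) {i : ℕ} (hi : 1 ≤ i) :
    reflect m x i = x (m + 1 - i) := if_neg (by omega)

theorem offCycle_reflect {V : Type*} (m : ℕ) (x : ℕ → V) :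
    offCycle m (reflect m x) = offCycle m x := by
  ext v
  constructor
  · intro h i hi
    rcases Nat.eq_zero_or_pos i with rfl | hp
    · exact h 0 hi
    · have := h (m + 1 - i) (by omega)
      rwa [reflect_of_pos m x (by omega), show m + 1 - (m + 1 - i) = i by omega] at this
  · intro h i hi
    unfold reflect
    split_ifs
    · exact h 0 (by omega)
    · exact h _ (by omega)

/-- The list of the vertices `x i, …, x j`. -/
def seg {V : Type*} (x : ℕ → V) (i j : ℕ) : List V := (List.range' i (j + 1 - i)).map x

theorem mem_seg {V : Type*} {x : ℕ → V} {i j : ℕ} {v : V} : v ∈ seg x i j ↔ ∃ t, i ≤ t ∧ t ≤ j ∧ x t = v := by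
  simp only [seg, List.mem_map, List.mem_range'_1]
  constructor
  · rintro ⟨t, ht, rfl⟩; exact ⟨t, by omega, by omega, rfl⟩
  · rintro ⟨t, h1, h2, rfl⟩; exact ⟨t, by omega, rfl⟩

theorem length_seg {V : Type*} (x : ℕ → V) (i j : ℕ) : (seg x i j).length = j + 1 - i := by simp [seg]

namespace LongCycle

variable {V : Type*} [Fintype V] {A : V → V → Prop} {m : ℕ} {x : ℕ → V}

theorem reverse (h : LongCycle A m x) : LongCycle (fun u v => A v u) m (reflect m x) where
  irrefl := h.irrefl
  deg v hv := by
    have := h.deg v hv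
    have e : degree (fun u v => A v u) v = degree A v := add_comm _ _
    omega
  leave v S hv hS hu := by
    obtain ⟨s, hs⟩ := hS
    obtain ⟨a, ha, b, hb, hbv, hab⟩ := h.leave v {u | u ∉ S ∧ u ≠ v} (by simp) hu
      ⟨s, by simp [hs], fun e => hv (e ▸ hs)⟩
    exact ⟨b, by_contra fun hbS => hb ⟨hbS, hbv⟩, a, ha.1, ha.2, hab⟩
  two_le := h.two_le
  inj i j hi hj e := by
    unfold reflect at e
    split_ifs at e with h1 h2 h2
    · omega
    · have := h.inj _ _ (by omega) (by omega) e; omega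
    · have := h.inj _ _ (by omega) (by omega) e; omega
    · have := h.inj _ _ (by omega) (by omega) e; omega
  arc i hi := by
    rcases Nat.eq_zero_or_pos i with rfl | hp
    · simpa [reflect] using h.arc_last
    · rw [reflect_of_pos m x hp, reflect_of_pos m x (by omega)]
      have := h.arc (m + 1 - (i + 1)) (by omega)
      rwa [show m + 1 - (i + 1) + 1 = m + 1 - i by omega] at this
  arc_last := by
    have := h.two_le
    rw [reflect_of_pos m x (show 1 ≤ m by omega), reflect_zero]
    simpa using h.arc 0 (by omega)
  long l u v hl e hn h0 := by
    have := h.long l.reverse v u hl.reverse e (List.nodup_reverse.2 hn) (by simpa using (show x 0 ∈ l from h0))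
    simpa using this

theorem walk_seg (h : LongCycle A m x) {i j : ℕ} (hij : i ≤ j) (hj : j ≤ m) :
    Walk A (x i) (x j) (seg x i j) := by
  have := Walk.of_succ (R := fun a b => A (x a) (x b)) (i := i) (j - i)
    (fun t h1 h2 => h.arc t (by omega))
  rw [show i + (j - i) = j by omega, show j - i + 1 = j + 1 - i by omega] at this
  exact this.map

theorem nodup_seg (h : LongCycle A m x) {i j : ℕ} (hj : j ≤ m) : (seg x i j).Nodup := by
  refine List.Nodup.map_on ?_ (List.nodup_range' (step := 1))
  intro a ha b hb e
  rw [List.mem_range'_1] at ha hb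
  exact h.inj a b (by omega) (by omega) e

theorem disjoint_seg (h : LongCycle A m x) {i j i' j' : ℕ} (hj : j < i') (hj' : j' ≤ m) :
    (seg x i j).Disjoint (seg x i' j') := by
  intro v hv hv'
  obtain ⟨t, h1, h2, rfl⟩ := mem_seg.1 hv
  obtain ⟨t', h1', h2', e⟩ := mem_seg.1 hv'
  have := h.inj _ _ (by omega) (by omega) e
  omega

/-- No path through vertices off the cycle leads from `x a` to `x b` with `a < b`. -/
theorem no_forward_path (h : LongCycle A m x) {a b : ℕ} (hab : a < b) (hb : b ≤ m) {w w' : V}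
    (hw : w ∈ offCycle m x) (h1 : A (x a) w) (hr : ReachIn A (offCycle m x) w w')
    (h2 : A w' (x b)) : False := by
  classical
  induction hd : b - a using Nat.strong_induction_on generalizing a b w w' with
  | _ d ih =>
  subst hd
  obtain ⟨S, hS, hSn, hSY⟩ := hr.exists_walk (hr.eq_or_mem hw)
  have hSpos := hS.length_pos
  -- a vertex off the cycle cannot be inserted in a part of it
  have hins : ∀ i j, i ≤ j → j ≤ m → ∀ l', Walk A (x i) (x j) l' →
      l'.Perm (w :: seg x i j) → i = 0 ∧ j < m ∨ 0 < i ∧ j = m → False := by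
    intro i j hij hj l' hl' hp hc
    have hw' : ∀ i j, j ≤ m → w ∉ seg x i j := by
      intro i j hj hw'
      obtain ⟨t, -, ht, rfl⟩ := mem_seg.1 hw'
      exact hw t (by omega) rfl
    have hln : l'.Nodup :=
      hp.nodup_iff.2 (List.nodup_cons.2 ⟨hw' i j hj, h.nodup_seg hj⟩)
    have hdis : ∀ i' j', j' ≤ m → (j < i' ∨ j' < i) → l'.Disjoint (seg x i' j') := by
      intro i' j' hj' hc v hv hv'
      rcases List.mem_cons.1 (hp.mem_iff.1 hv) with rfl | hv
      · exact hw' _ _ hj' hv'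
      · rcases hc with hc | hc
        · exact h.disjoint_seg hc hj' hv hv'
        · exact h.disjoint_seg hc hj hv' hv
    have hlen : l'.length = j + 1 - i + 1 := by
      rw [hp.length_eq, List.length_cons, length_seg]
    rcases hc with ⟨rfl, hc⟩ | ⟨hc, rfl⟩
    · have := h.long _ _ _ (hl'.append (h.arc j hc) (h.walk_seg (i := j + 1) hc le_rfl))
        h.arc_last (List.Nodup.append hln (h.nodup_seg le_rfl)
          (hdis _ _ le_rfl (Or.inl (by omega))))
        (List.mem_append_left _ (hp.mem_iff.2 (List.mem_cons_of_mem _ (mem_seg.2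
          ⟨0, le_rfl, by omega, rfl⟩))))
      rw [List.length_append, hlen, length_seg] at this
      omega
    · have ha := h.arc (i - 1) (by omega)
      rw [show i - 1 + 1 = i by omega] at ha
      have := h.long _ _ _ ((h.walk_seg (i := 0) (j := i - 1) (by omega) (by omega)).append ha hl')
        h.arc_last (List.Nodup.append (h.nodup_seg (by omega)) hln
          (hdis _ _ (by omega) (Or.inr (by omega))).symm)
        (List.mem_append_left _ (mem_seg.2 ⟨0, le_rfl, by omega, rfl⟩))
      rw [List.length_append, hlen, length_seg] at this
      omega
  have hbig : ∀ d α β, Walk A (x 0) (x a) α → Walk A (x b) (x m) β → (α ++ β).Nodup →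
      (∀ v ∈ α ++ β, ∃ i ≤ m, x i = v) → (∀ i ≤ m, x i ∉ α ++ β → a < i ∧ i < b) →
      d = m + 1 - (α.length + β.length) → False := by
    intro d
    induction d using Nat.strong_induction_on with
    | _ d ihd =>
    intro α β hα hβ hn hsub hsup hd
    have hSα : ∀ v ∈ S, v ∉ α ++ β := by
      intro v hv hv'
      obtain ⟨i, hi, rfl⟩ := hsub v hv'
      exact hSY _ hv i hi rfl
    have hx0 : x 0 ∈ α ++ β := by
      by_contra hc
      have := hsup 0 (by omega) hc
      omega
    have hlen : α.length + β.length + S.length ≤ m + 1 := by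
      have hperm : (α ++ (S ++ β)).Perm (S ++ (α ++ β)) := by
        rw [← List.append_assoc, ← List.append_assoc]
        exact List.perm_append_comm.append_right β
      have := h.long _ _ _ (hα.append h1 (hS.append h2 hβ)) h.arc_last
        (hperm.nodup_iff.2 (List.Nodup.append hSn hn fun v hv hv' => hSα v hv hv'))
        (hperm.mem_iff.2 (List.mem_append_right _ hx0))
      simp only [List.length_append] at this
      omega
    obtain ⟨i, him, hi⟩ : ∃ i ≤ m, x i ∉ α ++ β := by
      by_contra! hc
      have hs : (seg x 0 m).toFinset ⊆ (α ++ β).toFinset := by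
        intro v hv
        rw [List.mem_toFinset] at hv ⊢
        obtain ⟨t, -, ht, rfl⟩ := mem_seg.1 hv
        exact hc t ht
      have := Finset.card_le_card hs
      rw [List.toFinset_card_of_nodup hn, List.toFinset_card_of_nodup (h.nodup_seg le_rfl),
        length_seg, List.length_append] at this
      omega
    have hiab := hsup i him hi
    -- inserting `x i` gives a longer configuration
    have hstep : ∀ α' β', Walk A (x 0) (x a) α' → Walk A (x b) (x m) β' →
        (α' ++ β').Perm (x i :: (α ++ β)) → False := by
      intro α' β' hα' hβ' hp
      have hpl := hp.length_eq
      simp only [List.length_append, List.length_cons] at hpl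
      refine ihd (m + 1 - (α'.length + β'.length)) (by omega) α' β' hα' hβ'
        (hp.nodup_iff.2 (List.nodup_cons.2 ⟨hi, hn⟩)) ?_ ?_ rfl
      · intro v hv
        rcases List.mem_cons.1 (hp.mem_iff.1 hv) with rfl | hv
        · exact ⟨i, him, rfl⟩
        · exact hsub v hv
      · intro j hj hjn
        exact hsup j hj fun hc => hjn (hp.mem_iff.2 (List.mem_cons_of_mem _ hc))
    obtain ⟨hαn, hβn, hαβ⟩ := List.nodup_append'.1 hn
    have hcα : arcs A (x i) α.toFinset ≤ α.length + 1 := by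
      rcases hα.insert_or_arcs_le hαn (x i) with ⟨l', hl', hp⟩ | hc
      · exact (hstep l' β hl' hβ (hp.append_right β)).elim
      · split_ifs at hc <;> omega
    have hcβ : arcs A (x i) β.toFinset ≤ β.length + 1 := by
      rcases hβ.insert_or_arcs_le hβn (x i) with ⟨l', hl', hp⟩ | hc
      · exact (hstep α l' hα hl' ((hp.append_left α).trans List.perm_middle)).elim
      · split_ifs at hc <;> omega
    have hw0 : arcs A w (seg x 0 a).toFinset ≤ a + 2 := by
      rcases (h.walk_seg (i := 0) (j := a) (by omega) (by omega)).insert_or_arcs_le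
        (h.nodup_seg (by omega)) w with ⟨l', hl', hp⟩ | hc
      · exact (hins 0 a (by omega) (by omega) l' hl' hp (by omega)).elim
      · rw [length_seg] at hc
        split_ifs at hc <;> omega
    have hwm : arcs A w (seg x b m).toFinset ≤ m + 2 - b := by
      rcases (h.walk_seg (i := b) (j := m) (by omega) (by omega)).insert_or_arcs_le
        (h.nodup_seg (by omega)) w with ⟨l', hl', hp⟩ | hc
      · exact (hins b m (by omega) (by omega) l' hl' hp (by omega)).elim
      · rw [length_seg] at hc
        split_ifs at hc <;> omega
    -- `w` is adjacent to no vertex between `x a` and `x b`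
    have hwΓ : ∀ j, a < j → j < b → ¬ A w (x j) ∧ ¬ A (x j) w := fun j hj1 hj2 =>
      ⟨fun e => ih (j - a) (by omega) hj1 (by omega) hw h1 .refl e rfl,
        fun e => ih (b - j) (by omega) hj2 hb hw e hr h2 rfl⟩
    set C : Finset V := (seg x 0 m).toFinset with hC
    have hCm : ∀ v, v ∈ C ↔ ∃ t ≤ m, x t = v := by
      intro v
      rw [hC, List.mem_toFinset, mem_seg]
      simp
    have hCc : C.card = m + 1 := by
      rw [hC, List.toFinset_card_of_nodup (h.nodup_seg le_rfl), length_seg]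
      omega
    have hwY : w ∈ Cᶜ := by
      rw [Finset.mem_compl, hCm]
      rintro ⟨t, ht, e⟩
      exact hw t ht e
    have hoff : ∀ u ∈ Cᶜ, u ∈ offCycle m x := by
      intro u hu t ht e
      rw [Finset.mem_compl, hCm] at hu
      exact hu ⟨t, ht, e⟩
    set T : Finset V := (α ++ β).toFinset with hT
    have hTC : T ⊆ C := by
      intro v hv
      rw [hT, List.mem_toFinset] at hv
      exact (hCm v).2 (hsub v hv)
    have hTc : T.card = α.length + β.length := by
      rw [hT, List.toFinset_card_of_nodup hn, List.length_append]
    have hiT : x i ∈ C \ T := by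
      rw [Finset.mem_sdiff, hCm, hT, List.mem_toFinset]
      exact ⟨⟨i, him, rfl⟩, hi⟩
    have hCT : (C \ T).card + T.card = C.card := Finset.card_sdiff_add_card_eq_card hTC
    have hγ : (C \ T).card ≤ b - a - 1 := by
      have hs : C \ T ⊆ (Finset.Ioo a b).image x := by
        intro v hv
        rw [Finset.mem_sdiff, hCm] at hv
        obtain ⟨⟨t, ht, rfl⟩, hv⟩ := hv
        rw [hT, List.mem_toFinset] at hv
        have := hsup t ht hv
        exact Finset.mem_image_of_mem _ (Finset.mem_Ioo.2 this)
      have := (Finset.card_le_card hs).trans Finset.card_image_le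
      rwa [Nat.card_Ioo] at this
    have hwadd : arcs A w Finset.univ ≤ arcs A w (seg x 0 a).toFinset +
        (arcs A w (seg x b m).toFinset + arcs A w (Cᶜ.erase w)) := by
      refine (arcs_le_add (S := (seg x 0 a).toFinset)
        (T := (seg x b m).toFinset ∪ Cᶜ.erase w) ?_).trans
        (Nat.add_le_add_left (arcs_le_add fun u hu _ => Finset.mem_union.1 hu) _)
      intro u _ hu
      rw [Finset.mem_union, List.mem_toFinset, List.mem_toFinset, mem_seg, mem_seg,
        Finset.mem_erase, Finset.mem_compl, hCm]
      by_cases huC : ∃ t ≤ m, x t = u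
      · obtain ⟨t, ht, rfl⟩ := huC
        by_cases hta : t ≤ a
        · exact Or.inl ⟨t, by omega, hta, rfl⟩
        · by_cases htb : b ≤ t
          · exact Or.inr (Or.inl ⟨t, htb, ht, rfl⟩)
          · have := hwΓ t (by omega) (by omega)
            tauto
      · refine Or.inr (Or.inr ⟨?_, huC⟩)
        rintro rfl
        exact h.irrefl u (by tauto)
    have hiadd : arcs A (x i) Finset.univ ≤ (arcs A (x i) α.toFinset + arcs A (x i) β.toFinset) +
        (arcs A (x i) ((C \ T).erase (x i)) + arcs A (x i) (Cᶜ.erase w)) := by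
      refine (arcs_le_add (S := α.toFinset ∪ β.toFinset)
        (T := (C \ T).erase (x i) ∪ Cᶜ.erase w) ?_).trans
        (Nat.add_le_add (arcs_le_add fun u hu _ => Finset.mem_union.1 hu)
          (arcs_le_add fun u hu _ => Finset.mem_union.1 hu))
      intro u _ hu
      have hne : u ≠ x i := by
        rintro rfl
        exact h.irrefl _ (by tauto)
      have hne' : u ≠ w := by
        rintro rfl
        have := hwΓ i hiab.1 hiab.2
        tauto
      have : u ∈ T ↔ u ∈ α.toFinset ∨ u ∈ β.toFinset := by simp [hT]
      simp only [Finset.mem_union, Finset.mem_erase, Finset.mem_sdiff, Finset.mem_compl]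
      tauto
    have hrest : arcs A (x i) ((C \ T).erase (x i)) ≤ 2 * ((C \ T).card - 1) := by
      rw [← Finset.card_erase_of_mem hiT]
      exact arcs_le
    have hpair : arcs A w (Cᶜ.erase w) + arcs A (x i) (Cᶜ.erase w) ≤ 2 * (Cᶜ.card - 1) := by
      rw [← Finset.card_erase_of_mem hwY]
      refine arcs_add_arcs_le (fun u hu e => ?_) (fun u hu e => ?_)
      all_goals have huY := hoff u (Finset.mem_of_mem_erase hu)
      · exact ih (i - a) (by omega) hiab.1 him hw h1 (.single ⟨hw, huY, e.1⟩) e.2 rfl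
      · exact ih (b - i) (by omega) hiab.2 hb huY e.1 (.head ⟨huY, hw, e.2⟩ hr) h2 rfl
    have hdw := h.deg w fun e => hw 0 (by omega) e.symm
    have hdi := h.deg (x i) fun e => by
      have := h.inj i 0 him (by omega) e
      omega
    rw [degree_eq_arcs] at hdw hdi
    have hCcc : Cᶜ.card + C.card = Fintype.card V := by
      rw [Finset.card_compl]
      have := Finset.card_le_univ C
      omega
    have hTpos : 0 < (C \ T).card := Finset.card_pos.2 ⟨_, hiT⟩
    have hYpos : 0 < Cᶜ.card := Finset.card_pos.2 ⟨_, hwY⟩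
    omega
  refine hbig _ (seg x 0 a) (seg x b m) (h.walk_seg (by omega) (by omega))
    (h.walk_seg hb le_rfl) ?_ ?_ ?_ rfl
  · exact List.Nodup.append (h.nodup_seg (by omega)) (h.nodup_seg le_rfl)
      (h.disjoint_seg hab le_rfl)
  · intro v hv
    rcases List.mem_append.1 hv with hv | hv
    all_goals
      obtain ⟨t, h1, h2, rfl⟩ := mem_seg.1 hv
      exact ⟨t, by omega, rfl⟩
  · intro i hi hn
    by_contra hc
    apply hn
    rw [List.mem_append, mem_seg, mem_seg]
    by_cases hia : i ≤ a
    · exact Or.inl ⟨i, by omega, hia, rfl⟩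
    · exact Or.inr ⟨i, by omega, hi, rfl⟩

theorem congr (h : LongCycle A m x) {x' : ℕ → V} (e : ∀ i ≤ m, x i = x' i) :
    LongCycle A m x' where
  irrefl := h.irrefl
  deg v hv := h.deg v (by rwa [e 0 (Nat.zero_le _)])
  leave := h.leave
  two_le := h.two_le
  inj i j hi hj hij := h.inj i j hi hj (by rwa [e i hi, e j hj])
  arc i hi := by
    rw [← e i hi.le, ← e (i + 1) hi]
    exact h.arc i hi
  arc_last := by
    rw [← e m le_rfl, ← e 0 (Nat.zero_le _)]
    exact h.arc_last
  long := by
    rw [← e 0 (Nat.zero_le _)]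
    exact h.long

theorem not_arc_zero_off (h : LongCycle A m x) {w : V} (hw : w ∈ offCycle m x) :
    ¬ A (x 0) w := by
  intro hzw
  have h2 := h.two_le
  have hx : ∀ i ≤ m, x i ∉ {v | v ∈ offCycle m x ∧ ReachIn A (offCycle m x) w v} :=
    fun i hi hc => hc.1 i hi rfl
  obtain ⟨a, ha, b, hb, hbz, hab⟩ := h.leave (x 0)
    {v | v ∈ offCycle m x ∧ ReachIn A (offCycle m x) w v} (hx 0 (by omega)) ⟨w, hw, .refl⟩
    ⟨x 1, hx 1 (by omega), fun e => by have := h.inj _ _ (by omega) (by omega) e; omega⟩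
  by_cases hbY : b ∈ offCycle m x
  · exact hb ⟨hbY, ha.2.tail ⟨ha.1, hbY, hab⟩⟩
  · obtain ⟨j, hj, rfl⟩ : ∃ j ≤ m, x j = b := by simpa [offCycle] using hbY
    have : j ≠ 0 := by
      rintro rfl
      exact hbz rfl
    exact h.no_forward_path (by omega) hj hw hzw ha.2 hab

theorem not_arc_off_zero (h : LongCycle A m x) {w : V} (hw : w ∈ offCycle m x) :
    ¬ A w (x 0) :=
  h.reverse.not_arc_zero_off (by rwa [offCycle_reflect])

/-- The walk through the blocks `x i, …, x j` for `(i, j)` in a list. -/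
theorem walk_blocks {R : ℕ → ℕ → Prop} {p q : ℕ × ℕ} {L : List (ℕ × ℕ)}
    (hL : Walk (fun p q : ℕ × ℕ => R p.2 q.1) p q L)
    (hs : ∀ p ∈ L, p.1 ≤ p.2 ∧ ∀ t, p.1 ≤ t → t < p.2 → R t (t + 1)) :
    Walk R p.1 q.2 (L.flatMap fun p => List.range' p.1 (p.2 + 1 - p.1)) := by
  have hb : ∀ p : ℕ × ℕ, (p.1 ≤ p.2 ∧ ∀ t, p.1 ≤ t → t < p.2 → R t (t + 1)) →
      Walk R p.1 p.2 (List.range' p.1 (p.2 + 1 - p.1)) := by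
    rintro p ⟨h1, h2⟩
    have := Walk.of_succ (R := R) (i := p.1) (p.2 - p.1) fun t h3 h4 => h2 t h3 (by omega)
    rwa [show p.1 + (p.2 - p.1) = p.2 by omega,
      show p.2 - p.1 + 1 = p.2 + 1 - p.1 by omega] at this
  induction hL with
  | single u => simpa using hb u (hs u (by simp))
  | @cons u w v l r hw ih =>
    rw [List.flatMap_cons]
    exact (hb u (hs u (by simp))).append r (ih fun p hp => hs p (List.mem_cons_of_mem _ hp))

end LongCycle

/-- A longest cycle `x 0, …, x m`, together with a path `x (m + 1), x (m + 2), x (m + 3)` off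
this cycle whose first vertex is dominated by `x k, …, x m` and whose last vertex dominates
`x 1, …, x k`. -/
structure Config {V : Type*} [Fintype V] (A : V → V → Prop) (m k : ℕ) (x : ℕ → V) : Prop
    extends LongCycle A m x where
  one_le : 1 ≤ k
  le : k ≤ m
  inj_all : ∀ i j, i ≤ m + 3 → j ≤ m + 3 → x i = x j → i = j
  arc_one : A (x (m + 1)) (x (m + 2))
  arc_two : A (x (m + 2)) (x (m + 3))
  into : ∀ i, k ≤ i → i ≤ m → A (x i) (x (m + 1))
  out : ∀ j, 1 ≤ j → j ≤ k → A (x (m + 3)) (x j)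

namespace Config

/-- The numbering of a configuration in the reversed digraph. -/
def flip {V : Type*} (m : ℕ) (x : ℕ → V) (i : ℕ) : V :=
  if i = 0 then x 0 else if i ≤ m then x (m + 1 - i) else x (2 * m + 4 - i)

theorem flip_zero {V : Type*} (m : ℕ) (x : ℕ → V) : flip m x 0 = x 0 := rfl

theorem flip_mid {V : Type*} (m : ℕ) (x : ℕ → V) {i : ℕ} (h1 : 1 ≤ i) (h2 : i ≤ m) :
    flip m x i = x (m + 1 - i) := by
  rw [flip, if_neg (by omega), if_pos h2]

theorem flip_large {V : Type*} (m : ℕ) (x : ℕ → V) {i : ℕ} (h : m < i) :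
    flip m x i = x (2 * m + 4 - i) := by
  rw [flip, if_neg (by omega), if_neg (by omega)]

variable {V : Type*} [Fintype V] {A : V → V → Prop} {m k : ℕ} {x : ℕ → V}

theorem reverse (h : Config A m k x) :
    Config (fun u v => A v u) m (m + 1 - k) (flip m x) where
  toLongCycle := h.toLongCycle.reverse.congr fun i hi => by
    unfold reflect flip
    split_ifs <;> rfl
  one_le := by have := h.le; omega
  le := by have := h.one_le; omega
  inj_all i j hi hj e := by
    unfold flip at e
    split_ifs at e <;> first | omega | (have := h.inj_all _ _ (by omega) (by omega) e; omega)
  arc_one := by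
    rw [flip_large m x (by omega), flip_large m x (by omega)]
    have := h.arc_two
    rwa [show 2 * m + 4 - (m + 1) = m + 3 by omega, show 2 * m + 4 - (m + 2) = m + 2 by omega]
  arc_two := by
    rw [flip_large m x (by omega), flip_large m x (by omega)]
    have := h.arc_one
    rwa [show 2 * m + 4 - (m + 3) = m + 1 by omega, show 2 * m + 4 - (m + 2) = m + 2 by omega]
  into i h1 h2 := by
    have := h.le
    rw [flip_large m x (by omega), flip_mid m x (by omega) h2,
      show 2 * m + 4 - (m + 1) = m + 3 by omega]
    exact h.out _ (by omega) (by omega)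
  out j h1 h2 := by
    have := h.one_le
    rw [flip_large m x (show m < m + 3 by omega), flip_mid m x h1 (by omega),
      show 2 * m + 4 - (m + 3) = m + 1 by omega]
    exact h.into _ (by omega) (by omega)

theorem mem_off (h : Config A m k x) {i : ℕ} (h1 : m < i) (h2 : i ≤ m + 3) :
    x i ∈ offCycle m x := by
  intro j hj e
  have := h.inj_all _ _ (by omega) h2 e
  omega

theorem reach (h : Config A m k x) : ReachIn A (offCycle m x) (x (m + 1)) (x (m + 3)) :=
  .head ⟨h.mem_off (by omega) (by omega), h.mem_off (by omega) (by omega), h.arc_one⟩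
    (.single ⟨h.mem_off (by omega) (by omega), h.mem_off (by omega) (by omega), h.arc_two⟩)

theorem nodup_blocks (h : Config A m k x) {L : List (ℕ × ℕ)} (hs : ∀ p ∈ L, p.2 ≤ m + 3)
    (hd : L.Pairwise fun p q => p.2 < q.1 ∨ q.2 < p.1) :
    ((L.flatMap fun p => List.range' p.1 (p.2 + 1 - p.1)).map x).Nodup := by
  refine List.Nodup.map_on ?_ ?_
  · have : ∀ a ∈ L.flatMap fun p => List.range' p.1 (p.2 + 1 - p.1), a ≤ m + 3 := by
      intro a ha
      obtain ⟨p, hp, ha⟩ := List.mem_flatMap.1 ha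
      rw [List.mem_range'_1] at ha
      have := hs p hp
      omega
    exact fun a ha b hb e => h.inj_all a b (this a ha) (this b hb) e
  · rw [List.nodup_flatMap]
    refine ⟨fun p _ => List.nodup_range' (step := 1), hd.imp ?_⟩
    intro p q hpq a ha hb
    rw [List.mem_range'_1] at ha hb
    omega

/-- A cycle through `x 0` consisting of blocks has at most `m + 1` vertices. -/
theorem sum_blocks_le (h : Config A m k x) {q : ℕ × ℕ} {L : List (ℕ × ℕ)}
    (hL : Walk (fun p q : ℕ × ℕ => A (x p.2) (x q.1)) (0, 0) q L) (hq : A (x q.2) (x 0))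
    (hs : ∀ p ∈ L, p.1 ≤ p.2 ∧ (p.2 ≤ m ∨ m < p.1 ∧ p.2 ≤ m + 3))
    (hd : L.Pairwise fun p q => p.2 < q.1 ∨ q.2 < p.1) :
    (L.map fun p => p.2 + 1 - p.1).sum ≤ m + 1 := by
  have hw := (LongCycle.walk_blocks (R := fun a b => A (x a) (x b)) hL fun p hp =>
    ⟨(hs p hp).1, fun t h1 h2 => by
      rcases (hs p hp).2 with h3 | h3
      · exact h.arc t (by omega)
      · rcases (show t = m + 1 ∨ t = m + 2 by omega) with rfl | rfl
        · exact h.arc_one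
        · exact h.arc_two⟩).map
  have hlen := h.long _ _ _ hw hq
    (h.nodup_blocks (fun p hp => by have := (hs p hp).2; omega) hd) ?_
  · rw [List.length_map, List.length_flatMap] at hlen
    simpa using hlen
  · obtain ⟨t, rfl⟩ := hL.exists_eq_cons
    simp

/-- An arc into `x 0` can precede an arc out of `x 0` only at distance at least four. -/
theorem add_four_le (h : Config A m k x) {i j : ℕ} (hi : 1 ≤ i) (hij : i < j) (hj : j ≤ m)
    (hI : A (x i) (x 0)) (hO : A (x 0) (x j)) : i + 4 ≤ j := by
  have := h.sum_blocks_le (L := [(0, 0), (j, m), (m + 1, m + 3), (1, i)])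
    (.cons hO (.cons (h.into m h.le le_rfl) (.cons (h.out 1 le_rfl h.one_le) (.single _)))) hI
    (by simp; omega) (by simp; omega)
  simp at this
  omega

theorem cross_into (h : Config A m k x) {a b c d : ℕ} (ha : 1 ≤ a) (hac : a < c) (hcd : c ≤ d)
    (hdb : d < b) (hb : b ≤ m) (hab : A (x a) (x b)) (hck : c ≤ k) (hd : A (x d) (x 0)) :
    a + d + 5 ≤ b + c := by
  have := h.sum_blocks_le (L := [(0, 0), (1, a), (b, m), (m + 1, m + 3), (c, d)])
    (.cons (h.arc 0 (by omega)) (.cons hab (.cons (h.into m h.le le_rfl)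
      (.cons (h.out c (by omega) hck) (.single _))))) hd
    (by simp; omega) (by simp; omega)
  simp at this
  omega

theorem cross_out (h : Config A m k x) {a b c d : ℕ} (ha : 1 ≤ a) (hac : a < c) (hcd : c ≤ d)
    (hdb : d < b) (hb : b ≤ m) (hab : A (x a) (x b)) (hkd : k ≤ d) (hc : A (x 0) (x c)) :
    a + d + 5 ≤ b + c := by
  have := h.sum_blocks_le (L := [(0, 0), (c, d), (m + 1, m + 3), (1, a), (b, m)])
    (.cons hc (.cons (h.into d hkd (by omega)) (.cons (h.out 1 le_rfl h.one_le)
      (.cons hab (.single _))))) h.arc_last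
    (by simp; omega) (by simp; omega)
  simp at this
  omega

/-- If no arc into `x 0` starts before `x t`, then some arc crosses `x t`. -/
theorem exists_cross_of_into (h : Config A m k x) {t : ℕ} (ht : 2 ≤ t ∧ t ≤ m ∨ t = k)
    (hI : ∀ i, 1 ≤ i → i < t → ¬ A (x i) (x 0)) :
    ∃ a b, 1 ≤ a ∧ a < t ∧ t < b ∧ b ≤ m ∧ A (x a) (x b) := by
  have hk1 := h.one_le
  have hkm := h.le
  set W : Set V := {w | w ∈ offCycle m x ∧
    ∀ w' j, ReachIn A (offCycle m x) w w' → j ≤ m → A w' (x j) → j ≤ t} with hW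
  obtain ⟨a, ha, b, hb, hbt, hab⟩ := h.leave (x t) ({v | ∃ i, 1 ≤ i ∧ i < t ∧ x i = v} ∪ W)
    (by
      rintro (⟨i, h1, h2, e⟩ | hw)
      · have := h.inj _ _ (by omega) (by omega) e
        omega
      · exact hw.1 t (by omega) rfl)
    (by
      rcases ht with ht | rfl
      · exact ⟨x 1, Or.inl ⟨1, by omega, by omega, rfl⟩⟩
      · refine ⟨x (m + 3), Or.inr ⟨h.mem_off (by omega) (by omega), ?_⟩⟩
        intro w' j hr hj e
        by_contra hc
        exact h.no_forward_path (a := t) (by omega) hj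
          (h.mem_off (by omega) (by omega)) (h.into t le_rfl hkm) (h.reach.trans hr) e)
    ⟨x 0, by
      rintro (⟨i, h1, h2, e⟩ | hw)
      · have := h.inj _ _ (by omega) (by omega) e
        omega
      · exact hw.1 0 (by omega) rfl, fun e => by
        have := h.inj _ _ (by omega) (by omega) e
        omega⟩
  have hb1 : ∀ i, 1 ≤ i → i < t → x i ≠ b := fun i h1 h2 e => hb (Or.inl ⟨i, h1, h2, e⟩)
  have hb2 : b ∉ W := fun e => hb (Or.inr e)
  rcases ha with ⟨i, h1, h2, rfl⟩ | ha
  · by_cases hbY : b ∈ offCycle m x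
    · refine absurd ⟨hbY, ?_⟩ hb2
      intro w' j hr hj e
      by_contra hc
      exact h.no_forward_path (a := i) (by omega) hj hbY hab hr e
    · obtain ⟨j, hj, rfl⟩ : ∃ j ≤ m, x j = b := by simpa [offCycle] using hbY
      refine ⟨i, j, h1, h2, ?_, hj, hab⟩
      by_contra hc
      rcases Nat.eq_zero_or_pos j with rfl | hp
      · exact hI i h1 h2 hab
      · rcases (show j < t ∨ j = t by omega) with hlt | rfl
        · exact hb1 j hp hlt rfl
        · exact hbt rfl
  · exfalso
    by_cases hbY : b ∈ offCycle m x
    · exact hb2 ⟨hbY, fun w' j hr hj e => ha.2 w' j (.head ⟨ha.1, hbY, hab⟩ hr) hj e⟩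
    · obtain ⟨j, hj, rfl⟩ : ∃ j ≤ m, x j = b := by simpa [offCycle] using hbY
      have hjt := ha.2 a j .refl hj hab
      rcases Nat.eq_zero_or_pos j with rfl | hp
      · exact h.not_arc_off_zero ha.1 hab
      · rcases (show j < t ∨ j = t by omega) with hlt | rfl
        · exact hb1 j hp hlt rfl
        · exact hbt rfl

/-- If no arc out of `x 0` ends after `x t`, then some arc crosses `x t`. -/
theorem exists_cross_of_out (h : Config A m k x) {t : ℕ} (ht : 1 ≤ t ∧ t + 1 ≤ m ∨ t = k)
    (hO : ∀ j, t < j → j ≤ m → ¬ A (x 0) (x j)) :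
    ∃ a b, 1 ≤ a ∧ a < t ∧ t < b ∧ b ≤ m ∧ A (x a) (x b) := by
  have hk1 := h.one_le
  have hkm := h.le
  obtain ⟨a, b, h1, h2, h3, h4, e⟩ := h.reverse.exists_cross_of_into (t := m + 1 - t) (by omega)
    (fun i hi hit => by
      rw [flip_zero, flip_mid m x hi (by omega)]
      exact hO _ (by omega) (by omega))
  rw [flip_mid m x h1 (by omega), flip_mid m x (by omega) h4] at e
  exact ⟨m + 1 - b, m + 1 - a, by omega, by omega, by omega, by omega, e⟩

theorem two_le_k (h : Config A m k x) : 2 ≤ k := by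
  by_contra hc
  have := h.one_le
  obtain ⟨a, b, h1, h2, -⟩ := h.exists_cross_of_into (t := k) (Or.inr rfl) (by omega)
  omega

theorem k_lt (h : Config A m k x) : k < m := by
  by_contra hc
  have := h.le
  obtain ⟨a, b, h1, h2, h3, h4, -⟩ := h.exists_cross_of_out (t := k) (Or.inr rfl) (by omega)
  omega

end Config

namespace Config

/-- Among any three indices `l`, one satisfies `x l → x 0` or `x 0 → x (l + 1)`. -/
def Dense {V : Type*} (A : V → V → Prop) (m : ℕ) (x : ℕ → V) : Prop :=
  ∀ l₁ l₂ l₃, 1 ≤ l₁ → l₁ < l₂ → l₂ < l₃ → l₃ < m →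
    (¬ A (x l₁) (x 0) ∧ ¬ A (x 0) (x (l₁ + 1))) → (¬ A (x l₂) (x 0) ∧ ¬ A (x 0) (x (l₂ + 1))) →
    (¬ A (x l₃) (x 0) ∧ ¬ A (x 0) (x (l₃ + 1))) → False

theorem Dense.reverse {V : Type*} {A : V → V → Prop} {m : ℕ} {x : ℕ → V}
    (hF : Dense A m x) : Dense (fun u v => A v u) m (flip m x) := by
  have key : ∀ l, 1 ≤ l → l < m → (¬ A (flip m x 0) (flip m x l) ∧
      ¬ A (flip m x (l + 1)) (flip m x 0)) →
      (¬ A (x (m - l)) (x 0) ∧ ¬ A (x 0) (x (m - l + 1))) := by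
    intro l h1 h2 h3
    rw [flip_zero, flip_mid m x h1 (by omega), flip_mid m x (by omega) (by omega)] at h3
    rw [show m + 1 - (l + 1) = m - l by omega, show m + 1 - l = m - l + 1 by omega] at h3
    exact h3.symm
  intro l₁ l₂ l₃ h1 h2 h3 h4 e1 e2 e3
  exact hF (m - l₃) (m - l₂) (m - l₁) (by omega) (by omega) (by omega) (by omega)
    (key _ (by omega) (by omega) e3) (key _ (by omega) (by omega) e2)
    (key _ (by omega) (by omega) e1)

variable {V : Type*} [Fintype V] {A : V → V → Prop} {m k : ℕ} {x : ℕ → V}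

/-- The case in which all out-neighbours of `x 0` precede all its in-neighbours, and the latter
come after `x k`. -/
theorem false_of_separated_of_lt (h : Config A m k x) (hF : Dense A m x)
    (hG : ∀ i j, 1 ≤ i → i < j → j ≤ m → A (x i) (x 0) → ¬ A (x 0) (x j))
    (hk : ∀ i, 1 ≤ i → i ≤ k → ¬ A (x i) (x 0)) : False := by
  classical
  have hk2 := h.two_le_k
  have hkm := h.k_lt
  have hO1 : A (x 0) (x 1) := h.arc 0 (by omega)
  have hex : ∃ i, 1 ≤ i ∧ i ≤ m ∧ A (x i) (x 0) := ⟨m, by omega, le_rfl, h.arc_last⟩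
  obtain ⟨s, ⟨hs1, hsm, hsI⟩, hmin⟩ :
      ∃ s, (1 ≤ s ∧ s ≤ m ∧ A (x s) (x 0)) ∧ ∀ i, 1 ≤ i → i < s → ¬ A (x i) (x 0) :=
    ⟨Nat.find hex, Nat.find_spec hex, fun i h1 h2 e =>
      Nat.find_min hex h2 ⟨h1, by have := (Nat.find_spec hex).2.1; omega, e⟩⟩
  have hks : k < s := by
    by_contra hc
    exact hk s hs1 (by omega) hsI
  have hcross : ∀ a b, 1 ≤ a → a < k → k < b → b ≤ m → A (x a) (x b) →
      b ≤ s ∧ ∀ c, a < c → c < b → c < a + 4 → ¬ A (x 0) (x c) := by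
    intro a b h1 h2 h3 h4 e
    constructor
    · by_contra hc
      have hI : ∀ d, s ≤ d → d < b → A (x d) (x 0) → d + 4 ≤ b := by
        intro d hd1 hd2 hd
        have := h.cross_into (c := a + 1) (d := d) h1 (by omega) (by omega) hd2 h4 e (by omega) hd
        omega
      have hsb := hI s le_rfl (by omega) hsI
      refine hF (b - 3) (b - 2) (b - 1) (by omega) (by omega) (by omega) (by omega) ⟨?_, ?_⟩
        ⟨?_, ?_⟩ ⟨?_, ?_⟩
      · intro e'; have := hI _ (by omega) (by omega) e'; omega
      · exact hG s _ hs1 (by omega) (by omega) hsI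
      · intro e'; have := hI _ (by omega) (by omega) e'; omega
      · exact hG s _ hs1 (by omega) (by omega) hsI
      · intro e'; have := hI _ (by omega) (by omega) e'; omega
      · exact hG s _ hs1 (by omega) (by omega) hsI
    · intro c hc1 hc2 hc3 hc
      have := h.cross_out (c := c) (d := b - 1) h1 hc1 (by omega) (by omega) h4 e (by omega) hc
      omega
  obtain ⟨a, b, ha1, hak, hkb, hbm, hab⟩ := h.exists_cross_of_into (t := k) (Or.inr rfl)
    fun i h1 h2 => hk i h1 (by omega)
  obtain ⟨hbs, habO⟩ := hcross a b ha1 hak hkb hbm hab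
  have hcrosss : ∀ a b, 1 ≤ a → a < s → s < b → b ≤ m → A (x a) (x b) →
      k ≤ a ∧ ∀ c, a < c → c < b → c < a + 4 → ¬ A (x 0) (x c) := by
    intro a b h1 h2 h3 h4 e
    constructor
    · by_contra hc
      have := (hcross a b h1 (by omega) (by omega) h4 e).1
      omega
    · intro c hc1 hc2 hc3 hc
      have := h.cross_out (c := c) (d := b - 1) h1 hc1 (by omega) (by omega) h4 e (by omega) hc
      omega
  obtain ⟨a', b', ha1', has', hsb', hbm', hab'⟩ := h.exists_cross_of_into (t := s)
    (by omega) hmin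
  obtain ⟨hka', habO'⟩ := hcrosss a' b' ha1' has' hsb' hbm' hab'
  have hdot : ∀ l, 1 ≤ l → l < s → ¬ A (x 0) (x (l + 1)) →
      ¬ A (x l) (x 0) ∧ ¬ A (x 0) (x (l + 1)) := fun l h1 h2 e => ⟨hmin l h1 h2, e⟩
  have hsO : ¬ A (x 0) (x s) := by
    intro e
    have hs4 : a' + 4 ≤ s := by
      by_contra hc
      exact habO' s has' hsb' (by omega) e
    exact hF a' (a' + 1) (a' + 2) ha1' (by omega) (by omega) (by omega)
      (hdot _ (by omega) (by omega) (habO' _ (by omega) (by omega) (by omega)))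
      (hdot _ (by omega) (by omega) (habO' _ (by omega) (by omega) (by omega)))
      (hdot _ (by omega) (by omega) (habO' _ (by omega) (by omega) (by omega)))
  have hds : ¬ A (x (s - 1)) (x 0) ∧ ¬ A (x 0) (x (s - 1 + 1)) :=
    hdot _ (by omega) (by omega) (by rwa [show s - 1 + 1 = s by omega])
  have hda := hdot a ha1 (by omega) (habO (a + 1) (by omega) (by omega) (by omega))
  have hb2 : b = a + 2 := by
    by_contra hc
    exact hF a (a + 1) (s - 1) ha1 (by omega) (by omega) (by omega) hda
      (hdot _ (by omega) (by omega) (habO _ (by omega) (by omega) (by omega))) hds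
  obtain rfl : k = a + 1 := by omega
  subst hb2
  have hunique : ∀ l, 1 ≤ l → l < m → l ≠ a → l ≠ s - 1 →
      ¬ (¬ A (x l) (x 0) ∧ ¬ A (x 0) (x (l + 1))) := by
    intro l h1 h2 h3 h4 h5
    rcases lt_trichotomy l a with h6 | h6 | h6
    · exact hF l a (s - 1) h1 h6 (by omega) (by omega) h5 hda hds
    · exact h3 h6
    · rcases lt_trichotomy l (s - 1) with h7 | h7 | h7
      · exact hF a l (s - 1) ha1 h6 h7 (by omega) hda h5 hds
      · exact h4 h7
      · exact hF a (s - 1) l ha1 (by omega) h7 h2 hda hds h5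
  have hcs : ∀ a' b', 1 ≤ a' → a' < s → s < b' → b' ≤ m → A (x a') (x b') → a' = s - 1 := by
    intro a' b' h1 h2 h3 h4 e
    obtain ⟨h5, h6⟩ := hcrosss a' b' h1 h2 h3 h4 e
    by_contra hc
    exact hunique a' h1 (by omega) (by omega) hc
      (hdot _ h1 h2 (h6 _ (by omega) (by omega) (by omega)))
  obtain rfl : a' = s - 1 := hcs a' b' ha1' has' hsb' hbm' hab'
  have hIs : ∀ i, s ≤ i → i ≤ m → A (x i) (x 0) := by
    intro i h1 h2
    by_contra hc
    have : i ≠ m := by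
      rintro rfl
      exact hc h.arc_last
    exact hunique i (by omega) (by omega) (by omega) (by omega)
      ⟨hc, hG s _ hs1 (by omega) (by omega) hsI⟩
  by_cases hsk : s = a + 2
  · have hab'' : A (x (a + 1)) (x b') := by rwa [hsk] at hab'
    have := h.sum_blocks_le
      (L := [(0, 0), (1, a), (a + 2, b' - 1), (m + 1, m + 3), (a + 1, a + 1), (b', m)])
      (.cons hO1 (.cons hab (.cons (h.into (b' - 1) (by omega) (by omega))
        (.cons (h.out (a + 1) (by omega) le_rfl) (.cons hab'' (.single _)))))) h.arc_last
      (by simp; omega) (by simp; omega)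
    simp at this
    omega
  · obtain ⟨a₂, b₂, ha₂, has₂, hsb₂, hbm₂, hab₂⟩ := h.exists_cross_of_into (t := s - 1)
      (by omega) fun i h1 h2 => hmin i h1 (by omega)
    obtain rfl : b₂ = s := by
      by_contra hc
      have := hcs a₂ b₂ ha₂ (by omega) (by omega) hbm₂ hab₂
      omega
    have hka₂ : a + 1 ≤ a₂ := by
      by_contra hc
      have h5 := hcross a₂ b₂ ha₂ (by omega) (by omega) hbm₂ hab₂
      have h6 : a₂ = a := by
        by_contra hc'
        exact hunique a₂ ha₂ (by omega) hc' (by omega)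
          (hdot _ (by omega) (by omega) (h5.2 _ (by omega) (by omega) (by omega)))
      exact hunique (a₂ + 1) (by omega) (by omega) (by omega) (by omega)
          (hdot _ (by omega) (by omega) (h5.2 _ (by omega) (by omega) (by omega)))
    have hO2 : A (x 0) (x (a₂ + 1)) := by
      by_contra hc
      exact hunique a₂ ha₂ (by omega) (by omega) (by omega) (hdot _ ha₂ (by omega) hc)
    have := h.sum_blocks_le (L := [(0, 0), (a₂ + 1, b₂ - 1), (b', m), (m + 1, m + 3), (1, a₂),
        (b₂, b' - 1)])
      (.cons hO2 (.cons hab' (.cons (h.into m (by omega) le_rfl)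
        (.cons (h.out 1 le_rfl (by omega)) (.cons hab₂ (.single _))))))
      (hIs _ (by simp; omega) (by simp; omega))
      (by simp; omega) (by simp; omega)
    simp at this
    omega

/-- The case in which all out-neighbours of `x 0` precede all its in-neighbours. -/
theorem false_of_separated (h : Config A m k x) (hF : Dense A m x)
    (hG : ∀ i j, 1 ≤ i → i < j → j ≤ m → A (x i) (x 0) → ¬ A (x 0) (x j)) : False := by
  have hk2 := h.two_le_k
  have hkm := h.k_lt
  by_cases h1 : ∀ i, 1 ≤ i → i ≤ k → ¬ A (x i) (x 0)
  · exact h.false_of_separated_of_lt hF hG h1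
  by_cases h2 : ∀ j, k ≤ j → j ≤ m → ¬ A (x 0) (x j)
  · refine h.reverse.false_of_separated_of_lt hF.reverse ?_ ?_
    · intro i j hi hij hj e1 e2
      rw [flip_zero, flip_mid m x (by omega) (by omega)] at e1 e2
      exact hG _ _ (by omega) (by omega) (by omega) e2 e1
    · intro i hi1 hi2
      rw [flip_zero, flip_mid m x (by omega) (by omega)]
      exact h2 _ (by omega) (by omega)
  push Not at h1 h2
  obtain ⟨i, hi1, hi2, hi⟩ := h1
  obtain ⟨j, hj1, hj2, hj⟩ := h2
  have hij : ¬ i < j := fun hc => hG i j hi1 hc hj2 hi hj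
  obtain rfl : i = k := by omega
  obtain rfl : j = i := by omega
  have hmin : ∀ i, 1 ≤ i → i < j → ¬ A (x i) (x 0) := fun i h1 h2 e => hG i j h1 h2 hj2 e hj
  obtain ⟨a, b, ha1, hak, hkb, hbm, hab⟩ := h.exists_cross_of_into (t := j) (Or.inr rfl) hmin
  have hO : ∀ c, a < c → c ≤ j → A (x 0) (x c) → a + 4 ≤ c := by
    intro c hc1 hc2 hc
    have := h.cross_out (c := c) (d := b - 1) ha1 hc1 (by omega) (by omega) hbm hab (by omega) hc
    omega
  have := hO j hak le_rfl hj
  refine hF a (a + 1) (a + 2) ha1 (by omega) (by omega) (by omega) ⟨?_, ?_⟩ ⟨?_, ?_⟩ ⟨?_, ?_⟩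
  · exact hmin _ (by omega) (by omega)
  · intro e; have := hO _ (by omega) (by omega) e; omega
  · exact hmin _ (by omega) (by omega)
  · intro e; have := hO _ (by omega) (by omega) e; omega
  · exact hmin _ (by omega) (by omega)
  · intro e; have := hO _ (by omega) (by omega) e; omega

end Config

/-- The numbering of the cycle through `x 0`, `x (e + 4), …, x (m + 3)`, `x 1, …, x e`. -/
def detour {V : Type*} (m e : ℕ) (x : ℕ → V) (i : ℕ) : V :=
  if i = 0 then x 0 else if i ≤ m - e then x (e + 3 + i) else x (i - (m - e))

theorem detour_mid {V : Type*} {m e : ℕ} {x : ℕ → V} {i : ℕ} (h1 : 1 ≤ i) (h2 : i ≤ m - e) :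
    detour m e x i = x (e + 3 + i) := by
  rw [detour, if_neg (by omega), if_pos h2]

theorem detour_large {V : Type*} {m e : ℕ} {x : ℕ → V} {i : ℕ} (h : 1 ≤ i) (h2 : m - e < i) :
    detour m e x i = x (i - (m - e)) := by
  rw [detour, if_neg (by omega), if_neg (by omega)]

/-- A vertex off the cycle `x 0, …, x m` which is none of the three special ones is off
the detour. -/
theorem mem_off_detour {V : Type*} {m e : ℕ} {x : ℕ → V} {u : V} (hem : e ≤ m) (hu : u ∈ offCycle m x)
    (hq : ∀ i, m < i → i ≤ m + 3 → x i ≠ u) : u ∈ offCycle m (detour m e x) := by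
  intro i hi eq
  unfold detour at eq
  split_ifs at eq with h1 h2
  · exact hu 0 (by omega) eq
  · by_cases h3 : e + 3 + i ≤ m
    · exact hu _ h3 eq
    · exact hq _ (by omega) (by omega) eq
  · exact hu _ (by omega) eq

namespace Config

variable {V : Type*} [Fintype V] {A : V → V → Prop} {m k : ℕ} {x : ℕ → V}

theorem longCycle_detour (h : Config A m k x) {e : ℕ} (he : 1 ≤ e) (hem : e + 4 ≤ m)
    (hI : A (x e) (x 0)) (hO : A (x 0) (x (e + 4))) : LongCycle A m (detour m e x) where
  irrefl := h.irrefl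
  deg := h.deg
  leave := h.leave
  two_le := h.two_le
  inj i j hi hj eq := by
    unfold detour at eq
    split_ifs at eq <;>
      first | omega | (have := h.inj_all _ _ (by omega) (by omega) eq; omega)
  arc i hi := by
    rcases Nat.eq_zero_or_pos i with rfl | hp
    · change A (x 0) (detour m e x 1)
      rw [detour_mid le_rfl (by omega)]
      exact hO
    · rcases lt_trichotomy i (m - e) with hlt | heq | hgt
      · rw [detour_mid hp hlt.le, detour_mid (by omega) (by omega),
          show e + 3 + (i + 1) = e + 3 + i + 1 by omega]
        rcases (show e + 3 + i < m ∨ e + 3 + i = m ∨ e + 3 + i = m + 1 ∨ e + 3 + i = m + 2 by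
          omega) with h1 | h1 | h1 | h1
        · exact h.arc _ h1
        · rw [h1]; exact h.into m h.le le_rfl
        · rw [h1]; exact h.arc_one
        · rw [h1]; exact h.arc_two
      · rw [detour_mid hp heq.le, detour_large (by omega) (by omega),
          show e + 3 + i = m + 3 by omega, show i + 1 - (m - e) = 1 by omega]
        exact h.out 1 le_rfl h.one_le
      · rw [detour_large hp hgt, detour_large (by omega) (by omega),
          show i + 1 - (m - e) = i - (m - e) + 1 by omega]
        exact h.arc _ (by omega)
  arc_last := by
    rw [detour_large (by omega) (by omega), show m - (m - e) = e by omega]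
    exact hI
  long := h.long

theorem mem_off_detour (h : Config A m k x) {e i : ℕ} (hem : e + 4 ≤ m) (h1 : e < i)
    (h2 : i < e + 4) : x i ∈ offCycle m (detour m e x) := by
  intro j hj eq
  unfold detour at eq
  split_ifs at eq with h3 h4
  all_goals
    have := h.inj_all _ _ (by omega) (by omega) eq
    omega

theorem false_of_detour (h : Config A m k x) {e : ℕ} (he : 1 ≤ e) (hem : e + 4 ≤ m)
    (hek : e + 2 ≤ k) (hI : A (x e) (x 0)) (hO : A (x 0) (x (e + 4))) (hOm : A (x 0) (x m)) :
    False := by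
  classical
  have hkm := h.k_lt
  have h' := h.longCycle_detour he hem hI hO
  set Y' := offCycle m (detour m e x) with hY'
  have hv' : x (e + 1) ∈ Y' := h.mem_off_detour hem (by omega) (by omega)
  have hqv : A (detour m e x (m - e)) (x (e + 1)) := by
    rw [detour_mid (by omega) le_rfl, show e + 3 + (m - e) = m + 3 by omega]
    exact h.out _ (by omega) (by omega)
  have hback : ∀ u j, ReachIn A Y' (x (e + 1)) u → 1 ≤ j → j ≤ e → ¬ A u (x j) := by
    intro u j hr h1 h2 huj
    refine h'.no_forward_path (a := m - e) (b := m - e + j) (by omega) (by omega) hv' hqv hr ?_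
    rwa [detour_large (by omega) (by omega), show m - e + j - (m - e) = j by omega]
  have hvz : ¬ A (x (e + 1)) (x 0) := fun hc => by
    have := h.add_four_le (by omega) (by omega) hem hc hO
    omega
  have hzv : ¬ A (x 0) (x (e + 1)) := fun hc => by
    have := h.add_four_le he (by omega) (by omega) hI hc
    omega
  have hvY : ∀ w ∈ offCycle m x, ¬ A (x (e + 1)) w := by
    intro w hw hvw
    have hq : ∀ u, ReachIn A (offCycle m x) w u → ∀ i, m < i → i ≤ m + 3 → x i ≠ u := by
      rintro u hr i h1 h2 rfl
      have hr3 : ReachIn A (offCycle m x) (x i) (x (m + 3)) := by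
        rcases (show i = m + 1 ∨ i = m + 2 ∨ i = m + 3 by omega) with rfl | rfl | rfl
        · exact h.reach
        · exact .single ⟨h.mem_off (by omega) (by omega), h.mem_off (by omega) (by omega),
            h.arc_two⟩
        · exact .refl
      exact h.no_forward_path (a := e + 1) (b := k) (by omega) h.le hw hvw (hr.trans hr3)
        (h.out k h.one_le le_rfl)
    set Z : Set V := {u | u ∈ offCycle m x ∧ ReachIn A (offCycle m x) w u ∧
      ReachIn A Y' (x (e + 1)) u} with hZ
    have hxZ : ∀ i ≤ m, x i ∉ Z := fun i hi hc => hc.1 i hi rfl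
    have hmem : ∀ u ∈ offCycle m x, ReachIn A (offCycle m x) w u → u ∈ Y' := fun u hu hr =>
      _root_.mem_off_detour (by omega) hu (hq u hr)
    obtain ⟨a, ha, b, hb, hbv, hab⟩ := h.leave (x (e + 1)) Z (hxZ _ (by omega))
      ⟨w, hw, .refl, .single ⟨hv', hmem w hw .refl, hvw⟩⟩
      ⟨x 0, hxZ 0 (by omega), fun eq => by
        have := h.inj _ _ (by omega) (by omega) eq
        omega⟩
    by_cases hbY : b ∈ offCycle m x
    · have hr := ha.2.1.tail ⟨ha.1, hbY, hab⟩
      exact hb ⟨hbY, hr, ha.2.2.tail ⟨hmem a ha.1 ha.2.1, hmem b hbY hr, hab⟩⟩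
    · obtain ⟨j, hj, rfl⟩ : ∃ j ≤ m, x j = b := by simpa [offCycle] using hbY
      rcases Nat.eq_zero_or_pos j with rfl | hp
      · exact h.not_arc_off_zero ha.1 hab
      · rcases lt_trichotomy j (e + 1) with hlt | rfl | hgt
        · exact hback a j ha.2.2 hp (by omega) hab
        · exact hbv rfl
        · exact h.no_forward_path hgt hj hw hvw ha.2.1 hab
  have hmv : ¬ A (x m) (x (e + 1)) := by
    intro hc
    have := h.sum_blocks_le (L := [(0, 0), (m, m), (e + 1, m - 1), (m + 1, m + 3), (1, e)])
      (.cons hOm (.cons hc (.cons (h.into (m - 1) (by omega) (by omega))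
        (.cons (h.out 1 le_rfl h.one_le) (.single _))))) hI
      (by simp; omega) (by simp; omega)
    simp at this
    omega
  set C : Finset V := (seg x 0 m).toFinset with hC
  have hCm : ∀ v, v ∈ C ↔ ∃ t ≤ m, x t = v := by
    intro v
    rw [hC, List.mem_toFinset, mem_seg]
    simp
  have hCc : C.card = m + 1 := by
    rw [hC, List.toFinset_card_of_nodup (h.nodup_seg le_rfl), length_seg]
    omega
  have hCcc : Cᶜ.card + C.card = Fintype.card V := by
    rw [Finset.card_compl]
    have := Finset.card_le_univ C
    omega
  have hcY : arcs A (x (e + 1)) Cᶜ ≤ Cᶜ.card := by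
    refine arcs_le_card_of_out fun u hu => hvY u fun t ht eq => ?_
    rw [Finset.mem_compl, hCm] at hu
    exact hu ⟨t, ht, eq⟩
  have hc1 : arcs A (x (e + 1)) (seg x 1 e).toFinset ≤ e := by
    refine (arcs_le_card_of_out fun u hu => ?_).trans ((List.toFinset_card_le _).trans ?_)
    · rw [List.mem_toFinset, mem_seg] at hu
      obtain ⟨j, h1, h2, rfl⟩ := hu
      exact hback _ j .refl h1 h2
    · rw [length_seg]
      omega
  have hc2 : arcs A (x (e + 1)) (seg x (e + 2) (e + 3)).toFinset ≤ 4 := by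
    refine arcs_le.trans ?_
    have := List.toFinset_card_le (seg x (e + 2) (e + 3))
    rw [length_seg] at this
    omega
  have hc3 : arcs A (x (e + 1)) (seg x (e + 4) m).toFinset ≤ m - e - 3 := by
    rcases (h.walk_seg (i := e + 4) hem le_rfl).insert_or_arcs_le (h.nodup_seg le_rfl)
      (x (e + 1)) with ⟨l', hl', hp⟩ | hc
    · exfalso
      have hw : Walk A (x 0) (x e) (x 0 :: (l' ++ ([x (m + 1), x (m + 2), x (m + 3)] ++
          seg x 1 e))) :=
        .cons hO (hl'.append (h.into m h.le le_rfl)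
          ((Walk.cons h.arc_one (.cons h.arc_two (.single _))).append (h.out 1 le_rfl h.one_le)
            (h.walk_seg he (by omega))))
      have hn := h.nodup_blocks
        (L := [(0, 0), (e + 1, e + 1), (e + 4, m), (m + 1, m + 3), (1, e)])
        (by simp; omega) (by simp; omega)
      have hperm : (x 0 :: (l' ++ ([x (m + 1), x (m + 2), x (m + 3)] ++ seg x 1 e))).Perm
          (([(0, 0), (e + 1, e + 1), (e + 4, m), (m + 1, m + 3), (1, e)].flatMap
            fun p : ℕ × ℕ => List.range' p.1 (p.2 + 1 - p.1)).map x) := by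
        have e3 : m + 3 + 1 - (m + 1) = 3 := by omega
        simpa [seg, e3, List.range'_succ] using
          (hp.append_right ([x (m + 1), x (m + 2), x (m + 3)] ++ seg x 1 e)).cons (x 0)
      have := h.long _ _ _ hw hI (hperm.nodup_iff.2 hn) (by simp)
      have hpl := hp.length_eq
      simp only [List.length_cons, List.length_append, length_seg, List.length_nil] at this hpl
      omega
    · rw [length_seg, if_neg hmv] at hc
      split_ifs at hc <;> omega
  have hadd : arcs A (x (e + 1)) Finset.univ ≤
      (arcs A (x (e + 1)) (seg x 1 e).toFinset + arcs A (x (e + 1)) (seg x (e + 2) (e + 3)).toFinset)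
      + (arcs A (x (e + 1)) (seg x (e + 4) m).toFinset + arcs A (x (e + 1)) Cᶜ) := by
    refine (arcs_le_add (S := (seg x 1 e).toFinset ∪ (seg x (e + 2) (e + 3)).toFinset)
      (T := (seg x (e + 4) m).toFinset ∪ Cᶜ) ?_).trans
      (Nat.add_le_add (arcs_le_add fun u hu _ => Finset.mem_union.1 hu)
        (arcs_le_add fun u hu _ => Finset.mem_union.1 hu))
    intro u _ hu
    simp only [Finset.mem_union, List.mem_toFinset, mem_seg, Finset.mem_compl, hCm]
    by_cases huC : ∃ t ≤ m, x t = u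
    · obtain ⟨t, ht, rfl⟩ := huC
      have ht0 : t ≠ 0 := by rintro rfl; tauto
      have ht1 : t ≠ e + 1 := by
        rintro rfl
        exact h.irrefl _ (by tauto)
      by_cases h1 : t ≤ e
      · exact Or.inl (Or.inl ⟨t, by omega, h1, rfl⟩)
      · by_cases h2 : t ≤ e + 3
        · exact Or.inl (Or.inr ⟨t, by omega, h2, rfl⟩)
        · exact Or.inr (Or.inl ⟨t, by omega, ht, rfl⟩)
    · exact Or.inr (Or.inr huC)
  have hd := h.deg (x (e + 1)) fun eq => by
    have := h.inj _ _ (by omega) (by omega) eq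
    omega
  rw [degree_eq_arcs] at hd
  omega

/-- The case in which an arc into `x 0` precedes an arc out of `x 0` at distance four, before
`x k`. -/
theorem false_of_gap_of_le (h : Config A m k x) (hF : Dense A m x) {e : ℕ} (he : 1 ≤ e)
    (hem : e + 4 ≤ m) (hek : e + 2 ≤ k) (hI : A (x e) (x 0)) (hO : A (x 0) (x (e + 4))) :
    False := by
  classical
  have hkm := h.k_lt
  have hnI : ∀ i, e < i → i < e + 4 → ¬ A (x i) (x 0) := fun i h1 h2 hc => by
    have := h.add_four_le (by omega) h2 hem hc hO
    omega
  have hnO : ∀ i, e < i → i < e + 4 → ¬ A (x 0) (x i) := fun i h1 h2 hc => by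
    have := h.add_four_le he h1 (by omega) hI hc
    omega
  have hunique : ∀ l, e + 3 ≤ l → l < m → ¬ A (x 0) (x (l + 1)) → A (x l) (x 0) := by
    intro l h1 h2 h3
    by_contra hc
    exact hF (e + 1) (e + 2) l (by omega) (by omega) (by omega) h2
      ⟨hnI _ (by omega) (by omega), hnO _ (by omega) (by omega)⟩
      ⟨hnI _ (by omega) (by omega), hnO _ (by omega) (by omega)⟩ ⟨hc, h3⟩
  have hex : ∃ i, e + 4 ≤ i ∧ i ≤ m ∧ A (x i) (x 0) := ⟨m, by omega, le_rfl, h.arc_last⟩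
  obtain ⟨s, ⟨hs1, hsm, hsI⟩, hmin⟩ : ∃ s, (e + 4 ≤ s ∧ s ≤ m ∧ A (x s) (x 0)) ∧
      ∀ i, e + 4 ≤ i → i < s → ¬ A (x i) (x 0) :=
    ⟨Nat.find hex, Nat.find_spec hex, fun i h1 h2 e =>
      Nat.find_min hex h2 ⟨h1, by have := (Nat.find_spec hex).2.1; omega, e⟩⟩
  have hOs : ∀ j, e + 4 ≤ j → j ≤ s → A (x 0) (x j) := by
    intro j h1 h2
    rcases h1.eq_or_lt with rfl | h1
    · exact hO
    · by_contra hc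
      refine hmin (j - 1) (by omega) (by omega) (hunique (j - 1) (by omega) (by omega) ?_)
      rwa [show j - 1 + 1 = j by omega]
  have hIs : ∀ i, s ≤ i → i ≤ m → A (x i) (x 0) := by
    intro i h1
    induction i, h1 using Nat.le_induction with
    | base => exact fun _ => hsI
    | succ i h1 ih =>
      intro h2
      rcases h2.eq_or_lt with rfl | h2
      · exact h.arc_last
      · refine hunique _ (by omega) h2 fun hc => ?_
        have := h.add_four_le (by omega) (by omega) h2 (ih (by omega)) hc
        omega
  have hnOs : ∀ j, s < j → j ≤ m → ¬ A (x 0) (x j) := by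
    intro j h1 h2 hc
    have := h.add_four_le (i := j - 1) (by omega) (by omega) h2 (hIs _ (by omega) (by omega)) hc
    omega
  have hks : k < s := by
    by_contra hc
    obtain ⟨a, b, ha, hak, hkb, hbm, hab⟩ := h.exists_cross_of_out (t := k) (Or.inr rfl)
      fun j h1 h2 => hnOs j (by omega) h2
    have := h.cross_into (c := a + 1) (d := b - 1) ha (by omega) (by omega) (by omega) hbm hab
      (by omega) (hIs _ (by omega) (by omega))
    omega
  refine h.false_of_detour he hem hek hI hO ?_
  suffices s = m by
    rw [← this]
    exact hOs s hs1 le_rfl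
  by_contra hc
  obtain ⟨a, b, ha, has, hsb, hbm, hab⟩ := h.exists_cross_of_out (t := s) (by omega) hnOs
  by_cases h1 : a ≤ e
  · have := h.cross_into (c := a + 1) (d := b - 1) ha (by omega) (by omega) (by omega) hbm hab
      (by omega) (hIs _ (by omega) (by omega))
    omega
  · have hout : ∀ c, a < c → e + 4 ≤ c → c ≤ s → a + 4 ≤ c := by
      intro c h2 h3 h4
      have := h.cross_out (c := c) (d := b - 1) ha h2 (by omega) (by omega) hbm hab (by omega)
        (hOs c h3 h4)
      omega
    by_cases h2 : a < e + 4
    · have := hout (e + 4) h2 le_rfl hs1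
      omega
    · have := hout (a + 1) (by omega) (by omega) (by omega)
      omega

/-- A configuration in which `x 0` has so many neighbours on the cycle does not exist. -/
theorem not_dense (h : Config A m k x) (hF : Dense A m x) : False := by
  classical
  by_cases hG : ∀ i j, 1 ≤ i → i < j → j ≤ m → A (x i) (x 0) → ¬ A (x 0) (x j)
  · exact h.false_of_separated hF hG
  push Not at hG
  have hex : ∃ d i, 1 ≤ i ∧ i + d + 1 ≤ m ∧ A (x i) (x 0) ∧ A (x 0) (x (i + d + 1)) := by
    obtain ⟨i, j, h1, h2, h3, hi, hj⟩ := hG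
    refine ⟨j - i - 1, i, h1, by omega, hi, ?_⟩
    rwa [show i + (j - i - 1) + 1 = j by omega]
  obtain ⟨e, he, hem, hI, hO⟩ := Nat.find_spec hex
  have hmin : ∀ i j, 1 ≤ i → i < j → j ≤ m → A (x i) (x 0) → A (x 0) (x j) →
      Nat.find hex + 1 + i ≤ j := by
    intro i j h1 h2 h3 hi hj
    by_contra hc
    refine Nat.find_min hex (m := j - i - 1) (by omega) ⟨i, h1, by omega, hi, ?_⟩
    rwa [show i + (j - i - 1) + 1 = j by omega]
  generalize Nat.find hex = d at *
  have h4 := h.add_four_le he (by omega) hem hI hO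
  have hdot : ∀ l, e < l → l < e + d → ¬ A (x l) (x 0) ∧ ¬ A (x 0) (x (l + 1)) := by
    intro l h1 h2
    constructor
    · intro hc
      have := hmin l _ (by omega) (by omega) hem hc hO
      omega
    · intro hc
      have := hmin e _ he (by omega) (by omega) hI hc
      omega
  obtain rfl : d = 3 := by
    by_contra hc
    exact hF (e + 1) (e + 2) (e + 3) (by omega) (by omega) (by omega) (by omega)
      (hdot _ (by omega) (by omega)) (hdot _ (by omega) (by omega)) (hdot _ (by omega) (by omega))
  by_cases hek : e + 2 ≤ k
  · exact h.false_of_gap_of_le hF he hem hek hI hO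
  · refine h.reverse.false_of_gap_of_le hF.reverse (e := m - 3 - e) (by omega) (by omega)
      (by omega) ?_ ?_
    · rw [flip_zero, flip_mid m x (by omega) (by omega),
        show m + 1 - (m - 3 - e) = e + 3 + 1 by omega]
      exact hO
    · rw [flip_zero, flip_mid m x (by omega) (by omega),
        show m + 1 - (m - 3 - e + 4) = e by omega]
      exact hI

end Config

theorem degreeIn_eq_arcs {V : Type*} (A : V → V → Prop) (v : V) (T : Finset V) :
    degreeIn A v T = arcs A v T := by
  classical
  unfold degreeIn arcs
  rw [← Set.ncard_coe_finset, ← Set.ncard_coe_finset, Finset.coe_filter, Finset.coe_filter]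
  rfl

namespace LongCycle

variable {V : Type*} [Fintype V] {A : V → V → Prop} {m : ℕ} {x : ℕ → V}

open Classical in
theorem arcs_seg [DecidableEq V] (h : LongCycle A m x) (v : V) :
    arcs A v (seg x 1 m).toFinset =
      ((Finset.Icc 1 m).filter fun j => A v (x j)).card +
        ((Finset.Icc 1 m).filter fun i => A (x i) v).card := by
  have e : (seg x 1 m).toFinset = (Finset.Icc 1 m).image x := by
    ext u
    simp [mem_seg, and_assoc]
  have hinj : ∀ p : ℕ → Prop, Set.InjOn x ↑((Finset.Icc 1 m).filter p) := by
    intro p a ha b hb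
    simp only [Finset.coe_filter, Finset.mem_Icc, Set.mem_ofPred_eq] at ha hb
    exact h.inj a b ha.1.2 hb.1.2
  rw [e, arcs, Finset.filter_image, Finset.filter_image, Finset.card_image_of_injOn (hinj _),
    Finset.card_image_of_injOn (hinj _)]

theorem arcs_univ_le [DecidableEq V] (m : ℕ) {v : V} (hv : ¬ A v (x 0) ∧ ¬ A (x 0) v) :
    arcs A v Finset.univ ≤
      arcs A v (seg x 1 m).toFinset + arcs A v (seg x 0 m).toFinsetᶜ := by
  refine arcs_le_add fun u _ hu => ?_
  rw [Finset.mem_compl, List.mem_toFinset, List.mem_toFinset, mem_seg, mem_seg]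
  by_cases hc : ∃ t, 0 ≤ t ∧ t ≤ m ∧ x t = u
  · obtain ⟨t, -, ht, rfl⟩ := hc
    refine Or.inl ⟨t, ?_, ht, rfl⟩
    rcases Nat.eq_zero_or_pos t with rfl | hp
    · tauto
    · exact hp
  · exact Or.inr hc

theorem mem_compl_seg [DecidableEq V] {v : V} : v ∈ (seg x 0 m).toFinsetᶜ ↔ v ∈ offCycle m x := by
  rw [Finset.mem_compl, List.mem_toFinset, mem_seg]
  simp [offCycle]

theorem card_compl_seg [DecidableEq V] (h : LongCycle A m x) :
    (seg x 0 m).toFinsetᶜ.card + (m + 1) = Fintype.card V := by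
  have : (seg x 0 m).toFinset.card = m + 1 := by
    rw [List.toFinset_card_of_nodup (h.nodup_seg le_rfl), length_seg]
    omega
  rw [← this, Finset.card_compl]
  have := Finset.card_le_univ (seg x 0 m).toFinset
  omega

/-- A vertex off the cycle with `m + 1` arcs to `x 1, …, x m` is dominated by a final segment
and dominates an initial segment, sharing one vertex. -/
theorem exists_threshold [DecidableEq V] (h : LongCycle A m x) {y : V} (hy : y ∈ offCycle m x)
    (hd : arcs A y (seg x 1 m).toFinset = m + 1) :
    ∃ k, 1 ≤ k ∧ k ≤ m ∧ (∀ i, k ≤ i → i ≤ m → A (x i) y) ∧ ∀ j, 1 ≤ j → j ≤ k → A y (x j) := by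
  classical
  set O := (Finset.Icc 1 m).filter fun j => A y (x j) with hO
  set I := (Finset.Icc 1 m).filter fun i => A (x i) y with hI
  have hOI : O.card + I.card = m + 1 := by
    have := (h.arcs_seg y).symm.trans hd
    convert this
  have hIm : I.card ≤ m := by
    refine (Finset.card_filter_le _ _).trans ?_
    simp
  have hOpos : O.Nonempty := Finset.card_pos.1 (by omega)
  obtain ⟨k, hk, hmax⟩ := O.exists_max_image id hOpos
  simp only [id] at hmax
  have hk' := Finset.mem_filter.1 hk
  rw [Finset.mem_Icc] at hk'
  have hO' : O ⊆ Finset.Icc 1 k := fun j hj => Finset.mem_Icc.2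
    ⟨(Finset.mem_Icc.1 (Finset.mem_filter.1 hj).1).1, hmax j hj⟩
  have hI' : I ⊆ Finset.Icc k m := by
    intro i hi
    have hi' := Finset.mem_filter.1 hi
    rw [Finset.mem_Icc] at hi' ⊢
    refine ⟨?_, hi'.1.2⟩
    by_contra hc
    exact h.no_forward_path (b := k) (by omega) hk'.1.2 hy hi'.2 .refl hk'.2
  have c1 := Finset.card_le_card hO'
  have c2 := Finset.card_le_card hI'
  rw [Nat.card_Icc] at c1 c2
  have e1 := Finset.eq_of_subset_of_card_le hO' (by rw [Nat.card_Icc]; omega)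
  have e2 := Finset.eq_of_subset_of_card_le hI' (by rw [Nat.card_Icc]; omega)
  refine ⟨k, hk'.1.1, hk'.1.2, fun i h1 h2 => ?_, fun j h1 h2 => ?_⟩
  · have : i ∈ I := e2 ▸ Finset.mem_Icc.2 ⟨h1, h2⟩
    exact (Finset.mem_filter.1 this).2
  · have : j ∈ O := e1 ▸ Finset.mem_Icc.2 ⟨h1, h2⟩
    exact (Finset.mem_filter.1 this).2

theorem exists_config_of_path (h : LongCycle A m x) {k : ℕ} {q₁ q₂ q₃ : V}
    (h1 : q₁ ∈ offCycle m x) (h2 : q₂ ∈ offCycle m x) (h3 : q₃ ∈ offCycle m x) (h13 : q₁ ≠ q₃)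
    (e1 : A q₁ q₂) (e2 : A q₂ q₃) (hk : 1 ≤ k) (hkm : k ≤ m)
    (hin : ∀ i, k ≤ i → i ≤ m → A (x i) q₁) (hout : ∀ j, 1 ≤ j → j ≤ k → A q₃ (x j)) :
    ∃ x', x' 0 = x 0 ∧ Config A m k x' := by
  have h12 : q₁ ≠ q₂ := by rintro rfl; exact h.irrefl _ e1
  have h23 : q₂ ≠ q₃ := by rintro rfl; exact h.irrefl _ e2
  set x' : ℕ → V := fun i => if i ≤ m then x i else if i = m + 1 then q₁ else
    if i = m + 2 then q₂ else q₃ with hx'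
  have hle : ∀ i ≤ m, x' i = x i := fun i hi => if_pos hi
  have hx1 : x' (m + 1) = q₁ := by simp [hx']
  have hx2 : x' (m + 2) = q₂ := by simp [hx']
  have hx3 : x' (m + 3) = q₃ := by simp [hx']
  refine ⟨x', hle 0 (by omega), ⟨h.congr fun i hi => (hle i hi).symm, hk, hkm, ?_, ?_, ?_, ?_, ?_⟩⟩
  · have key : ∀ i j, i < j → j ≤ m + 3 → x' i ≠ x' j := by
      intro i j hij hj
      rcases (show j ≤ m ∨ j = m + 1 ∨ j = m + 2 ∨ j = m + 3 by omega) with hj | rfl | rfl | rfl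
      · rw [hle i (by omega), hle j hj]
        intro e
        have := h.inj _ _ (by omega) hj e
        omega
      · rw [hle i (by omega), hx1]
        exact h1 i (by omega)
      · rcases (show i ≤ m ∨ i = m + 1 by omega) with hi | rfl
        · rw [hle i hi, hx2]
          exact h2 i hi
        · rwa [hx1, hx2]
      · rcases (show i ≤ m ∨ i = m + 1 ∨ i = m + 2 by omega) with hi | rfl | rfl
        · rw [hle i hi, hx3]
          exact h3 i hi
        · rwa [hx1, hx3]
        · rwa [hx2, hx3]
    intro i j hi hj e
    rcases lt_trichotomy i j with hlt | heq | hgt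
    · exact (key i j hlt hj e).elim
    · exact heq
    · exact (key j i hgt hi e.symm).elim
  · rwa [hx1, hx2]
  · rwa [hx2, hx3]
  · intro i hi hi'
    rw [hle i hi', hx1]
    exact hin i hi hi'
  · intro j hj hj'
    rw [hle j (by omega), hx3]
    exact hout j hj hj'

theorem exists_config [DecidableEq V] (h : LongCycle A m x) {y₁ y₂ : V}
    (hy₁ : y₁ ∈ offCycle m x) (hy₂ : y₂ ∈ offCycle m x) (hne : y₁ ≠ y₂)
    (hr₁ : ReachIn A (offCycle m x) y₁ y₂) (hr₂ : ReachIn A (offCycle m x) y₂ y₁)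
    (hd₁ : arcs A y₁ (seg x 1 m).toFinset = m + 1)
    (hd₂ : arcs A y₂ (seg x 1 m).toFinset = m + 1) :
    ∃ k x', x' 0 = x 0 ∧ Config A m k x' := by
  classical
  obtain ⟨k, hk1, hkm, hin₁, hout₁⟩ := h.exists_threshold hy₁ hd₁
  obtain ⟨k', hk1', hkm', hin₂, hout₂⟩ := h.exists_threshold hy₂ hd₂
  obtain rfl : k = k' := by
    rcases lt_trichotomy k k' with hlt | heq | hgt
    · exact (h.no_forward_path hlt hkm' hy₁ (hin₁ k le_rfl hkm) hr₁ (hout₂ k' hk1' le_rfl)).elim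
    · exact heq
    · exact (h.no_forward_path hgt hkm hy₂ (hin₂ k' le_rfl hkm') hr₂ (hout₁ k hk1 le_rfl)).elim
  have hdeg : ∀ y ∈ offCycle m x, arcs A y (seg x 1 m).toFinset = m + 1 →
      (seg x 0 m).toFinsetᶜ.card + 1 ≤ arcs A y (seg x 0 m).toFinsetᶜ := by
    intro y hy hd
    have h1 := h.deg y fun e => hy 0 (by omega) e.symm
    have h2 := LongCycle.arcs_univ_le m ⟨h.not_arc_off_zero hy, h.not_arc_zero_off hy⟩
    have h3 := h.card_compl_seg
    rw [degree_eq_arcs] at h1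
    omega
  by_cases hc₁ : ∃ u ∈ (seg x 0 m).toFinsetᶜ, A y₁ u ∧ A u y₂
  · obtain ⟨u, hu, e1, e2⟩ := hc₁
    exact ⟨k, h.exists_config_of_path hy₁ (mem_compl_seg.1 hu) hy₂ hne e1 e2 hk1 hkm hin₁ hout₂⟩
  by_cases hc₂ : ∃ u ∈ (seg x 0 m).toFinsetᶜ, A y₂ u ∧ A u y₁
  · obtain ⟨u, hu, e1, e2⟩ := hc₂
    exact ⟨k, h.exists_config_of_path hy₂ (mem_compl_seg.1 hu) hy₁ hne.symm e1 e2 hk1 hkm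
      hin₂ hout₁⟩
  have := arcs_add_arcs_le (fun u hu e => hc₁ ⟨u, hu, e⟩) (fun u hu e => hc₂ ⟨u, hu, e⟩)
  have := hdeg y₁ hy₁ hd₁
  have := hdeg y₂ hy₂ hd₂
  omega

end LongCycle

theorem Config.degree_zero_le {V : Type*} [Fintype V] {A : V → V → Prop} {m k : ℕ} {x : ℕ → V}
    (h : Config A m k x) : degree A (x 0) ≤ m - 2 := by
  classical
  have h2 := h.two_le_k
  have h3 := h.k_lt
  have hz : degree A (x 0) ≤ ((Finset.Icc 1 m).filter fun j => A (x 0) (x j)).card +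
      ((Finset.Icc 1 m).filter fun i => A (x i) (x 0)).card := by
    have e1 := LongCycle.arcs_univ_le m ⟨h.irrefl (x 0), h.irrefl (x 0)⟩
    have e2 : arcs A (x 0) (seg x 0 m).toFinsetᶜ = 0 := arcs_eq_zero fun u hu =>
      ⟨h.not_arc_zero_off (LongCycle.mem_compl_seg.1 hu),
        h.not_arc_off_zero (LongCycle.mem_compl_seg.1 hu)⟩
    have e3 := h.arcs_seg (x 0)
    rw [degree_eq_arcs]
    convert (e1.trans_eq (by rw [e2, add_zero])).trans_eq e3
  by_contra hc
  refine h.not_dense fun l₁ l₂ l₃ h11 h12 h23 h3m d1 d2 d3 => ?_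
  set T := Finset.Icc 1 (m - 1) \ {l₁, l₂, l₃} with hT
  have hTc : T.card + 3 = m - 1 := by
    have e1 : ({l₁, l₂, l₃} : Finset ℕ).card = 3 := by
      rw [Finset.card_eq_three]
      exact ⟨l₁, l₂, l₃, by omega, by omega, by omega, rfl⟩
    have e2 := Finset.card_sdiff_add_card_eq_card
      (s := {l₁, l₂, l₃}) (t := Finset.Icc 1 (m - 1)) (by
        intro l hl
        simp only [Finset.mem_insert, Finset.mem_singleton] at hl
        rw [Finset.mem_Icc]
        omega)
    rw [e1, Nat.card_Icc, ← hT] at e2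
    omega
  have hsum := card_filter_add_card_filter_le (T := T) (p := fun l => A (x 0) (x (l + 1)))
    (q := fun l => A (x l) (x 0)) (by
      rintro l hl ⟨e1, e2⟩
      rw [hT, Finset.mem_sdiff, Finset.mem_Icc] at hl
      have := h.add_four_le hl.1.1 (by omega) (by omega) e2 e1
      omega)
  have hO : ((Finset.Icc 1 m).filter fun j => A (x 0) (x j)) ⊆
      insert 1 ((T.filter fun l => A (x 0) (x (l + 1))).image (· + 1)) := by
    intro j hj
    rw [Finset.mem_filter, Finset.mem_Icc] at hj
    by_cases hj1 : j = 1
    · simp [hj1]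
    · refine Finset.mem_insert_of_mem (Finset.mem_image.2 ⟨j - 1, ?_, by omega⟩)
      have e : j - 1 + 1 = j := by omega
      rw [Finset.mem_filter, hT, Finset.mem_sdiff, Finset.mem_Icc, e]
      refine ⟨⟨by omega, ?_⟩, hj.2⟩
      simp only [Finset.mem_insert, Finset.mem_singleton]
      rintro (rfl | rfl | rfl)
      · exact d1.2 (by rw [e]; exact hj.2)
      · exact d2.2 (by rw [e]; exact hj.2)
      · exact d3.2 (by rw [e]; exact hj.2)
  have hI : ((Finset.Icc 1 m).filter fun i => A (x i) (x 0)) ⊆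
      insert m (T.filter fun l => A (x l) (x 0)) := by
    intro i hi
    rw [Finset.mem_filter, Finset.mem_Icc] at hi
    by_cases him : i = m
    · simp [him]
    · refine Finset.mem_insert_of_mem ?_
      rw [Finset.mem_filter, hT, Finset.mem_sdiff, Finset.mem_Icc]
      refine ⟨⟨by omega, ?_⟩, hi.2⟩
      simp only [Finset.mem_insert, Finset.mem_singleton]
      rintro (rfl | rfl | rfl)
      · exact d1.1 hi.2
      · exact d2.1 hi.2
      · exact d3.1 hi.2
  have c1 := (Finset.card_le_card hO).trans ((Finset.card_insert_le _ _).trans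
    (Nat.add_le_add_right Finset.card_image_le 1))
  have c2 := (Finset.card_le_card hI).trans (Finset.card_insert_le _ _)
  omega

theorem IsKStrong.exists_arc_leaving {V : Type*} [Fintype V] {A : V → V → Prop}
    (h : IsKStrong A 2) (v : V) (S : Set V) (hv : v ∉ S) (hS : S.Nonempty)
    (hu : ∃ u, u ∉ S ∧ u ≠ v) : ∃ a ∈ S, ∃ b, b ∉ S ∧ b ≠ v ∧ A a b := by
  obtain ⟨s, hs⟩ := hS
  obtain ⟨u, huS, huv⟩ := hu
  have hr : ReachIn A {v}ᶜ s u := h.2 {v} (by simp) s (by rintro rfl; exact hv hs) u huv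
  by_contra! hc
  refine huS ?_
  clear huS huv
  induction hr with
  | refl => exact hs
  | tail _ e ih =>
    by_contra hb
    exact hc _ ih _ hb e.2.1 e.2.2

theorem Walk.isCycle {V : Type*} {A : V → V → Prop} {u v : V} {l : List V} (h : Walk A u v l)
    (hvu : A v u) (hn : l.Nodup) (h2 : 2 ≤ l.length) : IsCycle A fun i : Fin l.length => l[i] := by
  refine ⟨h2, fun i j e => Fin.ext ((hn.getElem_inj_iff).1 e), fun i => ?_⟩
  by_cases hi : i.val + 1 < l.length
  · have := h.getElem_succ i hi
    simpa [Nat.mod_eq_of_lt hi] using this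
  · have hi' : i.val = l.length - 1 := by omega
    have e1 := h.getElem_last
    have e2 := h.getElem_zero
    have e3 : (i.val + 1) % l.length = 0 := by
      rw [hi', Nat.sub_add_cancel (by omega), Nat.mod_self]
    simp only [Fin.getElem_fin, e3, e2]
    simpa only [hi', e1] using hvu
/-- Lemma 4: let `D` be a non-Hamiltonian 2-strong digraph of order `n` such that
`n - 1` vertices have degree at least `n + 1` and the remaining vertex `z` has degree
at most `n - 2`.  Suppose `C = x₁ x₂ … x_m z x₁`, `2 ≤ m ≤ n - 3`, is a longest
directed cycle through `z`, and `Y = V(D) \ V(C)` contains two distinct vertices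
`y₁, y₂` mutually reachable in `D⟨Y⟩` with `d(yᵢ, {x₁, …, x_m}) = m + 1` for each.
Then `n ≥ 7` and `d(z) ≤ m - 2`.  (The path `x₁ … x_m` is indexed here by `Fin m`,
so the paper's `x_t` is `x ⟨t - 1, _⟩`.) -/
theorem statement1 {V : Type*} [Fintype V] [DecidableEq V] (A : V → V → Prop)
    (hirr : Irreflexive A)
    (n : ℕ) (hcard : Fintype.card V = n)
    (h2strong : IsKStrong A 2)
    (hnonham : ¬ IsHamiltonian A)
    (z : V)
    (hdeg : ∀ v : V, v ≠ z → n + 1 ≤ degree A v)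
    (hdegz : degree A z ≤ n - 2)
    (m : ℕ) (hm2 : 2 ≤ m) (hmn : m ≤ n - 3)
    -- the cycle C = x₁ x₂ … x_m z x₁ of length m + 1 through z
    (x : Fin m → V) (hxinj : Function.Injective x) (hzx : z ∉ Set.range x)
    (harc : ∀ (i : Fin m) (h : i.val + 1 < m), A (x i) (x ⟨i.val + 1, h⟩))
    (harcz1 : A (x ⟨m - 1, by omega⟩) z)
    (harcz2 : A z (x ⟨0, by omega⟩))
    -- C is a longest cycle through z
    (hlongest : ∀ (r : ℕ) (c : Fin r → V), IsCycle A c → z ∈ Set.range c → r ≤ m + 1)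
    (Y : Set V) (hY : Y = (Set.range x ∪ {z})ᶜ)
    (y₁ y₂ : V) (hy₁ : y₁ ∈ Y) (hy₂ : y₂ ∈ Y) (hyne : y₁ ≠ y₂)
    -- y₁ and y₂ are mutually reachable in D⟨Y⟩
    (hreach₁ : ReachIn A Y y₁ y₂) (hreach₂ : ReachIn A Y y₂ y₁)
    (hdy₁ : degreeIn A y₁ (Set.range x) = m + 1)
    (hdy₂ : degreeIn A y₂ (Set.range x) = m + 1)
    : 7 ≤ n ∧ degree A z ≤ m - 2 := by
  have hm : m ≤ Fintype.card V - 3 := hcard ▸ hmn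
  set X : ℕ → V := fun i => if hi : 1 ≤ i ∧ i ≤ m then x ⟨i - 1, by omega⟩ else z with hX
  have hX0 : X 0 = z := by simp [hX]
  have hXi : ∀ i (h1 : 1 ≤ i) (h2 : i ≤ m), X i = x ⟨i - 1, by omega⟩ := fun i h1 h2 =>
    dif_pos ⟨h1, h2⟩
  have hXr : ∀ v, v ∈ Set.range x ↔ ∃ t, 1 ≤ t ∧ t ≤ m ∧ X t = v := by
    intro v
    constructor
    · rintro ⟨i, rfl⟩
      exact ⟨i + 1, by omega, by omega, by rw [hXi _ (by omega) (by omega)]; simp⟩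
    · rintro ⟨t, h1, h2, rfl⟩
      rw [hXi t h1 h2]
      exact ⟨_, rfl⟩
  have hlong : LongCycle A m X := by
    refine ⟨hirr, ?_, h2strong.exists_arc_leaving, hm2, ?_, ?_, ?_, ?_⟩
    · rw [hX0, hcard]
      exact hdeg
    · intro i j hi hj e
      rcases Nat.eq_zero_or_pos i with rfl | hi0 <;> rcases Nat.eq_zero_or_pos j with rfl | hj0
      · rfl
      · rw [hX0] at e
        exact (hzx ((hXr z).2 ⟨j, hj0, hj, e.symm⟩)).elim
      · rw [hX0] at e
        exact (hzx ((hXr z).2 ⟨i, hi0, hi, e⟩)).elim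
      · rw [hXi i hi0 hi, hXi j hj0 hj] at e
        have := congrArg Fin.val (hxinj e)
        simp only at this
        omega
    · intro i hi
      rcases Nat.eq_zero_or_pos i with rfl | hi0
      · rw [hX0, hXi 1 le_rfl (by omega)]
        exact harcz2
      · rw [hXi i hi0 hi.le, hXi (i + 1) (by omega) hi]
        have := harc ⟨i - 1, by omega⟩ (by simp only; omega)
        simpa [Nat.sub_add_cancel hi0] using this
    · rw [hX0, hXi m (by omega) le_rfl]
      exact harcz1
    · intro l u v hl e hn h0
      by_cases h2 : 2 ≤ l.length
      · refine hlongest _ _ (hl.isCycle e hn h2) ?_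
        rw [hX0] at h0
        obtain ⟨i, hi, e⟩ := List.getElem_of_mem h0
        exact ⟨⟨i, hi⟩, e⟩
      · omega
  have hYX : Y = offCycle m X := by
    rw [hY]
    ext v
    simp only [Set.mem_compl_iff, Set.mem_union, Set.mem_singleton_iff, hXr, offCycle,
      Set.mem_ofPred_eq]
    constructor
    · intro hv i hi e
      rcases Nat.eq_zero_or_pos i with rfl | hi0
      · exact hv (Or.inr (e.symm.trans hX0))
      · exact hv (Or.inl ⟨i, hi0, hi, e⟩)
    · rintro hv (⟨i, -, hi, e⟩ | rfl)
      · exact hv i hi e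
      · exact hv 0 (by omega) hX0
  have hrange : Set.range x = ↑(seg X 1 m).toFinset := by
    ext v
    rw [hXr, List.coe_toFinset, Set.mem_ofPred_eq, mem_seg]
  rw [hrange, degreeIn_eq_arcs] at hdy₁ hdy₂
  subst hYX
  obtain ⟨k, x', hx', hcfg⟩ := hlong.exists_config hy₁ hy₂ hyne hreach₁ hreach₂ hdy₁ hdy₂
  have hle := hcfg.degree_zero_le
  rw [hx', hX0] at hle
  have hpos : 2 ≤ degree A z := by
    have h1 : 0 < {y | A z y}.ncard := (Set.ncard_pos).2 ⟨_, harcz2⟩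
    have h2 : 0 < {y | A y z}.ncard := (Set.ncard_pos).2 ⟨_, harcz1⟩
    unfold degree
    omega
  exact ⟨by omega, hle⟩
end
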